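/- Let m, n ≥ 2. Let v₁, ..., v_{n+1} ∈ ℝⁿ be in general position (every n of them linearly independent). Let F : ℝⁿ → ℝᵐ be an injective mapping that maps each line in ℒ(v₁, ..., v_{n+1}) onto a line. Then there exists a basis u₁, ..., uₙ of ℝⁿ such that for every x = Σᵢ αᵢuᵢ, F(x) = Σ_{δ ∈ {0,1}ⁿ} u_δ ∏ᵢ fᵢ(αᵢ)^{δᵢ}, where f₁, ..., fₙ : ℝ → ℝ are additive bijections with fᵢ(1) = 1 for each i, and the coefficients u_δ ∈ ℝᵐ satisfy: (i) u_δ = 0 for all δ with |δ| ≥ (n+2)/2, and (ii) for each integer k with 2 ≤ k < (n+2)/2 and every choice of 0 ≤ l ≤ k−2 indices 1 ≤ i₁ < ⋯ < i_l ≤ n, the sum of u_δ over all δ with |δ| = k and δ_{i₁} = ⋯ = δ_{i_l} = 1 equals 0. Moreover m ≥ n, and if m = n then F is a bijection. -/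

import Mathlib

/-- The line through `a` in direction `b`. -/
def lineThru {k : ℕ} (a b : Fin k → ℝ) : Set (Fin k → ℝ) :=
  {x | ∃ t : ℝ, x = a + t • b}

/-- A subset of `ℝᵏ` is a line if it is of the form `a + ℝ b` with `b ≠ 0`. -/
def IsLine {k : ℕ} (s : Set (Fin k → ℝ)) : Prop :=
  ∃ a b : Fin k → ℝ, b ≠ 0 ∧ s = lineThru a b

/-- The weight `|δ|` of `δ ∈ {0,1}ⁿ`, i.e. the number of `1` entries. -/
def wt {n : ℕ} (δ : Fin n → Bool) : ℕ :=
  ∑ i, if δ i then 1 else 0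

section PartA
open Polynomial

lemma prod_neg_iff_odd {ι : Type*} [DecidableEq ι] (s : Finset ι) (f : ι → ℝ) (h : ∀ i ∈ s, f i ≠ 0) :
    ∏ i ∈ s, f i < 0 ↔ Odd (s.filter (fun i => f i < 0)).card := by
  induction s using Finset.induction_on with
  | empty => simp
  | insert a s ha ih =>
    have h1 : ∏ i ∈ s, f i ≠ 0 := Finset.prod_ne_zero_iff.2 (fun i hi => h i (by simp [hi]))
    have ih' := ih (fun i hi => h i (by simp [hi]))
    have h2 := h a (by simp)
    rw [Finset.prod_insert ha, Finset.filter_insert]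
    by_cases hs : f a < 0
    · rw [if_pos hs, Finset.card_insert_of_notMem (by simp [ha]), Nat.odd_add_one, ← ih']
      constructor
      · intro h3 h4
        nlinarith [mul_pos_of_neg_of_neg hs h4]
      · intro h3
        exact mul_neg_of_neg_of_pos hs (lt_of_le_of_ne (not_lt.1 h3) h1.symm)
    · have : 0 < f a := lt_of_le_of_ne (not_lt.1 hs) h2.symm
      rw [if_neg hs, ← ih']
      constructor
      · intro h3; by_contra h4
        nlinarith [mul_nonneg this.le (not_lt.1 h4)]
      · intro h3; exact mul_neg_of_pos_of_neg this h3

section pi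
variable {ι : Type*} [Fintype ι] [DecidableEq ι] {K : ι → Type*} [∀ i, Field (K i)]
  [∀ i, Algebra ℝ (K i)] [∀ i, FiniteDimensional ℝ (K i)]

lemma norm_mulSingle_real (i : ι) (e : K i ≃ₐ[ℝ] ℝ) (y : K i) :
    Algebra.norm ℝ (Pi.mulSingle i y : ∀ i, K i) = e y := by
  rw [Algebra.norm_apply]
  have : Algebra.lmul ℝ (∀ i, K i) (Pi.mulSingle i y) =
      LinearMap.transvection (e.toLinearMap.comp (LinearMap.proj i)) (Pi.single i (y - 1)) := by
    refine LinearMap.ext fun x => funext fun j => ?_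
    by_cases hj : j = i
    · subst hj
      have h1 : (algebraMap ℝ (K j)) (e (x j)) = x j := by
        apply e.injective; simp
      simp [LinearMap.transvection.apply, Algebra.smul_def, h1]
      ring
    · simp [LinearMap.transvection.apply, hj]
  rw [this, LinearMap.transvection.det]
  simp

lemma norm_mulSingle_complex (i : ι) (e : K i ≃ₐ[ℝ] ℂ) (y : K i) :
    0 ≤ Algebra.norm ℝ (Pi.mulSingle i y : ∀ i, K i) := by
  obtain ⟨z, hz⟩ := IsAlgClosed.exists_pow_nat_eq (e y) (n := 2) (by norm_num)
  have : y = e.symm z ^ 2 := by rw [← map_pow, hz]; simp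
  have h2 : (Pi.mulSingle i y : ∀ i, K i) = (Pi.mulSingle i (e.symm z)) ^ 2 := by
    rw [this, sq, sq, Pi.mulSingle_mul]
  rw [h2, map_pow]
  positivity

lemma norm_pi_prod (x : ∀ i, K i) : Algebra.norm ℝ x = ∏ i, Algebra.norm ℝ (Pi.mulSingle i (x i) : ∀ i, K i) := by
  conv_lhs => rw [← Finset.univ_prod_mulSingle x]
  rw [map_prod]

lemma norm_pi_neg_iff (x : ∀ i, K i) (hx : Algebra.norm ℝ x ≠ 0) :
    Algebra.norm ℝ x < 0 ↔ Odd {i | ∃ e : K i ≃ₐ[ℝ] ℝ, e (x i) < 0}.ncard := by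
  classical
  rw [norm_pi_prod] at hx ⊢
  rw [prod_neg_iff_odd _ _ (Finset.prod_ne_zero_iff.1 hx)]
  have : {i | ∃ e : K i ≃ₐ[ℝ] ℝ, e (x i) < 0} = 
    ↑(Finset.univ.filter (fun i => Algebra.norm ℝ (Pi.mulSingle i (x i) : ∀ i, K i) < 0)) := by
    ext i
    simp only [Set.mem_setOf_eq, Finset.coe_filter, Finset.mem_univ, true_and]
    constructor
    · rintro ⟨e, he⟩
      rwa [norm_mulSingle_real i e]
    · intro h
      rcases Real.nonempty_algEquiv_or (K i) with ⟨⟨e⟩⟩ | ⟨⟨e⟩⟩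
      · rw [norm_mulSingle_real i e] at h
        exact ⟨e, h⟩
      · exact absurd h (not_lt.2 (norm_mulSingle_complex i e _))
  rw [this, Set.ncard_coe_finset]

lemma finrank_pi_odd_iff : Odd (Module.finrank ℝ (∀ i, K i)) ↔ Odd {i | Nonempty (K i ≃ₐ[ℝ] ℝ)}.ncard := by
  classical
  rw [Module.finrank_pi_fintype, Finset.odd_sum_iff_odd_card_odd]
  have : {i | Nonempty (K i ≃ₐ[ℝ] ℝ)} = ↑(Finset.univ.filter (fun i => Odd (Module.finrank ℝ (K i)))) := by
    ext i
    simp only [Set.mem_setOf_eq, Finset.coe_filter, Finset.mem_univ, true_and]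
    constructor
    · rintro ⟨e⟩
      rw [e.toLinearEquiv.finrank_eq]; simp
    · intro h
      rcases Real.nonempty_algEquiv_or (K i) with ⟨⟨e⟩⟩ | ⟨⟨e⟩⟩
      · exact ⟨e⟩
      · rw [e.toLinearEquiv.finrank_eq, Complex.finrank_real_complex] at h
        exact absurd h (by decide)
  rw [this, Set.ncard_coe_finset]
end pi

section fib
variable (A : Type*) [CommRing A] [Algebra ℝ A] [FiniteDimensional ℝ A]

lemma algHom_real_quot (χ : A →ₐ[ℝ] ℝ) : Function.Surjective χ := fun r => ⟨algebraMap ℝ A r, by simp⟩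

lemma quot_algEquiv_unique {I : Ideal A} (e e' : (A ⧸ I) ≃ₐ[ℝ] ℝ) : e = e' := by
  ext x
  have : x = algebraMap ℝ _ (e x) := by apply e.injective; simp
  rw [this]; simp

/-- counting homs through maximal ideals -/
lemma ncard_hom_eq (p : ℝ → Prop) (a : A) :
    {χ : A →ₐ[ℝ] ℝ | p (χ a)}.ncard =
    {I : MaximalSpectrum A | ∃ e : (A ⧸ I.asIdeal) ≃ₐ[ℝ] ℝ, p (e (Ideal.Quotient.mk _ a))}.ncard := by
  have hk : ∀ χ : A →ₐ[ℝ] ℝ, (RingHom.ker χ).IsMaximal := fun χ =>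
    RingHom.ker_isMaximal_of_surjective (χ : A →+* ℝ) (algHom_real_quot A χ)
  refine Set.ncard_congr (fun χ _ => ⟨RingHom.ker χ, hk χ⟩) ?_ ?_ ?_
  · intro χ hχ
    refine ⟨Ideal.quotientKerAlgEquivOfSurjective (algHom_real_quot A χ), ?_⟩
    exact hχ
  · intro χ χ' _ _ h
    have h' : RingHom.ker χ = RingHom.ker χ' := congrArg MaximalSpectrum.asIdeal h
    ext x
    have : x - algebraMap ℝ A (χ x) ∈ RingHom.ker χ := by simp [RingHom.mem_ker]
    rw [h', RingHom.mem_ker] at this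
    simp at this
    linarith
  · rintro I ⟨e, he⟩
    refine ⟨(e : (A ⧸ I.asIdeal) →ₐ[ℝ] ℝ).comp (Ideal.Quotient.mkₐ ℝ _), he, ?_⟩
    ext x
    simp [RingHom.mem_ker, Ideal.Quotient.eq_zero_iff_mem]

variable [IsReduced A]

lemma fiber_sign (a : A) (ha : Algebra.norm ℝ a ≠ 0) :
    Algebra.norm ℝ a < 0 ↔ Odd {χ : A →ₐ[ℝ] ℝ | χ a < 0}.ncard := by
  classical
  have : IsArtinianRing A := IsArtinianRing.of_finite ℝ A
  have := Fintype.ofFinite (MaximalSpectrum A)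
  let : ∀ I : MaximalSpectrum A, Field (A ⧸ I.asIdeal) := fun I => Ideal.Quotient.field _
  let e := (IsArtinianRing.equivPi A).restrictScalars ℝ
  rw [ncard_hom_eq A (fun r => r < 0) a]
  have h := Algebra.norm_eq_of_algEquiv e a
  rw [← h] at ha ⊢
  exact norm_pi_neg_iff (e a) ha

lemma fiber_card : Odd (Module.finrank ℝ A) ↔ Odd (Set.univ : Set (A →ₐ[ℝ] ℝ)).ncard := by
  classical
  have : IsArtinianRing A := IsArtinianRing.of_finite ℝ A
  have := Fintype.ofFinite (MaximalSpectrum A)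
  let : ∀ I : MaximalSpectrum A, Field (A ⧸ I.asIdeal) := fun I => Ideal.Quotient.field _
  let e := (IsArtinianRing.equivPi A).restrictScalars ℝ
  have h := ncard_hom_eq A (fun r => True) 0
  simp only [Set.setOf_true, exists_const_iff, and_true] at h
  rw [h, e.toLinearEquiv.finrank_eq, finrank_pi_odd_iff]

lemma eval_charpoly_lmul (φ : A) (α : ℝ) : (Algebra.lmul ℝ A φ).charpoly.eval α =
    Algebra.norm ℝ (algebraMap ℝ A α - φ) := by
  rw [LinearMap.charpoly_def, Matrix.eval_charpoly, Algebra.norm_apply, ← LinearMap.det_toMatrix (Module.Free.chooseBasis ℝ A)]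
  congr 1
  rw [map_sub, map_sub]
  congr 1
  ext i j
  simp [LinearMap.toMatrix_apply, Matrix.scalar_apply, Matrix.diagonal_apply, Finsupp.single_apply, eq_comm]

lemma fiber_interval (φ : A) (α β : ℝ) (hαβ : α < β)
    (hα : (Algebra.lmul ℝ A φ).charpoly.eval α ≠ 0) (hβ : (Algebra.lmul ℝ A φ).charpoly.eval β ≠ 0) :
    Odd {χ : A →ₐ[ℝ] ℝ | α < χ φ ∧ χ φ < β}.ncard ↔
     (Algebra.lmul ℝ A φ).charpoly.eval α * (Algebra.lmul ℝ A φ).charpoly.eval β < 0 := by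
  rw [eval_charpoly_lmul] at *
  rw [eval_charpoly_lmul] at *
  have := fiber_sign A ((algebraMap ℝ A α - φ) * (algebraMap ℝ A β - φ)) (by rw [map_mul]; exact mul_ne_zero hα hβ)
  rw [map_mul] at this
  rw [this]
  congr! 4 with χ
  simp
  constructor
  · rintro ⟨h1, h2⟩; nlinarith
  · intro h
    constructor
    · by_contra h1
      nlinarith
    · by_contra h1
      nlinarith
end fib
end PartA

section PartB
open Polynomial TensorProduct

/-- real points over a real point `ev` of the base. -/
def Fib {S : Type*} (T : Type*) [CommRing S] [CommRing T] [Algebra S T] (ev : S →+* ℝ) : Set (T →+* ℝ) :=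
  {χ | χ.comp (algebraMap S T) = ev}

def MMc (S T : Type*) [CommRing S] [CommRing T] [Algebra S T] (g : S) (M : ℕ) : Prop :=
  (∀ ev : S →+* ℝ, ev g ≠ 0 → (Fib T ev).Finite ∧ (Odd (Fib T ev).ncard ↔ Odd M)) ∧
  ∀ φ : T, ∃ E : S[X], ∀ ev : S →+* ℝ, ev g ≠ 0 → E.map ev ≠ 0 ∧
    ∀ α β : ℝ, α < β → (E.map ev).eval α ≠ 0 → (E.map ev).eval β ≠ 0 →
      (Odd {χ | χ ∈ Fib T ev ∧ α < χ φ ∧ χ φ < β}.ncard ↔ (E.map ev).eval α * (E.map ev).eval β < 0)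

def SepData {S T : Type*} [CommRing S] [CommRing T] [Algebra S T] (p : S → Prop) (x : T) : Prop :=
  ∃ r u v : S[X], ∃ a : S, p a ∧ u * r + v * derivative r = C a ∧ aeval x r = 0

lemma reduced_of_sep {A ι : Type*} [CommRing A] [Algebra ℝ A] [FiniteDimensional ℝ A] (x : ι → A)
    (hx : Algebra.adjoin ℝ (Set.range x) = ⊤) (hs : ∀ k, SepData (S := ℝ) (fun a => IsUnit a) (x k)) :
    IsReduced A := by
  have hD : ∀ k, KaehlerDifferential.D ℝ A (x k) = 0 := by
    intro k
    obtain ⟨r, u, v, a, ha, h, hr⟩ := hs k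
    have h1 : KaehlerDifferential.D ℝ A (aeval (x k) r) = 0 := by rw [hr, map_zero]
    rw [Derivation.map_aeval] at h1
    have h2 := congrArg (aeval (x k)) h
    rw [map_add, map_mul, hr, mul_zero, zero_add, map_mul, aeval_C] at h2
    have h3 : (algebraMap ℝ A a) • KaehlerDifferential.D ℝ A (x k) = 0 := by
      rw [← h2, mul_smul, h1, smul_zero]
    have : IsUnit (algebraMap ℝ A a) := ha.map _
    exact (this.smul_eq_zero).1 h3
  have hD0 : KaehlerDifferential.D ℝ A = 0 := by
    ext y
    have : y ∈ Algebra.adjoin ℝ (Set.range x) := by rw [hx]; trivial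
    refine Derivation.eqOn_adjoin (D1 := KaehlerDifferential.D ℝ A) (D2 := 0) (s := Set.range x) ?_ this
    rintro _ ⟨k, rfl⟩
    simpa using hD k
  have hsub : Subsingleton (Ω[A⁄ℝ]) := by
    rw [← Submodule.subsingleton_iff A]
    apply subsingleton_of_bot_eq_top
    rw [← KaehlerDifferential.span_range_derivation, hD0, eq_comm, Submodule.span_eq_bot]
    rintro _ ⟨y, rfl⟩
    simp
  have : Algebra.FormallyUnramified ℝ A := ⟨hsub⟩
  exact Algebra.FormallyUnramified.isReduced_of_field ℝ A

lemma SepData.map {S T R T' : Type*} [CommRing S] [CommRing T] [Algebra S T] [CommRing R] [CommRing T'] [Algebra R T']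
    {p : S → Prop} {q : R → Prop} {x : T} (h : SepData p x) (f : S →+* R) (F : T →+* T')
    (hF : F.comp (algebraMap S T) = (algebraMap R T').comp f) (hpq : ∀ a, p a → q (f a)) :
    SepData q (F x) := by
  obtain ⟨r, u, v, a, ha, h, hr⟩ := h
  refine ⟨r.map f, u.map f, v.map f, f a, hpq a ha, ?_, ?_⟩
  · rw [derivative_map, ← Polynomial.map_mul, ← Polynomial.map_mul, ← Polynomial.map_add, h, map_C]
  · rw [aeval_def, eval₂_map, ← hF, ← hom_eval₂, ← aeval_def, hr, map_zero]

lemma adjoin_baseChange {S T R ι : Type*} [CommRing S] [CommRing T] [Algebra S T] [CommRing R] [Algebra S R]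
    (x : ι → T) (hx : Algebra.adjoin S (Set.range x) = ⊤) :
    Algebra.adjoin R (Set.range (fun k => (1 : R) ⊗ₜ[S] x k)) = ⊤ := by
  have := Algebra.TensorProduct.adjoin_one_tmul_image_eq_top (A := R) (Set.range x) hx
  rw [← this, ← Set.range_comp]
  rfl

/-- change of base for real points. -/
lemma fib_baseChange {S T R : Type*} [CommRing S] [CommRing T] [Algebra S T] [CommRing R] [Algebra S R]
    (ev : R →+* ℝ) : Set.BijOn (fun ψ : (R ⊗[S] T) →+* ℝ =>
        ψ.comp (Algebra.TensorProduct.includeRight (R := S) (A := R) (B := T)).toRingHom)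
      (Fib (R ⊗[S] T) ev) (Fib T (ev.comp (algebraMap S R))) := by
  refine ⟨?_, ?_, ?_⟩
  · intro ψ hψ
    ext s
    have h := congrArg (fun f => f (algebraMap S R s)) hψ
    simp only [RingHom.comp_apply] at h ⊢
    rw [← h]
    congr 1
    change (1 : R) ⊗ₜ[S] (algebraMap S T s) = (algebraMap S R s) ⊗ₜ[S] (1 : T)
    rw [Algebra.algebraMap_eq_smul_one, Algebra.algebraMap_eq_smul_one, TensorProduct.smul_tmul]
  · intro ψ hψ ψ' hψ' h
    refine RingHom.ext fun t => ?_
    induction t using TensorProduct.induction_on with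
    | zero => simp
    | add a b ha hb => simp [ha, hb]
    | tmul r t =>
      have e : r ⊗ₜ[S] t = algebraMap R (R ⊗[S] T) r * (1 ⊗ₜ[S] t) := by
        simp
      rw [e, map_mul, map_mul]
      have h1 := congrArg (fun f => f r) hψ
      have h2 := congrArg (fun f => f r) hψ'
      have h3 := congrArg (fun f => f t) h
      simp only [RingHom.comp_apply] at h1 h2
      rw [h1, h2]
      congr 1
  · intro χ hχ
    letI := ev.toAlgebra
    letI : Algebra S ℝ := (ev.comp (algebraMap S R)).toAlgebra
    haveI : IsScalarTower S R ℝ := IsScalarTower.of_algebraMap_eq (fun s => rfl)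
    let χ' : T →ₐ[S] ℝ := { χ with commutes' := fun s => congrArg (fun f => f s) hχ }
    let ψ : (R ⊗[S] T) →ₐ[R] ℝ := Algebra.TensorProduct.lift (Algebra.ofId R ℝ) χ' (fun _ _ => Commute.all _ _)
    refine ⟨ψ.toRingHom, ?_, ?_⟩
    · ext r
      exact ψ.commutes r
    · ext t
      change ψ (1 ⊗ₜ t) = _
      simp [ψ, Algebra.TensorProduct.lift_tmul]
      rfl

lemma fib_real {A : Type*} [CommRing A] [Algebra ℝ A] : Set.BijOn (fun ψ : A →ₐ[ℝ] ℝ => ψ.toRingHom) Set.univ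
    (Fib A (RingHom.id ℝ)) := by
  refine ⟨?_, ?_, ?_⟩
  · intro ψ _
    ext r
    exact ψ.commutes r
  · intro ψ _ ψ' _ h
    ext a
    exact congrArg (fun f : A →+* ℝ => f a) h
  · intro χ hχ
    exact ⟨{ χ with commutes' := fun s => congrArg (fun f => f s) hχ }, trivial, rfl⟩

lemma ncard_bij {α β : Type*} {f : α → β} {s : Set α} {t : Set β} (h : Set.BijOn f s t) (p : α → Prop) (q : β → Prop)
    (hpq : ∀ a ∈ s, (p a ↔ q (f a))) : {a | a ∈ s ∧ p a}.ncard = {b | b ∈ t ∧ q b}.ncard := by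
  refine Set.ncard_congr (fun a _ => f a) ?_ ?_ ?_
  · rintro a ⟨ha, hp⟩
    exact ⟨h.mapsTo ha, (hpq a ha).1 hp⟩
  · rintro a b ⟨ha, _⟩ ⟨hb, _⟩ e
    exact h.injOn ha hb e
  · rintro b ⟨hb, hq⟩
    obtain ⟨a, ha, rfl⟩ := h.surjOn hb
    exact ⟨a, ⟨ha, (hpq a ha).2 hq⟩, rfl⟩

lemma finite_algHom {A : Type*} [CommRing A] [Algebra ℝ A] [FiniteDimensional ℝ A] : 
    (Set.univ : Set (A →ₐ[ℝ] ℝ)).Finite := by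
  have : Finite (A →ₐ[ℝ] ℝ) := inferInstance
  exact Set.finite_univ

lemma MM_free {R T ι : Type*} [CommRing R] [Nontrivial R] [CommRing T] [Algebra R T] [Module.Free R T] [Module.Finite R T]
    (x : ι → T) (hx : Algebra.adjoin R (Set.range x) = ⊤)
    (hs : ∀ k, SepData (S := R) (fun a => IsUnit a) (x k)) : MMc R T 1 (Module.finrank R T) := by
  have key : ∀ ev : R →+* ℝ, letI := ev.toAlgebra; IsReduced (ℝ ⊗[R] T) := by
    intro ev
    letI := ev.toAlgebra
    refine reduced_of_sep (fun k => (1 : ℝ) ⊗ₜ[R] x k) (adjoin_baseChange x hx) ?_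
    intro k
    exact (hs k).map ev (Algebra.TensorProduct.includeRight (R := R) (A := ℝ) (B := T)).toRingHom (by
      ext s
      exact (Algebra.TensorProduct.includeRight (R := R) (A := ℝ) (B := T)).commutes s) (fun a ha => ha.map ev)
  refine ⟨?_, ?_⟩
  · intro ev _
    letI := ev.toAlgebra
    have := key ev
    have hb1 := fib_baseChange (S := R) (T := T) (R := ℝ) (RingHom.id ℝ)
    have hb2 := fib_real (A := ℝ ⊗[R] T)
    have hb := hb1.comp hb2
    have hev : (RingHom.id ℝ).comp (algebraMap R ℝ) = ev := rfl
    rw [hev] at hb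
    constructor
    · rw [← hb.image_eq]
      exact (finite_algHom).image _
    · have := ncard_bij hb (fun _ => True) (fun _ => True) (fun _ _ => Iff.rfl)
      simp only [and_true, Set.ofPred_mem_eq] at this
      rw [← this, ← Module.finrank_baseChange (R := ℝ), fiber_card]
  · intro φ
    refine ⟨(Algebra.lmul R T φ).charpoly, ?_⟩
    intro ev _
    letI := ev.toAlgebra
    have := key ev
    have hc : (Algebra.lmul R T φ).charpoly.map ev = (Algebra.lmul ℝ (ℝ ⊗[R] T) (1 ⊗ₜ φ)).charpoly := by
      rw [← Algebra.baseChange_lmul, LinearMap.charpoly_baseChange]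
      rfl
    have hb1 := fib_baseChange (S := R) (T := T) (R := ℝ) (RingHom.id ℝ)
    have hb2 := fib_real (A := ℝ ⊗[R] T)
    have hb := hb1.comp hb2
    have hev : (RingHom.id ℝ).comp (algebraMap R ℝ) = ev := rfl
    rw [hev] at hb
    refine ⟨?_, ?_⟩
    · exact ((LinearMap.charpoly_monic _).map ev).ne_zero
    · intro α β hαβ h1 h2
      rw [hc] at h1 h2 ⊢
      rw [← fiber_interval _ _ α β hαβ h1 h2]
      have := ncard_bij hb (fun ψ => α < ψ (1 ⊗ₜ φ) ∧ ψ (1 ⊗ₜ φ) < β) (fun χ => α < χ φ ∧ χ φ < β) (fun _ _ => Iff.rfl)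
      rw [← this]
      simp

lemma MM_transfer {S T R : Type*} [CommRing S] [IsDomain S] [CommRing T] [Algebra S T] [CommRing R] [Algebra S R]
    (h : S) (hh : h ≠ 0) [IsLocalization.Away h R] (g' : R) (hg' : g' ≠ 0) (M : ℕ)
    (H : MMc R (R ⊗[S] T) g' M) : ∃ g : S, g ≠ 0 ∧ MMc S T g M := by
  obtain ⟨k, s, hs⟩ := IsLocalization.Away.surj h g'
  have hs0 : s ≠ 0 := by
    rintro rfl
    rw [map_zero] at hs
    have : IsUnit (algebraMap S R h ^ k) := (IsLocalization.Away.algebraMap_isUnit h).pow k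
    exact hg' (by simpa [this.mul_left_eq_zero] using hs)
  have lift : ∀ ev : S →+* ℝ, ev (s * h) ≠ 0 → ∃ evR : R →+* ℝ, evR.comp (algebraMap S R) = ev ∧ evR g' ≠ 0 := by
    intro ev hev
    rw [map_mul] at hev
    have hu : IsUnit (ev h) := (right_ne_zero_of_mul hev).isUnit
    refine ⟨IsLocalization.Away.lift h hu, IsLocalization.Away.lift_comp h hu, ?_⟩
    intro h0
    have := congrArg (IsLocalization.Away.lift h hu) hs
    rw [map_mul, h0, zero_mul, IsLocalization.Away.lift_eq] at this
    exact left_ne_zero_of_mul hev this.symm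
  refine ⟨s * h, mul_ne_zero hs0 hh, ?_, ?_⟩
  · intro ev hev
    obtain ⟨evR, rfl, h2⟩ := lift ev hev
    have hb := fib_baseChange (S := S) (T := T) (R := R) evR
    obtain ⟨h3, h4⟩ := H.1 evR h2
    refine ⟨?_, ?_⟩
    · rw [← hb.image_eq]; exact h3.image _
    · have := ncard_bij hb (fun _ => True) (fun _ => True) (fun _ _ => Iff.rfl)
      simp only [and_true, Set.ofPred_mem_eq] at this
      rw [← this, h4]
  · intro φ
    obtain ⟨E', hE'⟩ := H.2 (1 ⊗ₜ φ)
    obtain ⟨b, hb⟩ := IsLocalization.integerNormalization_map_to_map (Submonoid.powers h) E'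
    refine ⟨IsLocalization.integerNormalization (Submonoid.powers h) E', ?_⟩
    intro ev hev
    obtain ⟨evR, rfl, h2⟩ := lift ev hev
    obtain ⟨h3, h4⟩ := hE' evR h2
    have hbu : evR (algebraMap S R b) ≠ 0 := by
      obtain ⟨_, ⟨j, rfl⟩⟩ := b
      simp only [map_mul, RingHom.comp_apply] at hev
      simp only [map_pow]
      exact pow_ne_zero _ (right_ne_zero_of_mul hev)
    have e1 : (IsLocalization.integerNormalization (Submonoid.powers h) E').map (evR.comp (algebraMap S R))
        = C (evR (algebraMap S R b)) * E'.map evR := by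
      rw [← Polynomial.map_map, hb, Algebra.smul_def, Polynomial.map_mul]
      congr 1
      simp [Polynomial.algebraMap_apply]
    rw [e1]
    refine ⟨mul_ne_zero (by simpa using hbu) h3, ?_⟩
    intro α β hαβ hα hβ
    rw [eval_mul, eval_C] at hα hβ ⊢
    rw [eval_mul, eval_C]
    have h5 := h4 α β hαβ (right_ne_zero_of_mul hα) (right_ne_zero_of_mul hβ)
    have hb := fib_baseChange (S := S) (T := T) (R := R) evR
    have := ncard_bij hb (fun ψ => α < ψ (1 ⊗ₜ φ) ∧ ψ (1 ⊗ₜ φ) < β) (fun χ => α < χ φ ∧ χ φ < β) (fun _ _ => Iff.rfl)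
    rw [← this, h5]
    have hp : 0 < evR (algebraMap S R b) ^ 2 := by positivity
    rw [show ∀ p q r : ℝ, p * q * (p * r) = p ^ 2 * (q * r) from fun p q r => by ring]
    exact ⟨fun h => mul_neg_of_pos_of_neg hp h, fun h => by
      by_contra h'; exact absurd h (not_lt.2 (mul_nonneg hp.le (not_lt.1 h')))⟩

lemma MM_finite {R T ι : Type*} [CommRing R] [IsDomain R] [IsNoetherianRing R] [CommRing T] [Algebra R T] [Module.Finite R T]
    (x : ι → T) (hx : Algebra.adjoin R (Set.range x) = ⊤)
    (hs : ∀ k, SepData (S := R) (fun a => IsUnit a) (x k)) : ∃ g : R, g ≠ 0 ∧ ∃ M, MMc R T g M := by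
  have : Module.FinitePresentation R T := Module.finitePresentation_of_finite R T
  let K := FractionRing R
  obtain ⟨r, hr, hfree, -⟩ := Module.FinitePresentation.exists_free_localizedModule_powers (nonZeroDivisors R)
    (LocalizedModule.mkLinearMap (nonZeroDivisors R) T) (Localization (nonZeroDivisors R))
  have hr0 : r ≠ 0 := nonZeroDivisors.ne_zero hr
  let R1 := Localization (Submonoid.powers r)
  have hnt : Nontrivial R1 := by
    have : IsDomain R1 := IsLocalization.isDomain_localization (powers_le_nonZeroDivisors_of_noZeroDivisors hr0)
    infer_instance
  have hf : Module.Free R1 (R1 ⊗[R] T) :=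
    Module.Free.of_equiv (LocalizedModule.equivTensorProduct (Submonoid.powers r) T)
  have h1 := MM_free (R := R1) (T := R1 ⊗[R] T) (fun k => (1 : R1) ⊗ₜ[R] x k) (adjoin_baseChange x hx) (by
    intro k
    exact (hs k).map (algebraMap R R1) (Algebra.TensorProduct.includeRight (R := R) (A := R1) (B := T)).toRingHom (by
      ext s
      change (1 : R1) ⊗ₜ[R] (algebraMap R T s) = (algebraMap R R1 s) ⊗ₜ[R] (1 : T)
      rw [Algebra.algebraMap_eq_smul_one, Algebra.algebraMap_eq_smul_one, TensorProduct.smul_tmul]) (fun a ha => ha.map _))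
  haveI : IsLocalization.Away r R1 := inferInstanceAs (IsLocalization (Submonoid.powers r) (Localization (Submonoid.powers r)))
  obtain ⟨g, hg, h2⟩ := MM_transfer (S := R) (T := T) (R := R1) r hr0 1 one_ne_zero _ h1
  exact ⟨g, hg, _, h2⟩

theorem MM {S T ι : Type*} [CommRing S] [IsDomain S] [IsNoetherianRing S] [CommRing T] [Algebra S T] [Finite ι]
    (x : ι → T) (hx : Algebra.adjoin S (Set.range x) = ⊤)
    (hs : ∀ k, SepData (S := S) (fun a => a ≠ 0) (x k)) : ∃ g : S, g ≠ 0 ∧ ∃ M, MMc S T g M := by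
  classical
  have := Fintype.ofFinite ι
  choose r u v a ha hsep hr using hs
  have hr0 : ∀ k, r k ≠ 0 := by
    intro k h0
    have := hsep k
    rw [h0] at this
    simp at this
    exact ha k (C_eq_zero.1 this.symm)
  let h : S := ∏ k, (a k * (r k).leadingCoeff)
  have hh : h ≠ 0 := Finset.prod_ne_zero_iff.2 fun k _ => mul_ne_zero (ha k) (leadingCoeff_ne_zero.2 (hr0 k))
  let R := Localization.Away h
  have hinj : Function.Injective (algebraMap S R) :=
    IsLocalization.injective R (powers_le_nonZeroDivisors_of_noZeroDivisors hh)
  haveI : IsDomain R := IsLocalization.isDomain_localization (powers_le_nonZeroDivisors_of_noZeroDivisors hh)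
  haveI : IsNoetherianRing R := IsLocalization.isNoetherianRing (Submonoid.powers h) R inferInstance
  have hu : IsUnit (algebraMap S R h) := IsLocalization.Away.algebraMap_isUnit h
  have huk : ∀ k, IsUnit (algebraMap S R (a k * (r k).leadingCoeff)) := by
    intro k
    refine isUnit_of_dvd_unit ?_ hu
    exact map_dvd _ (Finset.dvd_prod_of_mem _ (Finset.mem_univ k))
  have hF : (Algebra.TensorProduct.includeRight (R := S) (A := R) (B := T)).toRingHom.comp (algebraMap S T) =
      (algebraMap R (R ⊗[S] T)).comp (algebraMap S R) := by
    ext s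
    change (1 : R) ⊗ₜ[S] (algebraMap S T s) = (algebraMap S R s) ⊗ₜ[S] (1 : T)
    rw [Algebra.algebraMap_eq_smul_one, Algebra.algebraMap_eq_smul_one, TensorProduct.smul_tmul]
  have hinteg : ∀ k, IsIntegral R ((1 : R) ⊗ₜ[S] x k) := by
    intro k
    have h0 : eval₂ (algebraMap R (R ⊗[S] T)) ((1 : R) ⊗ₜ[S] x k) ((r k).map (algebraMap S R)) = 0 := by
      rw [eval₂_map, ← hF]
      have := hom_eval₂ (r k) (algebraMap S T) (Algebra.TensorProduct.includeRight (R := S) (A := R) (B := T)).toRingHom (x k)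
      rw [← aeval_def, hr k, map_zero] at this
      exact this.symm
    have hl : IsUnit ((r k).map (algebraMap S R)).leadingCoeff := by
      rw [leadingCoeff_map_of_injective hinj]
      have := huk k
      rw [map_mul] at this
      exact isUnit_of_mul_isUnit_right this
    obtain ⟨w, hw⟩ := hl
    refine ⟨C (↑w⁻¹ : R) * ((r k).map (algebraMap S R)), ?_, ?_⟩
    · rw [Monic, leadingCoeff_mul, leadingCoeff_C, ← hw]; simp
    · rw [eval₂_mul, h0, mul_zero]
  have hfin : Module.Finite R (R ⊗[S] T) := by
    have hadj := adjoin_baseChange (R := R) x hx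
    have := Algebra.IsIntegral.adjoin (R := R) (S := Set.range (fun k => (1 : R) ⊗ₜ[S] x k)) (by
      rintro _ ⟨k, rfl⟩; exact hinteg k)
    have h2 : Module.Finite R (Algebra.adjoin R (Set.range (fun k => (1 : R) ⊗ₜ[S] x k))) :=
      Module.Finite.iff_fg.2 (fg_adjoin_of_finite (Set.finite_range _) (by rintro _ ⟨k, rfl⟩; exact hinteg k))
    rw [hadj] at h2
    exact Module.Finite.of_surjective (Subalgebra.val (⊤ : Subalgebra R (R ⊗[S] T))).toLinearMap (fun y => ⟨⟨y, trivial⟩, rfl⟩)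
  obtain ⟨g', hg', M, H⟩ := MM_finite (R := R) (T := R ⊗[S] T) (fun k => (1 : R) ⊗ₜ[S] x k) (adjoin_baseChange x hx) (by
    intro k
    refine SepData.map (p := fun b => b = a k) ⟨r k, u k, v k, a k, rfl, hsep k, hr k⟩ (algebraMap S R) _ hF ?_
    rintro _ rfl
    have := huk k
    rw [map_mul] at this
    exact isUnit_of_mul_isUnit_left this)
  obtain ⟨g, hg, h2⟩ := MM_transfer (S := S) (T := T) (R := R) h hh g' hg' M H
  exact ⟨g, hg, M, h2⟩
end PartB

section PartC
open Polynomial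

lemma sep_of_alg {S T : Type*} [CommRing S] [IsDomain S] [CharZero S] [CommRing T] [IsDomain T] [Algebra S T] (x : T)
    (hx : IsAlgebraic S x) : SepData (S := S) (fun a => a ≠ 0) x := by
  by_cases hinj : Function.Injective (algebraMap S T)
  swap
  · rw [injective_iff_map_eq_zero] at hinj
    push Not at hinj
    obtain ⟨s, hs, hs0⟩ := hinj
    exact ⟨C s, 1, 0, s, hs0, by simp, by simp [hs]⟩
  let L := FractionRing T
  let K := FractionRing S
  have hSL : Function.Injective (algebraMap S L) := by
    rw [IsScalarTower.algebraMap_eq S T L]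
    exact (IsFractionRing.injective T L).comp hinj
  haveI : FaithfulSMul S L := (faithfulSMul_iff_algebraMap_injective S L).2 hSL
  letI : Algebra K L := FractionRing.liftAlgebra S L
  haveI : IsScalarTower S K L := FractionRing.isScalarTower_liftAlgebra S L
  have hy : IsAlgebraic S (algebraMap T L x) := hx.algebraMap
  have hyK : IsAlgebraic K (algebraMap T L x) := hy.extendScalars (IsFractionRing.injective S K)
  haveI : CharZero K := charZero_of_injective_algebraMap (IsFractionRing.injective S K)
  have hirr := minpoly.irreducible hyK.isIntegral
  have hsep : (minpoly K (algebraMap T L x)).Separable := hirr.separable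
  set m := minpoly K (algebraMap T L x) with hm
  obtain ⟨u, v, huv⟩ := hsep
  obtain ⟨b, hb⟩ := IsLocalization.integerNormalization_map_to_map (nonZeroDivisors S) m
  obtain ⟨c, hc⟩ := IsLocalization.integerNormalization_map_to_map (nonZeroDivisors S) u
  obtain ⟨d, hd⟩ := IsLocalization.integerNormalization_map_to_map (nonZeroDivisors S) v
  set r := IsLocalization.integerNormalization (nonZeroDivisors S) m
  set u0 := IsLocalization.integerNormalization (nonZeroDivisors S) u
  set v0 := IsLocalization.integerNormalization (nonZeroDivisors S) v
  refine ⟨r, C (d : S) * u0, C (c : S) * v0, b * c * d, ?_, ?_, ?_⟩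
  · exact mul_ne_zero (mul_ne_zero (nonZeroDivisors.ne_zero b.2) (nonZeroDivisors.ne_zero c.2)) (nonZeroDivisors.ne_zero d.2)
  · apply Polynomial.map_injective (algebraMap S K) (IsFractionRing.injective S K)
    have hsm : ∀ (b : S) (p : K[X]), b • p = C (algebraMap S K b) * p := by
      intro b p
      rw [Algebra.smul_def]; rfl
    simp only [Polynomial.map_add, Polynomial.map_mul, ← derivative_map, hb, hc, hd, map_C, map_mul, hsm,
      derivative_C_mul]
    linear_combination (C (algebraMap S K b) * C (algebraMap S K c) * C (algebraMap S K d)) * huv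
  · apply IsFractionRing.injective T L
    rw [map_zero, aeval_def, hom_eval₂, ← IsScalarTower.algebraMap_eq, IsScalarTower.algebraMap_eq S K L, ← eval₂_map, hb,
      ← aeval_def, Algebra.smul_def, map_mul, minpoly.aeval, mul_zero]

lemma exists_dvd_of_alg {S T : Type*} [CommRing S] [IsDomain S] [CommRing T] [IsDomain T] [Algebra S T] (h : T) (h0 : h ≠ 0)
    (hx : IsAlgebraic S h) : ∃ a : S, a ≠ 0 ∧ h ∣ algebraMap S T a :=
  hx.exists_nonzero_dvd (mem_nonZeroDivisors_of_ne_zero h0)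

theorem MM_domain {S T ι : Type*} [CommRing S] [IsDomain S] [CharZero S] [IsNoetherianRing S] [CommRing T] [IsDomain T]
    [Algebra S T] [Finite ι]
    (x : ι → T) (hx : Algebra.adjoin S (Set.range x) = ⊤)
    (hs : ∀ k, IsAlgebraic S (x k)) : ∃ g : S, g ≠ 0 ∧ ∃ M, MMc S T g M :=
  MM x hx fun k => sep_of_alg (x k) (hs k)

lemma exists_small {F : Set ℝ} (hF : F.Finite) : ∃ β : ℝ, 0 < β ∧ ∀ f ∈ F, 0 < f → β < f := by
  have h2 : {f ∈ F | 0 < f}.Finite := hF.subset (Set.sep_subset _ _)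
  have : ∀ᶠ β in nhdsWithin (0 : ℝ) (Set.Ioi 0), ∀ f ∈ {f ∈ F | 0 < f}, β < f := by
    rw [Filter.eventually_all_finite h2]
    intro f hf
    exact nhdsWithin_le_nhds (Iio_mem_nhds hf.2)
  obtain ⟨β, h3, h4⟩ := (this.and self_mem_nhdsWithin).exists
  exact ⟨β, h4, fun f hf h => h3 f ⟨hf, h⟩⟩

lemma map_eval_eval {σ : Type*} (E : (MvPolynomial σ ℝ)[X]) (z : σ → ℝ) (α : ℝ) :
    (E.map (MvPolynomial.eval z)).eval α = MvPolynomial.eval z (E.eval (MvPolynomial.C α)) := by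
  rw [eval_map, ← Polynomial.eval₂_at_apply, MvPolynomial.eval_C]

lemma fib_C {σ T : Type*} [CommRing T] [Algebra (MvPolynomial σ ℝ) T] {z : σ → ℝ} {χ : T →+* ℝ} 
    (h : χ ∈ Fib T (MvPolynomial.eval z)) (p : MvPolynomial σ ℝ) : χ (algebraMap _ T p) = MvPolynomial.eval z p :=
  congrArg (fun f : MvPolynomial σ ℝ →+* ℝ => f p) h

lemma fib_ext {S T ι : Type*} [CommRing S] [CommRing T] [Algebra S T]
    (x : ι → T) (hx : Algebra.adjoin S (Set.range x) = ⊤) {ev : S →+* ℝ} {χ χ' : T →+* ℝ} (h : χ ∈ Fib T ev) (h' : χ' ∈ Fib T ev)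
    (hk : ∀ k, χ (x k) = χ' (x k)) : χ = χ' := by
  ext t
  have ht : t ∈ Algebra.adjoin S (Set.range x) := by rw [hx]; trivial
  induction ht using Algebra.adjoin_induction with
  | mem y hy => obtain ⟨k, rfl⟩ := hy; exact hk k
  | algebraMap r => 
    have h1 := congrArg (fun f => f r) h
    have h2 := congrArg (fun f => f r) h'
    exact h1.trans h2.symm
  | add a b _ _ ha hb => rw [map_add, map_add, ha, hb]
  | mul a b _ _ ha hb => rw [map_mul, map_mul, ha, hb]

theorem LL {σ T ι : Type*} [CommRing T] [Algebra (MvPolynomial σ ℝ) T] [Fintype ι]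
    (x : ι → T) (hx : Algebra.adjoin (MvPolynomial σ ℝ) (Set.range x) = ⊤)
    {g : MvPolynomial σ ℝ} {M : ℕ} (H : MMc (MvPolynomial σ ℝ) T g M) (z0 : σ → ℝ) (hg : MvPolynomial.eval z0 g ≠ 0)
    (χ0 : T →+* ℝ) (hχ0 : χ0 ∈ Fib T (MvPolynomial.eval z0)) (δ : ℝ) (hδ : 0 < δ) :
    ∀ᶠ z in nhds z0, ∃ χ ∈ Fib T (MvPolynomial.eval z), ∑ k, (χ (x k) - χ0 (x k)) ^ 2 < δ := by
  let φ : T := ∑ k, (x k - algebraMap _ T (MvPolynomial.C (χ0 (x k)) : MvPolynomial σ ℝ)) ^ 2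
  have hφ : ∀ z : σ → ℝ, ∀ χ ∈ Fib T (MvPolynomial.eval z), χ φ = ∑ k, (χ (x k) - χ0 (x k)) ^ 2 := by
    intro z χ hχ
    simp only [φ, map_sum, map_pow, map_sub, fib_C hχ, MvPolynomial.eval_C]
  obtain ⟨E, hE⟩ := H.2 φ
  obtain ⟨hE0, hE1⟩ := hE _ hg
  have hfin : ({α | (E.map (MvPolynomial.eval z0)).eval α = 0} : Set ℝ).Finite := by
    have := (E.map (MvPolynomial.eval z0)).roots.toFinset.finite_toSet
    refine this.subset ?_
    intro α hα
    simp only [Finset.mem_coe, Multiset.mem_toFinset, mem_roots hE0]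
    exact hα
  obtain ⟨α, hα, hα0⟩ := (Set.Iio_infinite (0 : ℝ)).exists_notMem_finite hfin
  obtain ⟨β, hβ, hβ1⟩ := exists_small ((hfin.union ((H.1 _ hg).1.image (fun χ => χ φ))).union (Set.finite_singleton δ))
  have hβδ : β < δ := hβ1 δ (Or.inr rfl) hδ
  have hβ0 : (E.map (MvPolynomial.eval z0)).eval β ≠ 0 := fun h => lt_irrefl _ (hβ1 β (Or.inl (Or.inl h)) hβ)
  have hset : {χ | χ ∈ Fib T (MvPolynomial.eval z0) ∧ α < χ φ ∧ χ φ < β} = {χ0} := by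
    ext χ
    constructor
    · rintro ⟨h1, h2, h3⟩
      have h4 : ¬ (0 < χ φ) := fun h => lt_asymm h3 (hβ1 _ (Or.inl (Or.inr ⟨χ, h1, rfl⟩)) h)
      rw [hφ _ _ h1, not_lt] at h4
      refine fib_ext x hx h1 hχ0 ?_
      intro k
      have h5 : ∑ k, (χ (x k) - χ0 (x k)) ^ 2 = 0 := le_antisymm h4 (Finset.sum_nonneg fun _ _ => sq_nonneg _)
      rw [Finset.sum_eq_zero_iff_of_nonneg (fun _ _ => sq_nonneg _)] at h5
      have := h5 k (Finset.mem_univ _)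
      have := pow_eq_zero_iff (two_ne_zero) |>.1 this
      linarith
    · rintro rfl
      refine ⟨hχ0, ?_⟩
      rw [hφ _ _ hχ0]
      simpa using ⟨hα, hβ⟩
  have hneg := (hE1 α β (lt_trans hα hβ) hα0 hβ0).1 (by rw [hset]; simp)
  have hc : ∀ p : MvPolynomial σ ℝ, Continuous fun z : σ → ℝ => MvPolynomial.eval z p := fun p => MvPolynomial.continuous_eval p
  simp only [map_eval_eval] at hneg
  have e1 : ∀ᶠ z in nhds z0, MvPolynomial.eval z (E.eval (MvPolynomial.C α)) * MvPolynomial.eval z (E.eval (MvPolynomial.C β)) < 0 :=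
    ((hc _).mul (hc _)).continuousAt.eventually_lt continuousAt_const hneg
  have e2 : ∀ᶠ z in nhds z0, MvPolynomial.eval z g ≠ 0 := (hc _).continuousAt.eventually_ne hg
  filter_upwards [e1, e2] with z h1 h2
  obtain ⟨h3, h4⟩ := hE _ h2
  have h5 := h4 α β (lt_trans hα hβ) (by rw [map_eval_eval]; exact left_ne_zero_of_mul h1.ne) 
    (by rw [map_eval_eval]; exact right_ne_zero_of_mul h1.ne)
  rw [map_eval_eval, map_eval_eval] at h5
  have h6 := h5.2 h1
  have h7 : {χ | χ ∈ Fib T (MvPolynomial.eval z) ∧ α < χ φ ∧ χ φ < β}.Nonempty := by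
    by_contra h
    rw [Set.not_nonempty_iff_eq_empty] at h
    rw [h] at h6; simp at h6
  obtain ⟨χ, h8, h9, h10⟩ := h7
  refine ⟨χ, h8, ?_⟩
  rw [← hφ _ _ h8]
  linarith

theorem PAR2 {σ T : Type*} [CommRing T] [Algebra (MvPolynomial σ ℝ) T]
    {g : MvPolynomial σ ℝ} {M : ℕ} (H : MMc (MvPolynomial σ ℝ) T g M) (w0 w1 : σ → ℝ) (hg0 : MvPolynomial.eval w0 g ≠ 0)
    (hg1 : MvPolynomial.eval w1 g ≠ 0) (φ : T) (ρ1 ρ2 α0 : ℝ) (hρ : ρ1 < ρ2) (hα0 : α0 < ρ1)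
    (hno : ∀ t ∈ Set.Icc (0 : ℝ) 1, ∀ χ ∈ Fib T (MvPolynomial.eval (w0 + t • (w1 - w0))),
      α0 < χ φ ∧ (χ φ < ρ1 ∨ ρ2 < χ φ)) :
    Odd {χ | χ ∈ Fib T (MvPolynomial.eval w0) ∧ χ φ < ρ1}.ncard ↔
    Odd {χ | χ ∈ Fib T (MvPolynomial.eval w1) ∧ χ φ < ρ1}.ncard := by
  let w : ℝ → σ → ℝ := fun t => w0 + t • (w1 - w0)
  let π : ℝ → Prop := fun t => Odd {χ | χ ∈ Fib T (MvPolynomial.eval (w t)) ∧ χ φ < ρ1}.ncard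
  have hw0 : w 0 = w0 := by simp [w]
  have hw1 : w 1 = w1 := by simp [w]
  suffices h : π 0 ↔ π 1 by
    simpa only [π, hw0, hw1] using h
  let L : MvPolynomial σ ℝ →+* ℝ[X] := MvPolynomial.eval₂Hom C (fun i => C (w0 i) + X * C (w1 i - w0 i))
  have hL : ∀ t, (evalRingHom t).comp L = MvPolynomial.eval (w t) := by
    intro t
    apply MvPolynomial.ringHom_ext
    · intro r; simp [L]
    · intro i; simp [L, w]
  have hL' : ∀ t p, (L p).eval t = MvPolynomial.eval (w t) p := by
    intro t p
    rw [← hL]; rfl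
  obtain ⟨E, hE⟩ := H.2 φ
  have hE' : E.map L ≠ 0 := by
    intro h0
    have := (hE (MvPolynomial.eval w0) hg0).1
    rw [← hw0, ← hL, ← Polynomial.map_map, h0] at this
    simp at this
  have loc : ∀ t0 ∈ Set.Icc (0 : ℝ) 1, ∃ q : Prop, ∀ᶠ t in nhds t0, t ∈ Set.Icc (0 : ℝ) 1 → (L g).eval t ≠ 0 → (π t ↔ q) := by
    intro t0 ht0
    obtain ⟨m, E1, hE1, hE2⟩ := WfDvdMonoid.max_power_factor' hE' (x := C (X - C t0)) (by
      rw [isUnit_C]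
      exact not_isUnit_X_sub_C t0)
    have hE3 : E1.map (evalRingHom t0) ≠ 0 := by
      intro h0
      apply hE1
      rw [C_dvd_iff_dvd_coeff]
      intro i
      rw [dvd_iff_isRoot]
      have := congrArg (fun p => p.coeff i) h0
      simpa using this
    have hfin : ({α | (E1.map (evalRingHom t0)).eval α = 0} : Set ℝ).Finite := by
      have := (E1.map (evalRingHom t0)).roots.toFinset.finite_toSet
      refine this.subset ?_
      intro α hα
      simp only [Finset.mem_coe, Multiset.mem_toFinset, mem_roots hE3]
      exact hα
    obtain ⟨α, hα, hα1⟩ := (Set.Iio_infinite α0).exists_notMem_finite hfin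
    obtain ⟨β, hβ, hβ1⟩ := (Set.Ioo_infinite hρ).exists_notMem_finite hfin
    have hee : ∀ t a, (E1.map (evalRingHom t)).eval a = (E1.eval (C a)).eval t := by
      intro t a
      have := Polynomial.eval₂_at_apply (p := E1) (evalRingHom t) (C a)
      simp only [coe_evalRingHom, eval_C] at this
      rw [eval_map, this]
    let p : ℝ → ℝ := fun t => (E1.eval (C α)).eval t * (E1.eval (C β)).eval t
    have hp : Continuous p := (Polynomial.continuous _).mul (Polynomial.continuous _)
    have hp0 : p t0 ≠ 0 := by
      simp only [p, ← hee]
      exact mul_ne_zero hα1 hβ1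
    have hev : ∀ᶠ t in nhds t0, p t ≠ 0 ∧ (p t < 0 ↔ p t0 < 0) := by
      rcases lt_or_gt_of_ne hp0 with h | h
      · filter_upwards [hp.continuousAt.eventually_lt continuousAt_const h] with t ht
        exact ⟨ne_of_lt ht, fun _ => h, fun _ => ht⟩
      · filter_upwards [continuousAt_const.eventually_lt hp.continuousAt h] with t ht
        exact ⟨ne_of_gt ht, fun h' => absurd h' (not_lt.2 (le_of_lt ht)), fun h' => absurd h' (not_lt.2 (le_of_lt h))⟩
    refine ⟨p t0 < 0, ?_⟩
    filter_upwards [hev] with t ht htI hgt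
    rw [hL'] at hgt
    obtain ⟨h1, h2⟩ := hE _ hgt
    have hEt : E.map (MvPolynomial.eval (w t)) = C ((t - t0) ^ m) * E1.map (evalRingHom t) := by
      rw [← hL, ← Polynomial.map_map, hE2, Polynomial.map_mul, Polynomial.map_pow, map_C]
      simp
    rw [hEt] at h1 h2
    have hm : (t - t0) ^ m ≠ 0 := by
      intro h0
      apply h1; rw [h0]; simp
    have hαβ : α < β := lt_trans hα (lt_trans hα0 hβ.1)
    have h3 := h2 α β hαβ (by rw [eval_mul, eval_C, hee]; exact mul_ne_zero hm (left_ne_zero_of_mul ht.1))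
      (by rw [eval_mul, eval_C, hee]; exact mul_ne_zero hm (right_ne_zero_of_mul ht.1))
    have h4 : {χ | χ ∈ Fib T (MvPolynomial.eval (w t)) ∧ α < χ φ ∧ χ φ < β} =
        {χ | χ ∈ Fib T (MvPolynomial.eval (w t)) ∧ χ φ < ρ1} := by
      ext χ
      constructor
      · rintro ⟨h5, h6, h7⟩
        refine ⟨h5, ?_⟩
        rcases (hno t htI χ h5).2 with h | h
        · exact h
        · exact absurd h7 (not_lt.2 (hβ.2.le.trans h.le))
      · rintro ⟨h5, h6⟩
        exact ⟨h5, lt_trans hα (hno t htI χ h5).1, lt_trans h6 hβ.1⟩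
    rw [h4] at h3
    change Odd _ ↔ _
    rw [h3, ← ht.2]; simp only [eval_mul, eval_C, hee]
    have hpp : 0 < ((t - t0) ^ m) ^ 2 := by positivity
    rw [show ∀ p q r : ℝ, p * q * (p * r) = p ^ 2 * (q * r) from fun p q r => by ring]
    exact ⟨fun h => by
      by_contra h'; exact absurd h (not_lt.2 (mul_nonneg hpp.le (not_lt.1 h'))), fun h => mul_neg_of_pos_of_neg hpp h⟩
  choose! q hq using loc
  have hLg : L g ≠ 0 := by
    intro h0
    have := hL' 0 g
    rw [h0, hw0] at this
    simp at this
    exact hg0 this.symm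
  have hgfin : ({t | (L g).eval t = 0} : Set ℝ).Finite := by
    refine ((L g).roots.toFinset.finite_toSet).subset ?_
    intro α hα
    simp only [Finset.mem_coe, Multiset.mem_toFinset, mem_roots hLg]
    exact hα
  have hq1 : ∀ t0 ∈ Set.Icc (0 : ℝ) 1, (L g).eval t0 ≠ 0 → (π t0 ↔ q t0) := fun t0 h1 h2 => (hq t0 h1).self_of_nhds h1 h2
  have hqc : ∀ t0 ∈ Set.Icc (0 : ℝ) 1, ∀ᶠ t1 in nhdsWithin t0 (Set.Icc (0 : ℝ) 1), (q t0 ↔ q t1) := by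
    intro t0 ht0
    have h1 := (hq t0 ht0).eventually_nhds
    refine Filter.Eventually.filter_mono nhdsWithin_le_nhds h1 |>.mp ?_
    filter_upwards [self_mem_nhdsWithin] with t1 ht1 h2
    have h3 := h2.and (hq t1 ht1)
    -- find a good t near t1 in Icc
    have h4 : ∃ᶠ t in nhds t1, t ∈ Set.Icc (0 : ℝ) 1 ∧ (L g).eval t ≠ 0 := by
      have hcl : t1 ∈ closure (Set.Ioo (0 : ℝ) 1 \ {t | (L g).eval t = 0}) := by
        have hd : Dense ({t | (L g).eval t = 0}ᶜ : Set ℝ) := Set.Countable.dense_compl ℝ (Set.Finite.countable hgfin)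
        have : closure (Set.Ioo (0 : ℝ) 1) ⊆ closure (Set.Ioo (0 : ℝ) 1 ∩ {t | (L g).eval t = 0}ᶜ) :=
          closure_minimal (hd.open_subset_closure_inter isOpen_Ioo) isClosed_closure
        apply this
        rw [closure_Ioo (by norm_num)]
        exact ht1
      rw [mem_closure_iff_frequently] at hcl
      exact hcl.mono fun t ht => ⟨Set.Ioo_subset_Icc_self ht.1, ht.2⟩
    obtain ⟨t, ⟨h5, h6⟩, h7, h8⟩ := (h4.and_eventually h3).exists
    rw [← h7 h5 h6, ← h8 h5 h6]
  have hfinal : q 0 ↔ q 1 := by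
    have := isPreconnected_Icc.induction₂ (s := Set.Icc (0 : ℝ) 1) (fun a b => (q a ↔ q b)) hqc
      (fun a b c _ _ _ h1 h2 => h1.trans h2) (fun a b _ _ h => h.symm) (x := 0) (y := 1) (by simp) (by simp)
    exact this
  rw [hq1 0 (by simp) (by rw [hL', hw0]; exact hg0), hq1 1 (by simp) (by rw [hL', hw1]; exact hg1), hfinal]
end PartC

section PartD1
open Polynomial TensorProduct

lemma chi_real {D : Type*} [CommRing D] [Algebra ℝ D] (χ : D →+* ℝ) (r : ℝ) : χ (algebraMap ℝ D r) = r := by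
  have : χ.comp (algebraMap ℝ D) = RingHom.id ℝ := Subsingleton.elim _ _
  exact congrArg (fun f : ℝ →+* ℝ => f r) this

lemma chi_aeval {D ι : Type*} [CommRing D] [Algebra ℝ D] (χ : D →+* ℝ) (v : ι → D) (p : MvPolynomial ι ℝ) :
    χ (MvPolynomial.aeval v p) = MvPolynomial.eval (fun i => χ (v i)) p := by
  have : χ.comp (MvPolynomial.aeval v).toRingHom = MvPolynomial.eval (fun i => χ (v i)) := by
    apply MvPolynomial.ringHom_ext
    · intro r; simp [chi_real]
    · intro i; simp
  exact congrArg (fun f : MvPolynomial ι ℝ →+* ℝ => f p) this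

lemma alg_lift {D ι : Type*} [CommRing D] [Algebra ℝ D] (v : ι → D) (d : D)
    (h : IsAlgebraic (Algebra.adjoin ℝ (Set.range v)) d) :
    ∃ p : (MvPolynomial ι ℝ)[X], p.map (MvPolynomial.aeval v).toRingHom ≠ 0 ∧
      p.eval₂ (MvPolynomial.aeval v).toRingHom d = 0 := by
  obtain ⟨q, hq, hq0⟩ := h
  have e : ∀ a : Algebra.adjoin ℝ (Set.range v), ∃ p : MvPolynomial ι ℝ, MvPolynomial.aeval v p = (a : D) := by
    intro a
    have h1 : ∀ b ∈ Algebra.adjoin ℝ (Set.range v), ∃ p : MvPolynomial ι ℝ, MvPolynomial.aeval v p = b := by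
      rw [Algebra.adjoin_range_eq_range_aeval]
      exact fun b hb => hb
    exact h1 a a.2
  let f : MvPolynomial ι ℝ →ₐ[ℝ] Algebra.adjoin ℝ (Set.range v) :=
    MvPolynomial.aeval (fun i => ⟨v i, Algebra.subset_adjoin ⟨i, rfl⟩⟩)
  have hf : (algebraMap (Algebra.adjoin ℝ (Set.range v)) D).comp f.toRingHom = (MvPolynomial.aeval v).toRingHom := by
    apply MvPolynomial.ringHom_ext
    · intro r; simp [f]
    · intro i; simp [f]
  have hsurj : Function.Surjective f.toRingHom := by
    intro a
    obtain ⟨p, hp⟩ := e a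
    refine ⟨p, Subtype.ext ?_⟩
    rw [← hp]
    exact congrArg (fun f : MvPolynomial ι ℝ →+* D => f p) hf
  obtain ⟨p, rfl⟩ := Polynomial.map_surjective _ hsurj q
  refine ⟨p, ?_, ?_⟩
  · rw [← hf, ← Polynomial.map_map]
    intro h0
    apply hq
    exact (Polynomial.map_eq_zero_iff (f := algebraMap (Algebra.adjoin ℝ (Set.range v)) D) Subtype.val_injective).1 h0
  · rw [aeval_def, eval₂_map, hf] at hq0
    exact hq0

theorem algA {D ι τ : Type*} [CommRing D] [IsDomain D] [Algebra ℝ D] [Fintype ι] [Finite τ]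
    (x : ι → D) (hx : Algebra.adjoin ℝ (Set.range x) = ⊤)
    (hd : ∀ d : D, d ≠ 0 → ∃ χ : D →+* ℝ, χ d ≠ 0) (s : τ → D)
    (hinj : ∀ χ χ' : D →+* ℝ, (∀ j, χ (s j) = χ' (s j)) → χ = χ') (t : D) :
    IsAlgebraic (Algebra.adjoin ℝ (Set.range s)) t := by
  classical
  by_contra hcon
  have hR : Function.Injective (algebraMap ℝ D) := (algebraMap ℝ D).injective
  obtain ⟨B0, -, hB0⟩ := exists_maximal_algebraicIndependent (R := ℝ) (∅ : Set D) (Set.range s) (by simp)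
    ((algebraicIndependent_empty_iff ℝ D).mpr hR)
  have hsub : Algebra.adjoin ℝ B0 ≤ Algebra.adjoin ℝ (Set.range s) := Algebra.adjoin_mono hB0.prop.2
  have hsalg : ∀ j, IsAlgebraic (Algebra.adjoin ℝ B0) (s j) := by
    intro j
    by_cases hj : s j ∈ B0
    · exact isAlgebraic_algebraMap (⟨s j, Algebra.subset_adjoin hj⟩ : Algebra.adjoin ℝ B0)
    by_contra hj2
    have : AlgebraicIndepOn ℝ id (insert (s j) B0) := by
      rw [AlgebraicIndepOn.insert_iff hj]
      refine ⟨hB0.prop.1, ?_⟩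
      rw [Set.image_id]; exact hj2
    have := hB0.le_of_ge ⟨this, Set.insert_subset ⟨j, rfl⟩ hB0.prop.2⟩ (Set.subset_insert _ _)
    exact hj (this (Set.mem_insert _ _))
  have htB : ¬ IsAlgebraic (Algebra.adjoin ℝ B0) t := by
    rintro ⟨q, hq, hq0⟩
    apply hcon
    refine ⟨q.map (Subalgebra.inclusion hsub).toRingHom, ?_, ?_⟩
    · intro h0
      exact hq ((Polynomial.map_eq_zero_iff (Subalgebra.inclusion_injective hsub)).1 h0)
    · rw [aeval_def, eval₂_map]
      rw [aeval_def] at hq0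
      exact hq0
  have htB0 : t ∉ B0 := fun h => htB (isAlgebraic_algebraMap (⟨t, Algebra.subset_adjoin h⟩ : Algebra.adjoin ℝ B0))
  have hB1 : AlgebraicIndepOn ℝ id (insert t B0) := by
    rw [AlgebraicIndepOn.insert_iff htB0]
    refine ⟨hB0.prop.1, ?_⟩
    rw [Set.image_id]; exact htB
  have hgen : Algebra.adjoin ℝ (insert t B0 ∪ Set.range x) = ⊤ := by
    rw [eq_top_iff, ← hx]; exact Algebra.adjoin_mono Set.subset_union_right
  have halg0 : Algebra.IsAlgebraic (Algebra.adjoin ℝ (insert t B0 ∪ Set.range x)) D := by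
    refine ⟨fun a => ?_⟩
    exact isAlgebraic_algebraMap (⟨a, by rw [hgen]; trivial⟩ : Algebra.adjoin ℝ (insert t B0 ∪ Set.range x))
  obtain ⟨B, hB2, hB3, hB⟩ := exists_isTranscendenceBasis_between (R := ℝ) (insert t B0) (insert t B0 ∪ Set.range x)
    Set.subset_union_left hB1
  have hBfin : Finite B := by
    apply Set.Finite.subset _ hB3
    exact (((Set.finite_range s).subset hB0.prop.2).insert t).union (Set.finite_range x)
  have hBalg := hB.isAlgebraic
  letI : Algebra (MvPolynomial B ℝ) D := (MvPolynomial.aeval (fun b : B => (b : D))).toRingHom.toAlgebra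
  have hmap : ∀ p : MvPolynomial B ℝ, algebraMap (MvPolynomial B ℝ) D p = MvPolynomial.aeval (fun b : B => (b : D)) p :=
    fun _ => rfl
  have hxs : ∀ k, IsAlgebraic (MvPolynomial B ℝ) (x k) := by
    intro k
    obtain ⟨p, hp, hp0⟩ := alg_lift (fun b : B => (b : D)) (x k) (hBalg.isAlgebraic (x k))
    refine ⟨p, ?_, hp0⟩
    rintro rfl; simp at hp
  have hxS : Algebra.adjoin (MvPolynomial B ℝ) (Set.range x) = ⊤ := by
    rw [eq_top_iff]
    rintro d -
    have hd : d ∈ Algebra.adjoin ℝ (Set.range x) := by rw [hx]; trivial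
    induction hd using Algebra.adjoin_induction with
    | mem y hy => exact Algebra.subset_adjoin hy
    | algebraMap r =>
      have : algebraMap ℝ D r = algebraMap (MvPolynomial B ℝ) D (MvPolynomial.C r) := by simp [hmap]
      rw [this]; exact Subalgebra.algebraMap_mem _ _
    | add a b _ _ ha hb => exact add_mem ha hb
    | mul a b _ _ ha hb => exact mul_mem ha hb
  obtain ⟨g, hg, M, H⟩ := MM_domain x hxS hxs
  have hgD : MvPolynomial.aeval (fun b : B => (b : D)) g ≠ 0 := by
    intro h0
    exact hg ((injective_iff_map_eq_zero _).1 hB.1 g h0)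
  -- relations for s j
  have hrel : ∀ j, ∃ p : (MvPolynomial B0 ℝ)[X], p.map (MvPolynomial.aeval (fun b : B0 => (b : D))).toRingHom ≠ 0 ∧
      p.eval₂ (MvPolynomial.aeval (fun b : B0 => (b : D))).toRingHom (s j) = 0 := by
    intro j
    apply alg_lift
    rw [Subtype.range_coe]
    exact hsalg j
  choose p hp hp0 using hrel
  have hco : ∀ j, ∃ i, (MvPolynomial.aeval (fun b : B0 => (b : D))) ((p j).coeff i) ≠ 0 := by
    intro j
    by_contra hcon
    push Not at hcon
    apply hp j
    ext i
    simpa using hcon i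
  choose i hi using hco
  have : Fintype τ := Fintype.ofFinite τ
  obtain ⟨χ0, hχ0⟩ := hd (MvPolynomial.aeval (fun b : B => (b : D)) g *
    ∏ j, (MvPolynomial.aeval (fun b : B0 => (b : D))) ((p j).coeff (i j)))
    (mul_ne_zero hgD (Finset.prod_ne_zero_iff.2 fun j _ => hi j))
  rw [map_mul, map_prod] at hχ0
  have hχg := left_ne_zero_of_mul hχ0
  have hχi := fun j => Finset.prod_ne_zero_iff.1 (right_ne_zero_of_mul hχ0) j (Finset.mem_univ j)
  simp only [chi_aeval] at hχg hχi
  let z0 : B → ℝ := fun b => χ0 b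
  have hfib : ∀ (z : B → ℝ) (χ : D →+* ℝ), χ ∈ Fib D (MvPolynomial.eval z) ↔ ∀ b : B, χ b = z b := by
    intro z χ
    constructor
    · intro h b
      have := fib_C h (MvPolynomial.X b)
      simpa [hmap] using this
    · intro h
      change χ.comp _ = _
      apply MvPolynomial.ringHom_ext
      · intro r; simp [hmap, chi_real]
      · intro b; simp [hmap, h]
  have hLL := LL x hxS H z0 hχg χ0 ((hfib _ _).2 fun b => rfl) 1 one_pos
  let tB : B := ⟨t, hB2 (Set.mem_insert _ _)⟩
  have hcont : Filter.Tendsto (fun r : ℝ => Function.update z0 tB r) (nhds (z0 tB)) (nhds z0) := by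
    have : Continuous (fun r : ℝ => Function.update z0 tB r) := by
      exact continuous_const.update tB continuous_id
    have h := this.tendsto (z0 tB)
    rwa [Function.update_eq_self] at h
  have hLL2 := hcont.eventually hLL
  have hinfin : {r : ℝ | ∃ χ ∈ Fib D (MvPolynomial.eval (Function.update z0 tB r)), ∑ k, (χ (x k) - χ0 (x k)) ^ 2 < 1}.Infinite :=
    infinite_of_mem_nhds _ hLL2
  haveI : Nonempty (D →+* ℝ) := ⟨χ0⟩
  choose! c hc1 hc2 using (fun (r : ℝ) (hr : r ∈ {r : ℝ | ∃ χ ∈ Fib D (MvPolynomial.eval (Function.update z0 tB r)), ∑ k, (χ (x k) - χ0 (x k)) ^ 2 < 1}) => hr)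
  -- finite target
  let Rt : τ → Set ℝ := fun j => {α | ((p j).map (MvPolynomial.eval (fun b : B0 => χ0 b))).eval α = 0}
  have hRt : ∀ j, (Rt j).Finite := by
    intro j
    have hne : (p j).map (MvPolynomial.eval (fun b : B0 => χ0 b)) ≠ 0 := by
      intro h0
      have := congrArg (fun q => q.coeff (i j)) h0
      simp only [coeff_map, coeff_zero] at this
      exact hχi j this
    refine (((p j).map (MvPolynomial.eval (fun b : B0 => χ0 b))).roots.toFinset.finite_toSet).subset ?_
    intro α hα
    simp only [Finset.mem_coe, Multiset.mem_toFinset, mem_roots hne]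
    exact hα
  have hmaps : Set.MapsTo (fun r => fun j => c r (s j)) {r : ℝ | ∃ χ ∈ Fib D (MvPolynomial.eval (Function.update z0 tB r)), ∑ k, (χ (x k) - χ0 (x k)) ^ 2 < 1}
      (Set.pi Set.univ Rt) := by
    intro r hr j _
    have h1 := (hfib _ _).1 (hc1 r hr)
    have h2 := congrArg (c r) (hp0 j)
    rw [map_zero, Polynomial.hom_eval₂] at h2
    have h3 : (c r).comp (MvPolynomial.aeval (fun b : B0 => (b : D))).toRingHom = MvPolynomial.eval (fun b : B0 => χ0 b) := by
      apply MvPolynomial.ringHom_ext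
      · intro q; simp [chi_real]
      · intro b
        have hbB : (b : D) ∈ B := hB2 (Set.mem_insert_of_mem _ b.2)
        have h4 := h1 ⟨b, hbB⟩
        rw [Function.update_of_ne] at h4
        · simpa using h4
        · intro h5
          have : (b : D) = t := congrArg Subtype.val h5
          exact htB0 (this ▸ b.2)
    rw [h3] at h2
    change eval _ _ = 0
    rw [eval_map]; exact h2
  obtain ⟨r, hr, r', hr', hne, heq⟩ := hinfin.exists_ne_map_eq_of_mapsTo hmaps (Set.Finite.pi' hRt |>.subset (by intro f hf j; exact hf j trivial))
  have h1 := hinj (c r) (c r') (fun j => congrFun heq j)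
  have h2 := (hfib _ _).1 (hc1 r hr) tB
  have h3 := (hfib _ _).1 (hc1 r' hr') tB
  rw [h1, h3] at h2
  simp at h2
  exact hne h2.symm
end PartD1

section PartD2
open Polynomial TensorProduct

noncomputable def evP {σ τ : Type*} (P : τ → MvPolynomial σ ℝ) (x : σ → ℝ) : τ → ℝ :=
  fun j => MvPolynomial.eval x (P j)

lemma evP_cont {σ τ : Type*} (P : τ → MvPolynomial σ ℝ) : Continuous (evP P) :=
  continuous_pi fun j => MvPolynomial.continuous_eval (P j)

lemma eval_ext {σ : Type*} (g : MvPolynomial σ ℝ) (h : ∀ x, MvPolynomial.eval x g = 0) : g = 0 :=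
  MvPolynomial.funext fun x => by rw [h x, map_zero]

lemma dense_ne_zero {σ : Type*} [Finite σ] (g : MvPolynomial σ ℝ) (hg : g ≠ 0) :
    Dense {z : σ → ℝ | MvPolynomial.eval z g ≠ 0} := by
  intro z0
  obtain ⟨z1, hz1⟩ : ∃ z1, MvPolynomial.eval z1 g ≠ 0 := by
    by_contra h; push Not at h; exact hg (eval_ext g h)
  let L : MvPolynomial σ ℝ →+* ℝ[X] := MvPolynomial.eval₂Hom C (fun i => C (z0 i) + X * C (z1 i - z0 i))
  have hL : ∀ t p, (L p).eval t = MvPolynomial.eval (z0 + t • (z1 - z0)) p := by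
    intro t p
    have : (evalRingHom t).comp L = MvPolynomial.eval (z0 + t • (z1 - z0)) := by
      apply MvPolynomial.ringHom_ext
      · intro r; simp [L]
      · intro i; simp [L]
    rw [← this]; rfl
  have hLg : L g ≠ 0 := by
    intro h0
    have := hL 1 g
    rw [h0] at this
    simp at this
    exact hz1 this.symm
  have hgfin : ({t | (L g).eval t = 0} : Set ℝ).Finite := by
    refine ((L g).roots.toFinset.finite_toSet).subset ?_
    intro α hα
    simp only [Finset.mem_coe, Multiset.mem_toFinset, mem_roots hLg]
    exact hα
  have hd : Dense ({t | (L g).eval t = 0}ᶜ : Set ℝ) := Set.Countable.dense_compl ℝ (Set.Finite.countable hgfin)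
  have hc : Continuous (fun t : ℝ => z0 + t • (z1 - z0)) := by fun_prop
  have h0 : (0 : ℝ) ∈ closure ({t | (L g).eval t = 0}ᶜ : Set ℝ) := hd 0
  have := map_mem_closure hc h0 (t := {z : σ → ℝ | MvPolynomial.eval z g ≠ 0}) (by
    intro t ht
    change MvPolynomial.eval _ g ≠ 0
    rw [← hL]; exact ht)
  simpa using this

lemma mv_chi {σ : Type*} (χ : MvPolynomial σ ℝ →+* ℝ) : χ = MvPolynomial.eval (fun i => χ (MvPolynomial.X i)) := by
  apply MvPolynomial.ringHom_ext
  · intro r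
    simpa using chi_real χ r
  · intro i; simp

lemma mv_adjoin (σ : Type*) : Algebra.adjoin ℝ (Set.range (MvPolynomial.X : σ → MvPolynomial σ ℝ)) = ⊤ :=
  MvPolynomial.adjoin_range_X

lemma algP {σ τ : Type*} [Fintype σ] [Finite τ] (P : τ → MvPolynomial σ ℝ) (hinj : Function.Injective (evP P)) :
    Algebra.IsAlgebraic (Algebra.adjoin ℝ (Set.range P)) (MvPolynomial σ ℝ) := by
  refine ⟨fun d => algA MvPolynomial.X (mv_adjoin σ) ?_ P ?_ d⟩
  · intro d hd
    by_contra h; push Not at h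
    exact hd (eval_ext d fun x => h (MvPolynomial.eval x))
  · intro χ χ' h
    rw [mv_chi χ, mv_chi χ'] at h ⊢
    congr 1
    exact hinj (funext h)

theorem card_le_of_inj {n m : ℕ} (P : Fin m → MvPolynomial (Fin n) ℝ) (hinj : Function.Injective (evP P)) : n ≤ m := by
  have := algP P hinj
  have h1 := Algebra.IsAlgebraic.trdeg_le_cardinalMk ℝ (Set.range P)
  have h2 : Cardinal.mk (Set.range P) ≤ Cardinal.mk (Fin m) := by
    simpa using Cardinal.mk_range_le_lift (f := P)
  rw [MvPolynomial.trdeg_of_isDomain] at h1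
  have := h1.trans h2
  simpa using this

lemma algindepP {n : ℕ} {σ τ : Type} [Fintype σ] [Fintype τ] (hσ : Fintype.card σ = n) (hτ : Fintype.card τ = n)
    (P : τ → MvPolynomial σ ℝ) (hinj : Function.Injective (evP P)) :
    AlgebraicIndependent ℝ P := by
  have := algP P hinj
  suffices h : IsTranscendenceBasis ℝ P from h.1
  apply Algebra.IsAlgebraic.isTranscendenceBasis_of_le_trdeg_of_finite
  rw [MvPolynomial.trdeg_of_isDomain]
  simp [hσ, hτ]

lemma adjoin_lift {T ι : Type*} (S : Type*) [CommRing S] [CommRing T] [Algebra ℝ S] [Algebra ℝ T] [Algebra S T] [IsScalarTower ℝ S T]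
    (x : ι → T) (hx : Algebra.adjoin ℝ (Set.range x) = ⊤) : Algebra.adjoin S (Set.range x) = ⊤ := by
  rw [eq_top_iff]
  rintro d -
  have hd : d ∈ Algebra.adjoin ℝ (Set.range x) := by rw [hx]; trivial
  induction hd using Algebra.adjoin_induction with
  | mem y hy => exact Algebra.subset_adjoin hy
  | algebraMap r =>
    rw [IsScalarTower.algebraMap_apply ℝ S T]; exact Subalgebra.algebraMap_mem _ _
  | add a b _ _ ha hb => exact add_mem ha hb
  | mul a b _ _ ha hb => exact mul_mem ha hb

lemma continuous_sq {σ : Type*} [Fintype σ] (a : σ → ℝ) : Continuous fun p : σ → ℝ => ∑ i, (p i - a i) ^ 2 := by fun_prop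

lemma isCompact_sq {σ : Type*} [Fintype σ] (a : σ → ℝ) (ρ : ℝ) : IsCompact {p : σ → ℝ | ∑ i, (p i - a i) ^ 2 ≤ ρ} := by
  apply Metric.isCompact_of_isClosed_isBounded
  · exact isClosed_le (continuous_sq a) continuous_const
  · refine (Metric.isBounded_closedBall (x := a) (r := Real.sqrt ρ)).subset ?_
    intro p hp
    rw [Metric.mem_closedBall, dist_pi_le_iff (Real.sqrt_nonneg _)]
    intro i
    rw [Real.dist_eq]
    apply Real.abs_le_sqrt
    exact (Finset.single_le_sum (f := fun i => (p i - a i) ^ 2) (fun i _ => sq_nonneg _) (Finset.mem_univ i)).trans hp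

lemma sq_subset {σ : Type*} [Fintype σ] (a : σ → ℝ) {U : Set (σ → ℝ)} (hU : U ∈ nhds a) :
    ∃ ρ : ℝ, 0 < ρ ∧ {p : σ → ℝ | ∑ i, (p i - a i) ^ 2 ≤ ρ} ⊆ U := by
  obtain ⟨ε, hε, h⟩ := Metric.mem_nhds_iff.1 hU
  refine ⟨(ε / 2) ^ 2, by positivity, fun p hp => h ?_⟩
  rw [Metric.mem_ball]
  refine lt_of_le_of_lt ((dist_pi_le_iff (by positivity : 0 ≤ ε / 2)).2 fun i => ?_) (half_lt_self hε)
  rw [Real.dist_eq]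
  apply abs_le_of_sq_le_sq _ (by positivity)
  exact (Finset.single_le_sum (f := fun i => (p i - a i) ^ 2) (fun i _ => sq_nonneg _) (Finset.mem_univ i)).trans hp

theorem open_core {n : ℕ} {σ τ : Type} [Fintype σ] [Fintype τ] (hσ : Fintype.card σ = n) (hτ : Fintype.card τ = n)
    (P : τ → MvPolynomial σ ℝ) (hinj : Function.Injective (evP P)) : IsOpenMap (evP P) := by
  have hAlg := algP P hinj
  have hInd := algindepP hσ hτ P hinj
  letI : Algebra (MvPolynomial τ ℝ) (MvPolynomial σ ℝ) := (MvPolynomial.aeval P).toRingHom.toAlgebra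
  have hmap : ∀ p : MvPolynomial τ ℝ, algebraMap (MvPolynomial τ ℝ) (MvPolynomial σ ℝ) p = MvPolynomial.aeval P p :=
    fun _ => rfl
  haveI : IsScalarTower ℝ (MvPolynomial τ ℝ) (MvPolynomial σ ℝ) := by
    apply IsScalarTower.of_algebraMap_eq
    intro r
    rw [hmap]; simp
  have hxS := adjoin_lift (MvPolynomial τ ℝ) (MvPolynomial.X : σ → MvPolynomial σ ℝ) (mv_adjoin σ)
  have hxs : ∀ k, IsAlgebraic (MvPolynomial τ ℝ) (MvPolynomial.X k : MvPolynomial σ ℝ) := by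
    intro k
    obtain ⟨p, hp, hp0⟩ := alg_lift P (MvPolynomial.X k) (hAlg.isAlgebraic _)
    refine ⟨p, ?_, hp0⟩
    rintro rfl; simp at hp
  obtain ⟨g, hg, M, H⟩ := MM_domain _ hxS hxs
  have hfib : ∀ (y : τ → ℝ) (χ : MvPolynomial σ ℝ →+* ℝ), χ ∈ Fib (MvPolynomial σ ℝ) (MvPolynomial.eval y) ↔
      evP P (fun i => χ (MvPolynomial.X i)) = y := by
    intro y χ
    constructor
    · intro h
      ext j
      have := fib_C h (MvPolynomial.X j)
      rw [hmap, mv_chi χ] at this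
      simpa [evP] using this
    · intro h
      change χ.comp _ = _
      apply MvPolynomial.ringHom_ext
      · intro r; simp [hmap]; simpa using chi_real χ r
      · intro b
        have := congrFun h b
        simp only [evP] at this
        rw [← mv_chi χ] at this
        simp [hmap, this]
  have hgP : MvPolynomial.aeval P g ≠ 0 := fun h0 => hg ((injective_iff_map_eq_zero _).1 hInd g h0)
  rw [isOpenMap_iff_nhds_le]
  intro p0 W hW
  obtain ⟨ρ2, hρ2, hsub⟩ := sq_subset p0 hW
  let ρ1 := ρ2 / 2
  have hρ : ρ1 < ρ2 := half_lt_self hρ2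
  have hρ1 : 0 < ρ1 := half_pos hρ2
  let K : Set (σ → ℝ) := {p | ∑ i, (p i - p0 i) ^ 2 ≤ ρ2} ∩ {p | ρ1 ≤ ∑ i, (p i - p0 i) ^ 2}
  have hK : IsCompact K := (isCompact_sq p0 ρ2).inter_right (isClosed_le continuous_const (continuous_sq p0))
  have hPK : IsClosed (evP P '' K) := (hK.image (evP_cont P)).isClosed
  have hnK : evP P p0 ∉ evP P '' K := by
    rintro ⟨p, hp, he⟩
    rw [hinj he] at hp
    have := hp.2
    simp at this
    linarith
  obtain ⟨η, hη, hball⟩ := Metric.mem_nhds_iff.1 (hPK.isOpen_compl.mem_nhds hnK)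
  -- good base point
  have hU1 : {p : σ → ℝ | ∑ i, (p i - p0 i) ^ 2 < ρ1} ∩ evP P ⁻¹' Metric.ball (evP P p0) η ∈ nhds p0 := by
    apply Filter.inter_mem
    · apply (isOpen_lt (continuous_sq p0) continuous_const).mem_nhds
      simpa using hρ1
    · exact (evP_cont P).continuousAt.preimage_mem_nhds (Metric.ball_mem_nhds _ hη)
  obtain ⟨p1, hp1g, hp1, hp1b⟩ := (dense_ne_zero _ hgP).inter_nhds_nonempty hU1
  have hp1g : MvPolynomial.eval (evP P p1) g ≠ 0 := by
    have := chi_aeval (MvPolynomial.eval p1) P g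
    intro h0
    exact hp1g (this.trans h0)
  let φ : MvPolynomial σ ℝ := ∑ i, (MvPolynomial.X i - MvPolynomial.C (p0 i)) ^ 2
  have hφ : ∀ χ : MvPolynomial σ ℝ →+* ℝ, χ φ = ∑ i, (χ (MvPolynomial.X i) - p0 i) ^ 2 := by
    intro χ
    simp only [φ, map_sum, map_pow, map_sub]
    refine Finset.sum_congr rfl fun i _ => ?_
    congr 2
    exact chi_real χ (p0 i)
  have hgood : ∀ y ∈ Metric.ball (evP P p0) η, MvPolynomial.eval y g ≠ 0 → y ∈ evP P '' {p | ∑ i, (p i - p0 i) ^ 2 ≤ ρ1} := by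
    intro y hy hyg
    have hpar := PAR2 H (evP P p1) y hp1g hyg φ ρ1 ρ2 (-1) hρ (by linarith) (by
      intro t ht χ hχ
      rw [hφ]
      have hnn : 0 ≤ ∑ i, (χ (MvPolynomial.X i) - p0 i) ^ 2 := Finset.sum_nonneg fun i _ => sq_nonneg _
      refine ⟨by linarith, ?_⟩
      by_contra hcon
      push Not at hcon
      have hw : evP P p1 + t • (y - evP P p1) ∈ Metric.ball (evP P p0) η :=
        (convex_ball (evP P p0) η).add_smul_sub_mem hp1b hy ht
      apply hball hw
      exact ⟨fun i => χ (MvPolynomial.X i), ⟨hcon.2, hcon.1⟩, (hfib _ _).1 hχ⟩)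
    have h1 : {χ | χ ∈ Fib (MvPolynomial σ ℝ) (MvPolynomial.eval (evP P p1)) ∧ χ φ < ρ1} = {MvPolynomial.eval p1} := by
      ext χ
      simp only [Set.mem_ofPred_eq, Set.mem_singleton_iff]
      constructor
      · rintro ⟨h1, h2⟩
        rw [mv_chi χ, hinj ((hfib _ _).1 h1)]
      · rintro rfl
        refine ⟨(hfib _ _).2 ?_, ?_⟩
        · simp
        · rw [hφ]; simpa using hp1
    rw [h1, Set.ncard_singleton] at hpar
    have h2 := hpar.1 odd_one
    obtain ⟨χ, hχ1, hχ2⟩ := Set.nonempty_of_ncard_ne_zero (h2.pos.ne')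
    rw [hφ] at hχ2
    exact ⟨_, hχ2.le, (hfib _ _).1 hχ1⟩
  have hcl : IsClosed (evP P '' {p | ∑ i, (p i - p0 i) ^ 2 ≤ ρ1}) := ((isCompact_sq p0 ρ1).image (evP_cont P)).isClosed
  have hfull : Metric.ball (evP P p0) η ⊆ evP P '' {p | ∑ i, (p i - p0 i) ^ 2 ≤ ρ1} := by
    refine Set.Subset.trans ((dense_ne_zero g hg).open_subset_closure_inter Metric.isOpen_ball) ?_
    exact closure_minimal (fun y hy => hgood y hy.1 hy.2) hcl
  refine Filter.mem_of_superset (Metric.ball_mem_nhds _ hη) (hfull.trans ?_)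
  rintro _ ⟨p, hp, rfl⟩
  exact hsub (show _ ≤ ρ2 from le_trans hp hρ.le)
end PartD2

section PartD3
open Polynomial TensorProduct

def VI {σ : Type*} (X : Set (σ → ℝ)) : Ideal (MvPolynomial σ ℝ) where
  carrier := {p | ∀ x ∈ X, MvPolynomial.eval x p = 0}
  zero_mem' _ _ := map_zero _
  add_mem' {p q} hp hq x hx := by simp only [hq x hx, hp x hx, add_zero, map_add]
  smul_mem' p q hq x hx := by simp only [hq x hx, smul_eq_mul, mul_zero, map_mul]

lemma mem_VI {σ : Type*} {X : Set (σ → ℝ)} {p : MvPolynomial σ ℝ} : p ∈ VI X ↔ ∀ x ∈ X, MvPolynomial.eval x p = 0 := Iff.rfl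

lemma maxVI {σ : Type*} [Finite σ] (Q : Set (σ → ℝ) → Prop) (hQ : ∃ X, Q X) :
    ∃ X, Q X ∧ ∀ X', Q X' → VI X ≤ VI X' → VI X' = VI X := by
  obtain ⟨X0, hX0⟩ := hQ
  obtain ⟨I, ⟨X, hX, rfl⟩, hmax⟩ := set_has_maximal_iff_noetherian.2 (inferInstance : IsNoetherian (MvPolynomial σ ℝ) (MvPolynomial σ ℝ))
    {I : Ideal (MvPolynomial σ ℝ) | ∃ X, Q X ∧ VI X = I} ⟨_, X0, hX0, rfl⟩
  refine ⟨X, hX, fun X' hX' hle => ?_⟩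
  by_contra hne
  exact hmax _ ⟨X', hX', rfl⟩ (lt_of_le_of_ne hle (Ne.symm hne))

lemma prime_cut {σ : Type*} [Finite σ] (Y : Set (σ → ℝ)) (hY : Y.Nonempty) :
    ∃ h : MvPolynomial σ ℝ, (VI (Y ∩ {y | MvPolynomial.eval y h ≠ 0})).IsPrime := by
  obtain ⟨X, ⟨hXne, h, rfl⟩, hmax⟩ := maxVI (fun X : Set (σ → ℝ) => X.Nonempty ∧ ∃ h : MvPolynomial σ ℝ, X = Y ∩ {y | MvPolynomial.eval y h ≠ 0})
    ⟨Y, hY, 1, by simp⟩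
  refine ⟨h, ?_, ?_⟩
  · rw [Ideal.ne_top_iff_one]
    intro h1
    obtain ⟨x, hx⟩ := hXne
    have := h1 x hx
    simp at this
  · intro a b hab
    by_contra hcon
    push Not at hcon
    obtain ⟨ha, hb⟩ := hcon
    rw [mem_VI] at ha
    push Not at ha
    obtain ⟨x, hx, hxa⟩ := ha
    have := hmax (Y ∩ {y | MvPolynomial.eval y (h * a) ≠ 0}) ⟨⟨x, hx.1, by
      change MvPolynomial.eval x (h * a) ≠ 0
      rw [map_mul]; exact mul_ne_zero hx.2 hxa⟩, h * a, rfl⟩ (by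
      intro q hq y hy
      apply hq
      refine ⟨hy.1, ?_⟩
      have h2 : MvPolynomial.eval y (h * a) ≠ 0 := hy.2
      rw [map_mul] at h2
      exact left_ne_zero_of_mul h2)
    apply hb
    rw [← this]
    intro y hy
    have h2 : MvPolynomial.eval y (h * a) ≠ 0 := hy.2
    rw [map_mul] at h2
    have h3 := hab y ⟨hy.1, left_ne_zero_of_mul h2⟩
    rw [map_mul] at h3
    exact (mul_eq_zero.1 h3).resolve_left (right_ne_zero_of_mul h2)

/-- points of the quotient ring -/
noncomputable def pt {σ : Type*} (I : Ideal (MvPolynomial σ ℝ)) (z : σ → ℝ) (hz : ∀ p ∈ I, MvPolynomial.eval z p = 0) :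
    (MvPolynomial σ ℝ ⧸ I) →+* ℝ := Ideal.Quotient.lift I (MvPolynomial.eval z) hz

lemma pt_mk {σ : Type*} (I : Ideal (MvPolynomial σ ℝ)) (z : σ → ℝ) (hz : ∀ p ∈ I, MvPolynomial.eval z p = 0) (p : MvPolynomial σ ℝ) :
    pt I z hz (Ideal.Quotient.mk I p) = MvPolynomial.eval z p := rfl

/-- coordinates of a real point of the quotient -/
noncomputable def cpt {σ : Type*} {I : Ideal (MvPolynomial σ ℝ)} (χ : (MvPolynomial σ ℝ ⧸ I) →+* ℝ) : σ → ℝ :=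
  fun i => χ (Ideal.Quotient.mk I (MvPolynomial.X i))

lemma chi_mk {σ : Type*} {I : Ideal (MvPolynomial σ ℝ)} (χ : (MvPolynomial σ ℝ ⧸ I) →+* ℝ) (p : MvPolynomial σ ℝ) :
    χ (Ideal.Quotient.mk I p) = MvPolynomial.eval (cpt χ) p := by
  have := mv_chi (χ.comp (Ideal.Quotient.mk I))
  exact congrArg (fun f : MvPolynomial σ ℝ →+* ℝ => f p) this

lemma cpt_mem {σ : Type*} {I : Ideal (MvPolynomial σ ℝ)} (χ : (MvPolynomial σ ℝ ⧸ I) →+* ℝ) :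
    ∀ p ∈ I, MvPolynomial.eval (cpt χ) p = 0 := by
  intro p hp
  rw [← chi_mk, Ideal.Quotient.eq_zero_iff_mem.2 hp, map_zero]

lemma cpt_inj {σ : Type*} {I : Ideal (MvPolynomial σ ℝ)} {χ χ' : (MvPolynomial σ ℝ ⧸ I) →+* ℝ} (h : cpt χ = cpt χ') : χ = χ' := by
  apply Ideal.Quotient.ringHom_ext
  ext p
  · exact (chi_mk χ _).trans ((by rw [h]) : _ = MvPolynomial.eval (cpt χ') _) |>.trans (chi_mk χ' _).symm
  · exact congrFun h _

lemma cpt_pt {σ : Type*} (I : Ideal (MvPolynomial σ ℝ)) (z : σ → ℝ) (hz : ∀ p ∈ I, MvPolynomial.eval z p = 0) : cpt (pt I z hz) = z := by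
  ext i
  simp [cpt, pt_mk]

lemma quot_adjoin {σ : Type*} (I : Ideal (MvPolynomial σ ℝ)) :
    Algebra.adjoin ℝ (Set.range (fun i : σ => Ideal.Quotient.mk I (MvPolynomial.X i))) = ⊤ := by
  have h := mv_adjoin σ
  have h2 := congrArg (Subalgebra.map (Ideal.Quotient.mkₐ ℝ I)) h
  rw [AlgHom.map_adjoin, ← Set.range_comp, Algebra.map_top] at h2
  rw [(AlgHom.range_eq_top _).2 (Ideal.Quotient.mkₐ_surjective ℝ I)] at h2
  exact h2

lemma adjoin_lift' {T ι : Type*} (S : Type*) [CommRing S] [CommRing T] [Algebra ℝ T] [Algebra S T]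
    (x : ι → T) (hx : Algebra.adjoin ℝ (Set.range x) = ⊤) (hr : ∀ r : ℝ, ∃ s : S, algebraMap S T s = algebraMap ℝ T r) :
    Algebra.adjoin S (Set.range x) = ⊤ := by
  rw [eq_top_iff]
  rintro d -
  have hd : d ∈ Algebra.adjoin ℝ (Set.range x) := by rw [hx]; trivial
  induction hd using Algebra.adjoin_induction with
  | mem y hy => exact Algebra.subset_adjoin hy
  | algebraMap r =>
    obtain ⟨s, hs⟩ := hr r
    rw [← hs]; exact Subalgebra.algebraMap_mem _ _
  | add a b _ _ ha hb => exact add_mem ha hb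
  | mul a b _ _ ha hb => exact mul_mem ha hb

lemma quot_charZero {σ : Type*} (I : Ideal (MvPolynomial σ ℝ)) [I.IsPrime] : CharZero (MvPolynomial σ ℝ ⧸ I) :=
  charZero_of_injective_algebraMap (algebraMap ℝ (MvPolynomial σ ℝ ⧸ I)).injective

set_option maxHeartbeats 2000000 in
theorem not_dense {σ τ : Type*} [Fintype σ] [Fintype τ] (P : τ → MvPolynomial σ ℝ) (hinj : Function.Injective (evP P))
    (Y : Set (τ → ℝ)) (hY : ∀ x, evP P x ∉ Y) (hp : (VI Y).IsPrime) :
    ∃ h2, h2 ∉ VI Y ∧ ∀ x, (∀ p ∈ VI Y, MvPolynomial.eval (evP P x) p = 0) → MvPolynomial.eval (evP P x) h2 = 0 := by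
  by_contra hcon
  push Not at hcon
  have hcomp : ∀ (q : MvPolynomial τ ℝ) x, MvPolynomial.eval x (MvPolynomial.aeval P q) = MvPolynomial.eval (evP P x) q :=
    fun q x => chi_aeval (MvPolynomial.eval x) P q
  obtain ⟨X1, hX1, hmax⟩ := maxVI (fun X : Set (σ → ℝ) => VI (evP P '' X) = VI Y)
    ⟨{x | ∀ p ∈ VI Y, MvPolynomial.eval (evP P x) p = 0}, by
      apply le_antisymm
      · intro q hq
        by_contra hq2
        obtain ⟨x, hx, hx2⟩ := hcon q hq2
        exact hx2 (hq _ ⟨x, hx, rfl⟩)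
      · rintro q hq _ ⟨x, hx, rfl⟩
        exact hx q hq⟩
  have hmemI : ∀ q, MvPolynomial.aeval P q ∈ VI X1 ↔ q ∈ VI Y := by
    intro q
    rw [← hX1]
    constructor
    · rintro h _ ⟨x, hx, rfl⟩
      rw [← hcomp]; exact h x hx
    · intro h x hx
      rw [hcomp]; exact h _ ⟨x, hx, rfl⟩
  have hprime : (VI X1).IsPrime := by
    constructor
    · rw [Ideal.ne_top_iff_one, ← map_one (MvPolynomial.aeval (R := ℝ) P), hmemI, ← Ideal.ne_top_iff_one]
      exact hp.ne_top
    · have key : ∀ a, a ∉ VI X1 → ∃ q, q ∉ VI Y ∧ q ∈ VI (evP P '' (X1 ∩ {x | MvPolynomial.eval x a = 0})) := by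
        intro a ha
        by_contra hno
        push Not at hno
        have h1 : VI (evP P '' (X1 ∩ {x | MvPolynomial.eval x a = 0})) = VI Y := by
          apply le_antisymm
          · intro q hq
            by_contra hq2
            exact hno q hq2 hq
          · rw [← hX1]
            rintro q hq _ ⟨x, hx, rfl⟩
            exact hq _ ⟨x, hx.1, rfl⟩
        have h2 := hmax _ h1 (fun q hq x hx => hq x hx.1)
        apply ha
        rw [← h2]
        exact fun x hx => hx.2
      intro a b hab
      by_contra hc
      push Not at hc
      obtain ⟨q, hq, hq1⟩ := key a hc.1
      obtain ⟨q', hq', hq1'⟩ := key b hc.2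
      have : q * q' ∈ VI Y := by
        rw [← hX1]
        rintro _ ⟨x, hx, rfl⟩
        rw [map_mul]
        have h3 := hab x hx
        rw [map_mul] at h3
        rcases mul_eq_zero.1 h3 with h3 | h3
        · rw [hq1 _ ⟨x, ⟨hx, h3⟩, rfl⟩, zero_mul]
        · rw [hq1' _ ⟨x, ⟨hx, h3⟩, rfl⟩, mul_zero]
      rcases hp.mem_or_mem this with h | h
      · exact hq h
      · exact hq' h
  obtain ⟨I, hI⟩ : ∃ I, I = VI X1 := ⟨_, rfl⟩
  obtain ⟨J, hJ⟩ : ∃ J, J = VI Y := ⟨_, rfl⟩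
  rw [← hI, ← hJ] at hmemI
  haveI : I.IsPrime := hI ▸ hprime
  haveI : J.IsPrime := hJ ▸ hp
  have hXI : ∀ x ∈ X1, ∀ p ∈ I, MvPolynomial.eval x p = 0 := fun x hx p hp => by rw [hI] at hp; exact hp x hx
  have hYJ : ∀ x ∈ Y, ∀ p ∈ J, MvPolynomial.eval x p = 0 := fun x hx p hp => by rw [hJ] at hp; exact hp x hx
  have hXJ : ∀ x ∈ X1, ∀ p ∈ J, MvPolynomial.eval (evP P x) p = 0 := by
    intro x hx p hp
    rw [← hcomp]; exact hXI x hx _ ((hmemI p).2 hp)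
  letI : Algebra (MvPolynomial τ ℝ ⧸ J) (MvPolynomial σ ℝ ⧸ I) :=
    (Ideal.Quotient.lift J ((Ideal.Quotient.mk I).comp (MvPolynomial.aeval P).toRingHom)
      (fun q hq => Ideal.Quotient.eq_zero_iff_mem.2 ((hmemI q).2 hq))).toAlgebra
  have hmap : ∀ q, algebraMap (MvPolynomial τ ℝ ⧸ J) (MvPolynomial σ ℝ ⧸ I) (Ideal.Quotient.mk J q) = Ideal.Quotient.mk I (MvPolynomial.aeval P q) :=
    fun q => rfl
  haveI : CharZero (MvPolynomial τ ℝ ⧸ J) := quot_charZero J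
  have hadj := quot_adjoin I
  have hinj2 : ∀ χ χ' : (MvPolynomial σ ℝ ⧸ I) →+* ℝ, evP P (cpt χ) = evP P (cpt χ') → χ = χ' :=
    fun χ χ' h => cpt_inj (hinj h)
  have halgA := algA (fun i : σ => Ideal.Quotient.mk I (MvPolynomial.X i)) hadj (by
      intro d hd
      obtain ⟨p, rfl⟩ := Ideal.Quotient.mk_surjective d
      have hpI : p ∉ I := fun h => hd (Ideal.Quotient.eq_zero_iff_mem.2 h)
      have : ∃ x ∈ X1, MvPolynomial.eval x p ≠ 0 := by
        by_contra hc; push Not at hc; rw [hI] at hpI; exact hpI hc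
      obtain ⟨x, hx, hxp⟩ := this
      exact ⟨pt I x (hXI x hx), hxp⟩) (fun j : τ => Ideal.Quotient.mk I (P j)) (by
      intro χ χ' h
      apply hinj2
      ext j
      have := h j
      rwa [chi_mk, chi_mk] at this)
  have hxs : ∀ k, IsAlgebraic (MvPolynomial τ ℝ ⧸ J) (Ideal.Quotient.mk I (MvPolynomial.X k)) := by
    intro k
    obtain ⟨p, hp, hp0⟩ := alg_lift _ _ (halgA (Ideal.Quotient.mk I (MvPolynomial.X k)))
    have hh : (algebraMap (MvPolynomial τ ℝ ⧸ J) (MvPolynomial σ ℝ ⧸ I)).comp (Ideal.Quotient.mk J) =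
       (MvPolynomial.aeval (fun j : τ => Ideal.Quotient.mk I (P j))).toRingHom := by
      apply MvPolynomial.ringHom_ext
      · intro r; simp [hmap]; rfl
      · intro i; simp [hmap]
    refine ⟨p.map (Ideal.Quotient.mk J), ?_, ?_⟩
    · intro h0
      apply hp
      rw [← hh, ← Polynomial.map_map, h0, Polynomial.map_zero]
    · rw [aeval_def, eval₂_map, hh]; exact hp0
  obtain ⟨g, hg, M, H⟩ := MM_domain _ (adjoin_lift' (MvPolynomial τ ℝ ⧸ J) _ hadj fun r => ⟨Ideal.Quotient.mk J (MvPolynomial.C r), by rw [hmap]; simp; rfl⟩) hxs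
  obtain ⟨g', rfl⟩ := Ideal.Quotient.mk_surjective g
  have hg' : g' ∉ VI Y := fun h => hg (Ideal.Quotient.eq_zero_iff_mem.2 (hJ ▸ h))
  have hfib : ∀ (y : τ → ℝ) (hy : ∀ p ∈ J, MvPolynomial.eval y p = 0) (χ : (MvPolynomial σ ℝ ⧸ I) →+* ℝ),
      χ ∈ Fib (MvPolynomial σ ℝ ⧸ I) (pt J y hy) ↔ evP P (cpt χ) = y := by
    intro y hy χ
    constructor
    · intro h
      ext j
      have := congrArg (fun f : (MvPolynomial τ ℝ ⧸ J) →+* ℝ => f (Ideal.Quotient.mk J (MvPolynomial.X j))) h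
      simp only [RingHom.comp_apply, hmap, chi_mk, cpt_pt, hcomp, MvPolynomial.eval_X] at this
      exact this
    · intro h
      change χ.comp _ = _
      apply Ideal.Quotient.ringHom_ext
      apply RingHom.ext
      intro p
      simp only [RingHom.comp_apply, hmap, chi_mk, cpt_pt, hcomp, h]
  have heven : ¬ Odd M := by
    have : ∃ y ∈ Y, MvPolynomial.eval y g' ≠ 0 := by
      by_contra hc; push Not at hc; exact hg' hc
    obtain ⟨y, hy, hyg⟩ := this
    have h1 := (H.1 (pt J y (hYJ y hy)) hyg).2
    have h2 : Fib (MvPolynomial σ ℝ ⧸ I) (pt J y (hYJ y hy)) = ∅ := by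
      ext χ
      simp only [hfib, Set.mem_empty_iff_false, iff_false]
      intro h
      exact hY _ (h ▸ hy)
    rw [h2] at h1
    simpa using h1
  apply heven
  have : ∃ x ∈ X1, MvPolynomial.eval (evP P x) g' ≠ 0 := by
    by_contra hc; push Not at hc
    apply hg'
    rw [← hX1]
    rintro _ ⟨x, hx, rfl⟩
    exact hc x hx
  obtain ⟨x, hx, hxg⟩ := this
  have h1 := (H.1 (pt J (evP P x) (hXJ x hx)) hxg).2
  have h2 : Fib (MvPolynomial σ ℝ ⧸ I) (pt J (evP P x) (hXJ x hx)) = {pt I x (hXI x hx)} := by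
    ext χ
    simp only [hfib, Set.mem_singleton_iff]
    constructor
    · intro h
      apply hinj2
      rw [h, cpt_pt]
    · rintro rfl
      rw [cpt_pt]
  rw [h2, Set.ncard_singleton] at h1
  exact h1.1 odd_one
end PartD3

section PartD4
open Polynomial TensorProduct

theorem IFTL {ι K : Type*} [Fintype ι] [Fintype K] (Ψ : (ι → ℝ) × (K → ℝ) → (K → ℝ)) (hΨ : ContDiff ℝ 1 Ψ)
    (e0 : ι → ℝ) (a : K → ℝ) (q : K → ℝ → ℝ) (d : K → ℝ) (hq : ∀ x k, Ψ (e0, x) k = q k (x k))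
    (hd : ∀ k, HasDerivAt (q k) (d k) (a k)) (hd0 : ∀ k, d k ≠ 0) (h0 : Ψ (e0, a) = 0) :
    (∃ O ∈ nhds (e0, a), ∀ e x x', (e, x) ∈ O → (e, x') ∈ O → Ψ (e, x) = Ψ (e, x') → x = x') ∧
    ∀ U ∈ nhds a, ∀ᶠ e in nhds e0, ∃ x ∈ U, Ψ (e, x) = 0 := by
  classical
  let Φ : (ι → ℝ) × (K → ℝ) → (ι → ℝ) × (K → ℝ) := fun p => (p.1, Ψ p)
  have hΦ : ContDiff ℝ 1 Φ := contDiff_fst.prodMk hΨ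
  have hs : HasStrictFDerivAt Φ (fderiv ℝ Φ (e0, a)) (e0, a) := hΦ.contDiffAt.hasStrictFDerivAt one_ne_zero
  have hfd : HasFDerivAt Φ (fderiv ℝ Φ (e0, a)) (e0, a) := hs.hasFDerivAt
  have h1 : (ContinuousLinearMap.fst ℝ _ _).comp (fderiv ℝ Φ (e0, a)) = ContinuousLinearMap.fst ℝ (ι → ℝ) (K → ℝ) := by
    have := hfd.fst
    exact this.unique hasFDerivAt_fst
  have h2 : ∀ k y, (fderiv ℝ Φ (e0, a) (0, y)).2 k = d k * y k := by
    intro k y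
    have hline : HasDerivAt (fun t : ℝ => ((e0, a + t • y) : (ι → ℝ) × (K → ℝ))) (0, y) 0 := by
      apply HasDerivAt.prodMk
      · exact hasDerivAt_const _ _
      · simpa using ((hasDerivAt_id (0 : ℝ)).smul_const y).const_add a
    have hA : HasDerivAt (fun t : ℝ => Φ (e0, a + t • y)) (fderiv ℝ Φ (e0, a) (0, y)) 0 := by
      have hfd' : HasFDerivAt Φ (fderiv ℝ Φ (e0, a)) ((fun t : ℝ => ((e0, a + t • y) : (ι → ℝ) × (K → ℝ))) 0) := by
        simpa using hfd
      exact hfd'.comp_hasDerivAt 0 hline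
    have hB : HasDerivAt (fun t : ℝ => (Φ (e0, a + t • y)).2 k) ((fderiv ℝ Φ (e0, a) (0, y)).2 k) 0 := by
      exact (hasDerivAt_pi.1 ((hasFDerivAt_snd (𝕜 := ℝ) (E := ι → ℝ) (F := K → ℝ)).comp_hasDerivAt 0 hA)) k
    have hC : HasDerivAt (fun t : ℝ => (Φ (e0, a + t • y)).2 k) (d k * y k) 0 := by
      have he : (fun t : ℝ => (Φ (e0, a + t • y)).2 k) = fun t => q k (a k + t * y k) := by
        ext t
        simp [Φ, hq]
      rw [he]
      have hl : HasDerivAt (fun t : ℝ => a k + t * y k) (y k) 0 := by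
        simpa using ((hasDerivAt_id (0 : ℝ)).mul_const (y k)).const_add (a k)
      have := hd k
      have h3 : HasDerivAt (q k) (d k) ((fun t : ℝ => a k + t * y k) 0) := by simpa using this
      exact h3.comp 0 hl
    exact hB.unique hC
  have hinj : Function.Injective (fderiv ℝ Φ (e0, a)).toLinearMap := by
    rw [← LinearMap.ker_eq_bot, LinearMap.ker_eq_bot']
    rintro ⟨u, y⟩ h
    have hu : u = 0 := by
      have := congrArg (fun L => L (u, y)) h1
      simp only [ContinuousLinearMap.comp_apply, ContinuousLinearMap.coe_fst'] at this
      rw [← this]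
      change (fderiv ℝ Φ (e0, a) (u, y)).1 = 0
      exact congrArg Prod.fst h
    subst hu
    have hy : y = 0 := by
      ext k
      have := h2 k y
      have h4 : fderiv ℝ Φ (e0, a) (0, y) = 0 := h
      rw [h4] at this
      have h5 : d k * y k = 0 := by simpa using this.symm
      exact (mul_eq_zero.1 h5).resolve_left (hd0 k)
    rw [hy]; rfl
  let e : ((ι → ℝ) × (K → ℝ)) ≃L[ℝ] ((ι → ℝ) × (K → ℝ)) := (LinearEquiv.ofInjectiveEndo _ hinj).toContinuousLinearEquiv
  have he : (e : ((ι → ℝ) × (K → ℝ)) →L[ℝ] ((ι → ℝ) × (K → ℝ))) = fderiv ℝ Φ (e0, a) := by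
    ext v <;> rfl
  rw [← he] at hs
  let H := hs.toOpenPartialHomeomorph Φ
  have hsrc : (e0, a) ∈ H.source := hs.mem_toOpenPartialHomeomorph_source
  have hco : (H : _ → _) = Φ := hs.toOpenPartialHomeomorph_coe
  constructor
  · refine ⟨H.source, H.open_source.mem_nhds hsrc, ?_⟩
    intro e x x' hx hx' hxx
    have : H (e, x) = H (e, x') := by
      rw [hco]; exact Prod.ext rfl hxx
    exact (Prod.ext_iff.1 (H.injOn hx hx' this)).2
  · intro U hU
    have hm : Filter.map Φ (nhds (e0, a)) = nhds (Φ (e0, a)) := hs.map_nhds_eq_of_equiv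
    have hV : (Set.univ ×ˢ U : Set ((ι → ℝ) × (K → ℝ))) ∈ nhds (e0, a) := by
      rw [nhds_prod_eq]; exact Filter.prod_mem_prod Filter.univ_mem hU
    have hI := Filter.image_mem_map (m := Φ) hV
    rw [hm] at hI
    have hc : Filter.Tendsto (fun e : ι → ℝ => ((e, 0) : (ι → ℝ) × (K → ℝ))) (nhds e0) (nhds (Φ (e0, a))) := by
      have : Φ (e0, a) = (e0, 0) := by simp [Φ, h0]
      rw [this]
      have hcc : Continuous (fun e : ι → ℝ => ((e, 0) : (ι → ℝ) × (K → ℝ))) := by fun_prop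
      exact hcc.tendsto e0
    filter_upwards [hc hI] with e he
    obtain ⟨⟨e', x⟩, hx, hxe⟩ := he
    have h3 := congrArg Prod.fst hxe
    have h4 := congrArg Prod.snd hxe
    simp only [Φ] at h3 h4
    subst h3
    exact ⟨x, hx.2, h4⟩
end PartD4

section PartD5
open Polynomial TensorProduct

lemma contDiff_mv {σ E : Type*} [NormedAddCommGroup E] [NormedSpace ℝ E] (p : MvPolynomial σ ℝ)
    (f : σ → E → ℝ) (hf : ∀ i, ContDiff ℝ 1 (f i)) :
    ContDiff ℝ 1 fun e => MvPolynomial.eval (fun i => f i e) p := by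
  induction p using MvPolynomial.induction_on with
  | C a => simpa using contDiff_const
  | add p q hp hq => simpa using hp.add hq
  | mul_X p i hp => simpa using hp.mul (hf i)

lemma contDiff_rmap {σ E : Type*} [NormedAddCommGroup E] [NormedSpace ℝ E] (r : (MvPolynomial σ ℝ)[X])
    (f : σ → E → ℝ) (hf : ∀ i, ContDiff ℝ 1 (f i)) (g : E → ℝ) (hg : ContDiff ℝ 1 g) :
    ContDiff ℝ 1 fun e => (r.map (MvPolynomial.eval fun i => f i e)).eval (g e) := by
  induction r using Polynomial.induction_on' with
  | add p q hp hq => simpa using hp.add hq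
  | monomial k a =>
    simpa using (contDiff_mv a f hf).mul (hg.pow k)

lemma transB {τ : Type} [Finite τ] (I : Ideal (MvPolynomial τ ℝ)) [I.IsPrime] :
    ∃ J : Set τ, IsTranscendenceBasis ℝ (fun i : J => Ideal.Quotient.mk I (MvPolynomial.X i.1)) := by
  have hadj := quot_adjoin I
  have : Algebra.IsAlgebraic (Algebra.adjoin ℝ (Set.range fun i => Ideal.Quotient.mk I (MvPolynomial.X i)))
      (MvPolynomial τ ℝ ⧸ I) := by
    constructor
    intro a
    have ha : a ∈ Algebra.adjoin ℝ (Set.range fun i => Ideal.Quotient.mk I (MvPolynomial.X i)) := by rw [hadj]; trivial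
    exact isAlgebraic_algebraMap (⟨a, ha⟩ : Algebra.adjoin ℝ (Set.range fun i => Ideal.Quotient.mk I (MvPolynomial.X i)))
  have : FaithfulSMul ℝ (MvPolynomial τ ℝ ⧸ I) :=
    (faithfulSMul_iff_algebraMap_injective ℝ _).2 (algebraMap ℝ (MvPolynomial τ ℝ ⧸ I)).injective
  obtain ⟨u, hu, hb⟩ := exists_isTranscendenceBasis_subset (R := ℝ) (Set.range fun i => Ideal.Quotient.mk I (MvPolynomial.X (R := ℝ) i))
  choose s hs using fun a : u => hu a.2
  have hsi : Function.Injective s := by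
    intro a b hab
    apply Subtype.ext
    rw [← hs a, ← hs b, hab]
  refine ⟨Set.range s, ?_⟩
  let e := Equiv.ofInjective s hsi
  have : (fun i : Set.range s => Ideal.Quotient.mk I (MvPolynomial.X (R := ℝ) i.1)) = (Subtype.val : u → _) ∘ e.symm := by
    funext i
    obtain ⟨a, rfl⟩ := e.surjective i
    simp only [Function.comp, Equiv.symm_apply_apply]
    exact hs a
  rw [this]
  exact hb.comp_equiv e.symm

theorem LOCV {τ : Type} [Fintype τ] (Y : Set (τ → ℝ)) (hp : (VI Y).IsPrime) :
    ∃ (J : Set τ) (r : {k // k ∉ J} → (MvPolynomial J ℝ)[X]) (y0 : τ → ℝ), y0 ∈ Y ∧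
      IsTranscendenceBasis ℝ (fun i : J => Ideal.Quotient.mk (VI Y) (MvPolynomial.X i.1)) ∧
      (∀ k, (derivative ((r k).map (MvPolynomial.eval fun j : J => y0 j))).eval (y0 k) ≠ 0) ∧
      (∀ k, ((r k).map (MvPolynomial.eval fun j : J => y0 j)).eval (y0 k) = 0) ∧
      ∀ᶠ y in nhds y0, ((∀ p ∈ VI Y, MvPolynomial.eval y p = 0) ↔
        ∀ k, ((r k).map (MvPolynomial.eval fun j : J => y j)).eval (y k) = 0) := by
  classical
  have hY : ∀ y ∈ Y, ∀ p ∈ VI Y, MvPolynomial.eval y p = 0 := fun y hy p hp => hp y hy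
  have hgen : ∀ q, q ∉ VI Y → ∃ y ∈ Y, MvPolynomial.eval y q ≠ 0 := by
    intro q hq
    by_contra hc
    push Not at hc
    exact hq hc
  obtain ⟨I, hI⟩ : ∃ I, I = VI Y := ⟨_, rfl⟩
  rw [← hI] at hp hY hgen ⊢
  clear hI
  obtain ⟨J, hJ⟩ := transB I
  letI algS : Algebra (MvPolynomial J ℝ) (MvPolynomial τ ℝ ⧸ I) :=
    (MvPolynomial.aeval (fun i : J => Ideal.Quotient.mk I (MvPolynomial.X i.1))).toRingHom.toAlgebra
  have hmap : ∀ q : MvPolynomial J ℝ, algebraMap (MvPolynomial J ℝ) (MvPolynomial τ ℝ ⧸ I) q =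
    MvPolynomial.aeval (fun i : J => Ideal.Quotient.mk I (MvPolynomial.X i.1)) q := fun q => rfl
  have halg : ∀ d : MvPolynomial τ ℝ ⧸ I, IsAlgebraic (MvPolynomial J ℝ) d := by
    intro d
    have h1 := hJ.isAlgebraic
    obtain ⟨p, hp1, hp2⟩ := alg_lift (fun i : J => Ideal.Quotient.mk I (MvPolynomial.X (R := ℝ) i.1)) d (h1.isAlgebraic d)
    refine ⟨p, ?_, hp2⟩
    rintro rfl
    exact hp1 (Polynomial.map_zero _)
  have := quot_charZero I
  have hx : Algebra.adjoin (MvPolynomial J ℝ) (Set.range fun i => Ideal.Quotient.mk I (MvPolynomial.X i)) = ⊤ := by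
    apply adjoin_lift' _ _ (quot_adjoin I)
    intro s
    refine ⟨MvPolynomial.C s, ?_⟩
    rw [hmap, MvPolynomial.aeval_C]
  obtain ⟨g, hg, M, hM⟩ := MM_domain (S := MvPolynomial J ℝ) (fun i => Ideal.Quotient.mk I (MvPolynomial.X i)) hx
    (fun k => halg _)
  have hsep : ∀ k : {k // k ∉ J}, SepData (S := MvPolynomial J ℝ) (fun a => a ≠ 0) (Ideal.Quotient.mk I (MvPolynomial.X k.1)) :=
    fun k => sep_of_alg _ (halg _)
  choose r u v a ha huv hr using hsep
  have hq : g * ∏ k, a k ≠ 0 := mul_ne_zero hg (Finset.prod_ne_zero_iff.2 fun k _ => ha k)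
  have hren : ∀ q : MvPolynomial J ℝ, algebraMap (MvPolynomial J ℝ) (MvPolynomial τ ℝ ⧸ I) q = Ideal.Quotient.mk I (MvPolynomial.rename Subtype.val q) := by
    intro q
    rw [hmap]
    induction q using MvPolynomial.induction_on with
    | C a => rw [MvPolynomial.aeval_C, MvPolynomial.rename_C]; rfl
    | add p q hp hq => rw [map_add, hp, hq, map_add, map_add]
    | mul_X p i hp => rw [map_mul, hp, map_mul, map_mul, MvPolynomial.aeval_X, MvPolynomial.rename_X]
  obtain ⟨y0, hy0, hy0'⟩ := hgen (MvPolynomial.rename Subtype.val (g * ∏ k, a k)) (by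
    intro hmem
    apply hq
    have h1 : algebraMap (MvPolynomial J ℝ) (MvPolynomial τ ℝ ⧸ I) (g * ∏ k, a k) = 0 := by
      rw [hren]; exact Ideal.Quotient.eq_zero_iff_mem.2 hmem
    rw [hmap] at h1
    exact (injective_iff_map_eq_zero _).1 hJ.1 _ h1)
  rw [MvPolynomial.eval_rename, map_mul, map_prod] at hy0'
  have hg0 : MvPolynomial.eval (fun j : J => y0 j) g ≠ 0 := left_ne_zero_of_mul hy0'
  have ha0 : ∀ k, MvPolynomial.eval (fun j : J => y0 j) (a k) ≠ 0 := fun k =>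
    Finset.prod_ne_zero_iff.1 (right_ne_zero_of_mul hy0') k (Finset.mem_univ _)
  have hfibmem : ∀ χ : (MvPolynomial τ ℝ ⧸ I) →+* ℝ, χ ∈ Fib (MvPolynomial τ ℝ ⧸ I) (MvPolynomial.eval fun j : J => cpt χ j) := by
    intro χ
    ext q
    · simp only [RingHom.comp_apply]
      rw [hren, chi_mk, MvPolynomial.eval_rename]; rfl
    · simp only [RingHom.comp_apply]
      rw [hren, chi_mk, MvPolynomial.eval_rename]; rfl
  have hVr : ∀ χ : (MvPolynomial τ ℝ ⧸ I) →+* ℝ, ∀ k, ((r k).map (MvPolynomial.eval fun j : J => cpt χ j)).eval (cpt χ k) = 0 := by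
    intro χ k
    have h1 := congrArg χ (hr k)
    rw [map_zero, aeval_def, Polynomial.hom_eval₂] at h1
    have h2 := hfibmem χ
    rw [Fib, Set.mem_setOf_eq] at h2
    rw [h2, chi_mk, MvPolynomial.eval_X] at h1
    rw [Polynomial.eval_map]; exact h1
  have hVr' : ∀ y, (∀ p ∈ I, MvPolynomial.eval y p = 0) → ∀ k, ((r k).map (MvPolynomial.eval fun j : J => y j)).eval (y k) = 0 := by
    intro y hy k
    have := hVr (pt I y hy) k
    rwa [cpt_pt] at this
  have hder : ∀ k, (derivative ((r k).map (MvPolynomial.eval fun j : J => y0 j))).eval (y0 k) ≠ 0 := by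
    intro k h0
    have h1 := congrArg (fun p => (p.map (MvPolynomial.eval fun j : J => y0 j)).eval (y0 k)) (huv k)
    simp only [Polynomial.map_add, Polynomial.map_mul, Polynomial.eval_add, Polynomial.eval_mul, ← Polynomial.derivative_map,
      h0, hVr' y0 (hY y0 hy0) k, Polynomial.map_C, Polynomial.eval_C, mul_zero, add_zero] at h1
    exact ha0 k h1.symm
  refine ⟨J, r, y0, hy0, hJ, hder, hVr' y0 (hY y0 hy0), ?_⟩
  obtain ⟨⟨O, hO, hOinj⟩, -⟩ := IFTL (ι := J) (K := {k // k ∉ J})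
    (fun p k => ((r k).map (MvPolynomial.eval fun j : J => p.1 j)).eval (p.2 k))
    (by
      rw [contDiff_pi]
      intro k
      exact contDiff_rmap (r k) (fun j (p : (J → ℝ) × ({k // k ∉ J} → ℝ)) => p.1 j) (fun j => by fun_prop) (fun p => p.2 k) (by fun_prop))
    (fun j => y0 j) (fun k => y0 k) (fun k t => ((r k).map (MvPolynomial.eval fun j : J => y0 j)).eval t)
    (fun k => (derivative ((r k).map (MvPolynomial.eval fun j : J => y0 j))).eval (y0 k)) (fun x k => rfl)
    (fun k => Polynomial.hasDerivAt _ _) hder (funext fun k => hVr' y0 (hY y0 hy0) k)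
  have hjoin : Continuous fun y : τ → ℝ => (((fun j => y j), (fun k => y k)) : (J → ℝ) × ({k // k ∉ J} → ℝ)) := by fun_prop
  have hO1 : ∀ᶠ y in nhds y0, (((fun j => y j), (fun k => y k)) : (J → ℝ) × ({k // k ∉ J} → ℝ)) ∈ O :=
    hjoin.continuousAt.preimage_mem_nhds hO
  obtain ⟨δ, hδ, hδ2⟩ := sq_subset y0 hO1
  have hL := LL _ hx hM (fun j => y0 j) hg0 (pt I y0 (hY y0 hy0)) (by
    have := hfibmem (pt I y0 (hY y0 hy0))
    rwa [cpt_pt] at this) δ hδ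
  have hres : Continuous fun y : τ → ℝ => fun j : J => y j := by fun_prop
  filter_upwards [hO1, hres.continuousAt.eventually hL] with y h1 h2
  refine ⟨hVr' y, fun h3 => ?_⟩
  obtain ⟨χ, hχ, hχ2⟩ := h2
  have hj : (fun j : J => cpt χ j) = fun j : J => y j := by
    funext j
    have e1 := fib_C hχ (MvPolynomial.X j)
    rw [MvPolynomial.eval_X, hren, MvPolynomial.rename_X] at e1
    exact e1
  have h4 : cpt χ ∈ {y : τ → ℝ | (((fun j => y j), (fun k => y k)) : (J → ℝ) × ({k // k ∉ J} → ℝ)) ∈ O} := by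
    apply hδ2
    have : ∀ k, pt I y0 (hY y0 hy0) (Ideal.Quotient.mk I (MvPolynomial.X k)) = y0 k := by
      intro k; rw [pt_mk, MvPolynomial.eval_X]
    simp only [this] at hχ2
    exact hχ2.le
  have h5 := hOinj _ _ _ (by rw [← hj]; exact h4) h1 (by
    funext k
    simp only []
    rw [h3 k, ← hj]
    exact hVr χ k)
  have h6 : cpt χ = y := by
    funext i
    by_cases hi : i ∈ J
    · exact congrFun hj ⟨i, hi⟩
    · exact congrFun h5 ⟨i, hi⟩
  rw [← h6]
  exact cpt_mem χ
end PartD5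

section PartD6
open Polynomial TensorProduct

lemma alg_card {T ι κ : Type} [CommRing T] [IsDomain T] [Algebra ℝ T] [Fintype ι] [Fintype κ] (b : ι → T)
    (hb : IsTranscendenceBasis ℝ b) (hc : Fintype.card ι ≤ Fintype.card κ) (v : κ → T) (d : T) :
    ∃ p : (MvPolynomial κ ℝ)[X], p ≠ 0 ∧ p.eval₂ (MvPolynomial.aeval v).toRingHom d = 0 := by
  by_cases hv : AlgebraicIndependent ℝ v
  · have h1 : IsTranscendenceBasis ℝ v := by
      apply hv.isTranscendenceBasis_of_trdeg_le_of_finite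
      rw [← hb.cardinalMk_eq_trdeg]
      simpa using hc
    obtain ⟨p, hp1, hp2⟩ := alg_lift v d (h1.isAlgebraic.isAlgebraic d)
    refine ⟨p, ?_, hp2⟩
    rintro rfl
    exact hp1 (Polynomial.map_zero _)
  · rw [AlgebraicIndependent, injective_iff_map_eq_zero] at hv
    push Not at hv
    obtain ⟨q, hq, hq0⟩ := hv
    refine ⟨C q, by simpa using hq0, ?_⟩
    rw [eval₂_C]; exact hq

theorem PARX {A τ K ι : Type} [CommRing A] [IsDomain A] [Algebra ℝ A] [Fintype τ] [Fintype K] [Fintype ι]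
    (y : τ → A) (hy : Algebra.adjoin ℝ (Set.range y) = ⊤) (b : ι → A) (hb : IsTranscendenceBasis ℝ b)
    (hcard : Fintype.card K + Fintype.card ι = Fintype.card τ) (f : τ → MvPolynomial (Option K) ℝ) (h2 : A) (h20 : h2 ≠ 0)
    (a : K → ℝ) :
    ∃ g : MvPolynomial (Option τ) ℝ, g ≠ 0 ∧
      (∀ w, MvPolynomial.eval w g ≠ 0 → ∀ (ψ : A →+* ℝ) (x : K → ℝ),
        (∀ i, ψ (y i) = MvPolynomial.eval (fun o : Option K => o.elim (w none) x) (f i) + w (some i)) → ψ h2 ≠ 0) ∧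
      ∀ w0 w1, MvPolynomial.eval w0 g ≠ 0 → MvPolynomial.eval w1 g ≠ 0 → ∀ ρ1 ρ2 : ℝ, 0 < ρ1 → ρ1 < ρ2 →
        (∀ t ∈ Set.Icc (0 : ℝ) 1, ∀ (ψ : A →+* ℝ) (x : K → ℝ),
          (∀ i, ψ (y i) = MvPolynomial.eval (fun o : Option K => o.elim ((w0 + t • (w1 - w0)) none) x) (f i) + (w0 + t • (w1 - w0)) (some i)) →
          (∑ k, (x k - a k) ^ 2 < ρ1 ∨ ρ2 < ∑ k, (x k - a k) ^ 2)) →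
        (Odd {x : K → ℝ | (∃ ψ : A →+* ℝ, ∀ i, ψ (y i) = MvPolynomial.eval (fun o : Option K => o.elim (w0 none) x) (f i) + w0 (some i)) ∧ 
            ∑ k, (x k - a k) ^ 2 < ρ1}.ncard ↔
         Odd {x : K → ℝ | (∃ ψ : A →+* ℝ, ∀ i, ψ (y i) = MvPolynomial.eval (fun o : Option K => o.elim (w1 none) x) (f i) + w1 (some i)) ∧ 
            ∑ k, (x k - a k) ^ 2 < ρ1}.ncard) := by
  classical
  obtain ⟨T, hT⟩ : ∃ T, T = MvPolynomial (Option K) A := ⟨_, rfl⟩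
  let vv : Option τ → MvPolynomial (Option K) A := fun o => o.elim (MvPolynomial.X none)
    (fun i => MvPolynomial.C (y i) - MvPolynomial.aeval (fun k => (MvPolynomial.X k : MvPolynomial (Option K) A)) (f i))
  letI algS : Algebra (MvPolynomial (Option τ) ℝ) (MvPolynomial (Option K) A) := (MvPolynomial.aeval vv).toRingHom.toAlgebra
  have hmap : ∀ q : MvPolynomial (Option τ) ℝ, algebraMap (MvPolynomial (Option τ) ℝ) (MvPolynomial (Option K) A) q = MvPolynomial.aeval vv q :=
    fun q => rfl
  have hbT := hb.sumElim_comp (IsTranscendenceBasis.mvPolynomial (Option K) A)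
  have halg : ∀ d : MvPolynomial (Option K) A, IsAlgebraic (MvPolynomial (Option τ) ℝ) d := by
    intro d
    obtain ⟨p, hp, hp2⟩ := alg_card _ hbT (κ := Option τ) (by simp; omega) vv d
    exact ⟨p, hp, hp2⟩
  let gen : Option K ⊕ τ → MvPolynomial (Option K) A := Sum.elim MvPolynomial.X (fun i => MvPolynomial.C (y i))
  have hgen : Algebra.adjoin ℝ (Set.range gen) = ⊤ := by
    rw [eq_top_iff]
    rintro d -
    induction d using MvPolynomial.induction_on with
    | C c =>
      have hc : c ∈ Algebra.adjoin ℝ (Set.range y) := by rw [hy]; trivial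
      induction hc using Algebra.adjoin_induction with
      | mem z hz =>
        obtain ⟨i, rfl⟩ := hz
        exact Algebra.subset_adjoin ⟨Sum.inr i, rfl⟩
      | algebraMap r => exact Subalgebra.algebraMap_mem (Algebra.adjoin ℝ (Set.range gen)) r
      | add a b _ _ ha hb => rw [map_add]; exact add_mem ha hb
      | mul a b _ _ ha hb => rw [map_mul]; exact mul_mem ha hb
    | add p q hp hq => exact add_mem hp hq
    | mul_X p i hp => exact mul_mem hp (Algebra.subset_adjoin ⟨Sum.inl i, rfl⟩)
  have hgenS : Algebra.adjoin (MvPolynomial (Option τ) ℝ) (Set.range gen) = ⊤ := by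
    apply adjoin_lift' _ _ hgen
    intro r
    exact ⟨MvPolynomial.C r, by rw [hmap, MvPolynomial.aeval_C]⟩
  obtain ⟨g, hg, M, hM⟩ := MM_domain (S := MvPolynomial (Option τ) ℝ) gen hgenS (fun k => halg _)
  have hCh2 : (MvPolynomial.C h2 : MvPolynomial (Option K) A) ≠ 0 := by simpa using h20
  obtain ⟨a0, ha0, hdvd⟩ := exists_dvd_of_alg (S := MvPolynomial (Option τ) ℝ) (MvPolynomial.C h2 : MvPolynomial (Option K) A) hCh2 (halg _)
  have hfib : ∀ (w : Option τ → ℝ) (χ : MvPolynomial (Option K) A →+* ℝ), χ ∈ Fib (MvPolynomial (Option K) A) (MvPolynomial.eval w) ↔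
      ∀ o, χ (vv o) = w o := by
    intro w χ
    constructor
    · intro h o
      have := fib_C h (MvPolynomial.X o)
      rwa [hmap, MvPolynomial.aeval_X, MvPolynomial.eval_X] at this
    · intro h
      apply RingHom.ext
      intro q
      rw [RingHom.comp_apply, hmap, chi_aeval]
      congr 1
      have : (fun i => χ (vv i)) = w := funext h
      rw [this]
  have hfib1 : ∀ (w : Option τ → ℝ) (χ : MvPolynomial (Option K) A →+* ℝ), χ ∈ Fib (MvPolynomial (Option K) A) (MvPolynomial.eval w) →
      χ (MvPolynomial.X none) = w none ∧ ∀ i, (χ.comp MvPolynomial.C) (y i) = MvPolynomial.eval (fun o : Option K => o.elim (w none) (fun k => χ (MvPolynomial.X (some k)))) (f i) + w (some i) := by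
    intro w χ hχ
    rw [hfib] at hχ
    have h0 : χ (MvPolynomial.X none) = w none := hχ none
    refine ⟨h0, fun i => ?_⟩
    have h1 := hχ (some i)
    simp only [vv, Option.elim_some, map_sub, chi_aeval] at h1
    rw [RingHom.comp_apply, ← h1]
    have : (fun o : Option K => o.elim (w none) (fun k => χ (MvPolynomial.X (some k)))) = fun k => χ (MvPolynomial.X k) := by
      funext o
      cases o with
      | none => exact h0.symm
      | some k => rfl
    rw [this]; ring
  have hfib2 : ∀ (w : Option τ → ℝ) (ψ : A →+* ℝ) (x : K → ℝ),
      (∀ i, ψ (y i) = MvPolynomial.eval (fun o : Option K => o.elim (w none) x) (f i) + w (some i)) → 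
      ∃ χ ∈ Fib (MvPolynomial (Option K) A) (MvPolynomial.eval w), (∀ c, χ (MvPolynomial.C c) = ψ c) ∧ ∀ k, χ (MvPolynomial.X (some k)) = x k := by
    intro w ψ x h
    refine ⟨MvPolynomial.eval₂Hom ψ (fun o : Option K => o.elim (w none) x), ?_, fun c => by simp, fun k => by simp⟩
    rw [hfib]
    intro o
    cases o with
    | none => simp [vv]
    | some i =>
      simp only [vv, Option.elim_some, map_sub, chi_aeval]
      rw [MvPolynomial.eval₂Hom_C, h i]
      simp
  have hbij : ∀ w : Option τ → ℝ, Set.BijOn (fun χ : MvPolynomial (Option K) A →+* ℝ => fun k => χ (MvPolynomial.X (some k)))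
      (Fib (MvPolynomial (Option K) A) (MvPolynomial.eval w))
      {x : K → ℝ | ∃ ψ : A →+* ℝ, ∀ i, ψ (y i) = MvPolynomial.eval (fun o : Option K => o.elim (w none) x) (f i) + w (some i)} := by
    intro w
    refine ⟨fun χ hχ => ⟨_, (hfib1 w χ hχ).2⟩, ?_, ?_⟩
    · intro χ hχ χ' hχ' he
      apply fib_ext gen hgenS hχ hχ'
      have h1 := hfib1 w χ hχ
      have h2 := hfib1 w χ' hχ'
      have h3 : ∀ k, χ (MvPolynomial.X (some k)) = χ' (MvPolynomial.X (some k)) := fun k => congrFun he k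
      rintro (o | i)
      · cases o with
        | none => exact h1.1.trans h2.1.symm
        | some k => exact h3 k
      · have e1 := h1.2 i
        have e2 := h2.2 i
        simp only [h3] at e1
        exact e1.trans e2.symm
    · rintro x ⟨ψ, hψ⟩
      obtain ⟨χ, hχ, -, h3⟩ := hfib2 w ψ x hψ
      exact ⟨χ, hχ, funext h3⟩
  refine ⟨g * a0, mul_ne_zero hg ha0, ?_, ?_⟩
  · intro w hw ψ x hψ h0
    rw [map_mul] at hw
    obtain ⟨χ, hχ, h3, -⟩ := hfib2 w ψ x hψ
    obtain ⟨c, hc⟩ := hdvd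
    have h4 := fib_C hχ a0
    rw [hc, map_mul, h3, h0, zero_mul] at h4
    exact right_ne_zero_of_mul hw h4.symm
  · intro w0 w1 hw0 hw1 ρ1 ρ2 hρ hρ2 hno
    rw [map_mul] at hw0 hw1
    let φ : MvPolynomial (Option K) A := ∑ k, (MvPolynomial.X (some k) - algebraMap ℝ _ (a k)) ^ 2
    have hφ : ∀ χ : MvPolynomial (Option K) A →+* ℝ, χ φ = ∑ k, (χ (MvPolynomial.X (some k)) - a k) ^ 2 := by
      intro χ
      simp only [φ, map_sum, map_pow, map_sub, chi_real]
    have hP := PAR2 hM w0 w1 (left_ne_zero_of_mul hw0) (left_ne_zero_of_mul hw1) φ ρ1 ρ2 (-1) hρ2 (by linarith) (by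
      intro t ht χ hχ
      rw [hφ]
      refine ⟨?_, hno t ht _ _ (hfib1 _ χ hχ).2⟩
      have : 0 ≤ ∑ k, (χ (MvPolynomial.X (some k)) - a k) ^ 2 := Finset.sum_nonneg fun _ _ => sq_nonneg _
      linarith)
    rw [ncard_bij (hbij w0) (fun χ => χ φ < ρ1) (fun x => ∑ k, (x k - a k) ^ 2 < ρ1) (fun χ _ => by rw [hφ]),
      ncard_bij (hbij w1) (fun χ => χ φ < ρ1) (fun x => ∑ k, (x k - a k) ^ 2 < ρ1) (fun χ _ => by rw [hφ])] at hP
    exact hP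
end PartD6

section PartD7
open Polynomial TensorProduct

lemma poly_approx {K : Type} [Fintype K] (Cc : Set (K → ℝ)) (hC : IsCompact Cc) (s : (K → ℝ) → ℝ) (hs : ContinuousOn s Cc)
    (δ : ℝ) (hδ : 0 < δ) : ∃ g : MvPolynomial K ℝ, ∀ x ∈ Cc, |MvPolynomial.eval x g - s x| < δ := by
  haveI : CompactSpace Cc := isCompact_iff_compactSpace.1 hC
  let co : K → C(Cc, ℝ) := fun k => ⟨fun x => x.1 k, (continuous_apply k).comp continuous_subtype_val⟩
  have hco : ∀ (p : MvPolynomial K ℝ) (x : Cc), (MvPolynomial.aeval co p) x = MvPolynomial.eval x.1 p := by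
    intro p x
    induction p using MvPolynomial.induction_on with
    | C a => rw [MvPolynomial.aeval_C, MvPolynomial.eval_C]; rfl
    | add p q hp hq => rw [map_add, map_add, ContinuousMap.add_apply, hp, hq]
    | mul_X p i hp => rw [map_mul, map_mul, ContinuousMap.mul_apply, hp, MvPolynomial.aeval_X, MvPolynomial.eval_X]; rfl
  obtain ⟨⟨_, p, rfl⟩, hg⟩ := ContinuousMap.exists_mem_subalgebra_near_continuous_of_separatesPoints
    (MvPolynomial.aeval co).range (by
      intro x y hxy
      obtain ⟨k, hk⟩ : ∃ k, x.1 k ≠ y.1 k := by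
        by_contra h; push Not at h
        exact hxy (Subtype.ext (funext h))
      refine ⟨co k, ⟨co k, ⟨MvPolynomial.X k, by simp⟩, rfl⟩, hk⟩)
    (fun x : Cc => s x.1) (continuousOn_iff_continuous_restrict.1 hs) δ hδ
  refine ⟨p, fun x hx => ?_⟩
  have := hg ⟨x, hx⟩
  rw [← hco p ⟨x, hx⟩]
  exact this

lemma inv_approx {K σ τ : Type} [Fintype K] [Fintype σ] [Fintype τ] (P : τ → MvPolynomial σ ℝ) (hinj : Function.Injective (evP P))
    (hopen : IsOpenMap (evP P)) (Cc : Set (K → ℝ)) (hC : IsCompact Cc) (j : (K → ℝ) → (τ → ℝ)) (hj : Continuous j)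
    (hr : ∀ x ∈ Cc, j x ∈ Set.range (evP P)) (ε : ℝ) (hε : 0 < ε) :
    ∃ g : σ → MvPolynomial K ℝ, ∀ x ∈ Cc, dist (j x) (evP P (evP g x)) < ε := by
  let inv := Function.invFun (evP P)
  have hinv : ∀ p, inv (evP P p) = p := Function.leftInverse_invFun hinj
  have hinvc : ∀ p, ContinuousAt inv (evP P p) := by
    intro p U hU
    rw [hinv] at hU
    rw [Filter.mem_map]
    filter_upwards [hopen.image_mem_nhds hU]
    rintro _ ⟨q, hq, rfl⟩
    change inv (evP P q) ∈ U
    rwa [hinv]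
  have hs : ContinuousOn (fun x => inv (j x)) Cc := by
    intro x hx
    obtain ⟨p, hp⟩ := hr x hx
    apply ContinuousAt.continuousWithinAt
    refine ContinuousAt.comp (g := inv) ?_ hj.continuousAt
    rw [← hp]; exact hinvc p
  have hPs : ∀ x ∈ Cc, evP P (inv (j x)) = j x := by
    intro x hx
    obtain ⟨p, hp⟩ := hr x hx
    rw [← hp, hinv]
  have hcomp := hC.image_of_continuousOn hs
  have hu := hcomp.uniformContinuousAt_of_continuousAt (evP P) (fun a _ => (evP_cont P).continuousAt) (Metric.dist_mem_uniformity hε)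
  obtain ⟨δ, hδ, hδ2⟩ := Metric.mem_uniformity_dist.1 hu
  choose g hg using fun i : σ => poly_approx Cc hC (fun x => inv (j x) i) (fun x hx => (continuous_apply i).continuousAt.comp_continuousWithinAt (hs x hx)) δ hδ
  refine ⟨g, fun x hx => ?_⟩
  have h1 : dist (inv (j x)) (evP g x) < δ := by
    rw [dist_pi_lt_iff hδ]
    intro i
    rw [dist_comm]
    exact hg i x hx
  have h2 := hδ2 h1 ⟨x, hx, rfl⟩
  simp only [Set.mem_setOf_eq] at h2
  rwa [hPs x hx] at h2
end PartD7

section PartD8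
open Polynomial TensorProduct

lemma seg_Ioo {l u x y t : ℝ} (hx1 : l < x) (hx2 : x < u) (hy1 : l < y) (hy2 : y < u) (ht : t ∈ Set.Icc (0 : ℝ) 1) :
    l < x + t * (y - x) ∧ x + t * (y - x) < u := by
  have := (convex_Ioo l u) ⟨hx1, hx2⟩ ⟨hy1, hy2⟩ (a := 1 - t) (b := t) (by linarith [ht.2]) ht.1 (by ring)
  have e : (1 - t) • x + t • y = x + t * (y - x) := by simp only [smul_eq_mul]; ring
  rw [e] at this
  exact this

set_option maxHeartbeats 1000000 in
theorem surj_core {n : ℕ} {σ τ : Type} [Fintype σ] [Fintype τ] (hσ : Fintype.card σ = n) (hτ : Fintype.card τ = n)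
    (P : τ → MvPolynomial σ ℝ) (hinj : Function.Injective (evP P)) : Function.Surjective (evP P) := by
  classical
  have hopen : IsOpenMap (evP P) := open_core hσ hτ P hinj
  by_contra hns
  have hYne : (Set.range (evP P))ᶜ.Nonempty := by
    rw [Set.nonempty_compl]
    intro h
    exact hns (Set.range_eq_univ.1 h)
  obtain ⟨h, hp⟩ := prime_cut _ hYne
  obtain ⟨h2, hh2, hh2'⟩ := not_dense P hinj _ (fun x hx => hx.1 ⟨x, rfl⟩) hp
  obtain ⟨J, r, y0, hy0, hJ, hder, hr0, hloc⟩ := LOCV _ hp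
  have hYV : ∀ y, y ∉ Set.range (evP P) → MvPolynomial.eval y h ≠ 0 →
      ∀ p ∈ VI ((Set.range (evP P))ᶜ ∩ {y | MvPolynomial.eval y h ≠ 0}), MvPolynomial.eval y p = 0 :=
    fun y hy1 hy2 p hp => hp y ⟨hy1, hy2⟩
  have hh0 : MvPolynomial.eval y0 h ≠ 0 := hy0.2
  obtain ⟨I, hI⟩ : ∃ I, I = VI ((Set.range (evP P))ᶜ ∩ {y | MvPolynomial.eval y h ≠ 0}) := ⟨_, rfl⟩
  rw [← hI] at hp hh2 hh2' hloc hYV hJ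
  have hy0V : ∀ p ∈ I, MvPolynomial.eval y0 p = 0 := by
    intro p hp
    rw [hI] at hp
    exact hp y0 hy0
  clear hI
  obtain ⟨V, hV⟩ : ∃ V : Set (τ → ℝ), V = {y | ∀ p ∈ I, MvPolynomial.eval y p = 0} := ⟨_, rfl⟩
  have hVmem : ∀ y, y ∈ V ↔ ∀ p ∈ I, MvPolynomial.eval y p = 0 := fun y => by rw [hV]; rfl
  have hVclosed : IsClosed V := by
    rw [hV]
    simp only [Set.setOf_forall]
    exact isClosed_iInter fun p => isClosed_iInter fun _ => isClosed_eq (MvPolynomial.continuous_eval p) continuous_const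
  simp only [← hVmem] at hloc hYV hh2' hy0V
  have hVψ : ∀ y, (∃ ψ : (MvPolynomial τ ℝ ⧸ I) →+* ℝ, ∀ i, ψ (Ideal.Quotient.mk I (MvPolynomial.X i)) = y i) ↔ y ∈ V := by
    intro y
    rw [hVmem]
    constructor
    · rintro ⟨ψ, hψ⟩
      have : cpt ψ = y := funext hψ
      rw [← this]; exact cpt_mem ψ
    · intro hy
      exact ⟨pt I y hy, fun i => by rw [pt_mk, MvPolynomial.eval_X]⟩
  -- slice
  let a : {k // k ∉ J} → ℝ := fun k => y0 k
  let j : ({k // k ∉ J} → ℝ) → (τ → ℝ) := fun x i => if hi : i ∈ J then y0 i else x ⟨i, hi⟩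
  have hjJ : ∀ x (i : J), j x i = y0 i := fun x i => by simp [j, i.2]
  have hjK : ∀ x (k : {k // k ∉ J}), j x k = x k := fun x k => by simp [j, k.2]
  have hja : j a = y0 := by
    funext i
    by_cases hi : i ∈ J
    · exact hjJ a ⟨i, hi⟩
    · exact hjK a ⟨i, hi⟩
  have hjc : Continuous j := by
    apply continuous_pi
    intro i
    by_cases hi : i ∈ J
    · simp only [j, hi, dite_true]; exact continuous_const
    · simp only [j, hi, dite_false]; exact continuous_apply _
  -- isolation
  have hiso : ∀ᶠ x in nhds a, j x ∈ V → x = a := by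
    have h1 : ∀ᶠ x in nhds a, (j x ∈ V ↔ ∀ k, ((r k).map (MvPolynomial.eval fun i : J => j x i)).eval (j x k) = 0) := by
      rw [← hja] at hloc
      exact hjc.continuousAt.eventually hloc
    have h2 : ∀ᶠ x in nhds a, ∀ k, ((r k).map (MvPolynomial.eval fun i : J => y0 i)).eval (x k) = 0 → x k = a k := by
      rw [Filter.eventually_all]
      intro k
      have e1 := (Polynomial.hasDerivAt ((r k).map (MvPolynomial.eval fun i : J => y0 i)) (y0 k)).eventually_ne (hder k) (c := 0)
      rw [eventually_nhdsWithin_iff] at e1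
      have e2 : ∀ᶠ x in nhds a, (x k ∈ ({y0 k}ᶜ : Set ℝ) → ((r k).map (MvPolynomial.eval fun i : J => y0 i)).eval (x k) ≠ 0) :=
        ((continuous_apply k).tendsto a).eventually e1
      filter_upwards [e2] with x hx h0
      by_contra hne
      exact hx hne h0
    filter_upwards [h1, h2] with x h1 h2 hx
    have h3 := h1.1 hx
    funext k
    apply h2 k
    have := h3 k
    simpa only [hjJ, hjK] using this
  have hnh : ∀ᶠ x in nhds a, MvPolynomial.eval (j x) h ≠ 0 := by
    have : Continuous fun x => MvPolynomial.eval (j x) h := (MvPolynomial.continuous_eval h).comp hjc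
    exact this.continuousAt.eventually_ne (by rw [hja]; exact hh0)
  obtain ⟨ρ2, hρ2, hB⟩ := sq_subset a (hiso.and hnh)
  have hB1 : ∀ x, ∑ k, (x k - a k) ^ 2 ≤ ρ2 → j x ∈ V → x = a := fun x hx => (hB hx).1
  have hB2 : ∀ x, ∑ k, (x k - a k) ^ 2 ≤ ρ2 → x ≠ a → j x ∈ Set.range (evP P) := by
    intro x hx hxa
    by_contra hc
    exact hxa (hB1 x hx (hYV _ hc (hB hx).2))
  obtain ⟨ρ1, hρ1, hρ12⟩ : ∃ ρ1, 0 < ρ1 ∧ ρ1 < ρ2 := ⟨ρ2 / 2, by linarith, by linarith⟩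
  let Sh : Set ({k // k ∉ J} → ℝ) := {x | ∑ k, (x k - a k) ^ 2 ≤ ρ2} ∩ {x | ρ1 ≤ ∑ k, (x k - a k) ^ 2}
  have hSh : IsCompact Sh := (isCompact_sq a ρ2).inter_right (isClosed_le continuous_const (continuous_sq a))
  have hSha : ∀ x ∈ Sh, x ≠ a := by
    rintro x ⟨-, hx⟩ rfl
    simp at hx
    linarith
  obtain ⟨ε, hε, hεV⟩ := (hSh.image hjc).exists_thickening_subset_open hVclosed.isOpen_compl (by
    rintro _ ⟨x, hx, rfl⟩ hxV
    exact hSha x hx (hB1 x hx.1 hxV))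
  obtain ⟨g, hg⟩ := inv_approx P hinj hopen Sh hSh j hjc (fun x hx => hB2 x hx.1 (hSha x hx)) (ε / 4) (by linarith)
  let f : τ → MvPolynomial (Option {k // k ∉ J}) ℝ := fun i =>
    (1 - MvPolynomial.X none) * MvPolynomial.rename some (MvPolynomial.bind₁ g (P i)) +
      MvPolynomial.X none * (if hi : i ∈ J then MvPolynomial.C (y0 i) else MvPolynomial.X (some ⟨i, hi⟩))
  have hf : ∀ t x i, MvPolynomial.eval (fun o : Option {k // k ∉ J} => o.elim t x) (f i) =
      (1 - t) * evP P (evP g x) i + t * j x i := by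
    intro t x i
    have e1 : MvPolynomial.eval (fun o : Option {k // k ∉ J} => o.elim t x) (MvPolynomial.rename some (MvPolynomial.bind₁ g (P i))) =
        evP P (evP g x) i := by
      rw [MvPolynomial.eval_rename]
      change MvPolynomial.eval x _ = _
      rw [MvPolynomial.bind₁, chi_aeval]
      rfl
    simp only [f, map_add, map_mul, map_sub, map_one, MvPolynomial.eval_X, e1, Option.elim_none]
    by_cases hi : i ∈ J
    · simp [j, hi]
    · simp [j, hi]
  let m : (Option τ → ℝ) → ({k // k ∉ J} → ℝ) → τ → ℝ := fun w x i =>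
    MvPolynomial.eval (fun o : Option {k // k ∉ J} => o.elim (w none) x) (f i) + w (some i)
  have hm : ∀ w x i, m w x i = (1 - w none) * evP P (evP g x) i + w none * j x i + w (some i) := by
    intro w x i
    simp only [m, hf]
  have hmD : ∀ i, ContDiff ℝ 1 fun e : (Option τ → ℝ) × ({k // k ∉ J} → ℝ) => m e.1 e.2 i := by
    intro i
    refine ContDiff.add ?_ (by fun_prop)
    refine contDiff_mv (f i) (fun o (e : (Option τ → ℝ) × ({k // k ∉ J} → ℝ)) => o.elim (e.1 none) e.2) ?_
    intro o
    cases o with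
    | none => simp only [Option.elim_none]; fun_prop
    | some k => simp only [Option.elim_some]; fun_prop
  have hmC : Continuous fun e : (Option τ → ℝ) × ({k // k ∉ J} → ℝ) => m e.1 e.2 :=
    continuous_pi fun i => (hmD i).continuous
  haveI : I.IsPrime := hp
  obtain ⟨G, hG, hGh, hGp⟩ := PARX (fun i => Ideal.Quotient.mk I (MvPolynomial.X i)) (quot_adjoin I) _ hJ
    (K := {k // k ∉ J}) (by
      have := Fintype.card_subtype_compl (fun i => i ∈ J)
      have h3 := Fintype.card_subtype_le (fun i => i ∈ J)
      have e1 : Fintype.card {k // k ∉ J} = Fintype.card τ - Fintype.card {k // k ∈ J} := by convert this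
      have e2 : Fintype.card J = Fintype.card {k // k ∈ J} := by congr
      rw [e1, e2]
      have h4 : Fintype.card {k // k ∈ J} ≤ Fintype.card τ := by convert h3
      omega) f (Ideal.Quotient.mk I h2) (by
      intro hc
      exact hh2 (Ideal.Quotient.eq_zero_iff_mem.1 hc)) a
  have hVm : ∀ w x, (∃ ψ : (MvPolynomial τ ℝ ⧸ I) →+* ℝ, ∀ i, ψ (Ideal.Quotient.mk I (MvPolynomial.X i)) =
      MvPolynomial.eval (fun o : Option {k // k ∉ J} => o.elim (w none) x) (f i) + w (some i)) ↔ m w x ∈ V := by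
    intro w x
    exact hVψ (m w x)
  -- convex set of parameters
  let U : Set (Option τ → ℝ) := {w | (∀ i, |w (some i)| < ε / 4) ∧ -1 < w none ∧ w none < 2}
  have hno : ∀ w ∈ U, ∀ x, m w x ∈ V → (∑ k, (x k - a k) ^ 2 < ρ1 ∨ ρ2 < ∑ k, (x k - a k) ^ 2) := by
    intro w hw x hx
    by_contra hc
    push Not at hc
    have hxS : x ∈ Sh := ⟨hc.2, hc.1⟩
    refine hεV (a := m w x) ?_ hx
    rw [Metric.mem_thickening_iff]
    refine ⟨j x, ⟨x, hxS, rfl⟩, ?_⟩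
    rw [dist_pi_lt_iff hε]
    intro i
    have h1 := hg x hxS
    have h2 := (dist_pi_lt_iff (by linarith)).1 h1 i
    rw [Real.dist_eq, abs_lt] at h2 ⊢
    have h3 := abs_lt.1 (hw.1 i)
    rw [hm]
    obtain ⟨-, h4, h5⟩ := hw
    constructor <;> nlinarith [h2.1, h2.2]
  have hUc : ∀ w0 ∈ U, ∀ w1 ∈ U, ∀ t ∈ Set.Icc (0 : ℝ) 1, w0 + t • (w1 - w0) ∈ U := by
    intro w0 h0 w1 h1 t ht
    refine ⟨fun i => ?_, ?_⟩
    · have e0 := abs_lt.1 (h0.1 i)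
      have e1 := abs_lt.1 (h1.1 i)
      simp only [Pi.add_apply, Pi.smul_apply, Pi.sub_apply, smul_eq_mul]
      rw [abs_lt]
      exact seg_Ioo e0.1 e0.2 e1.1 e1.2 ht
    · have e0 := h0.2
      have e1 := h1.2
      simp only [Pi.add_apply, Pi.smul_apply, Pi.sub_apply, smul_eq_mul]
      exact seg_Ioo e0.1 e0.2 e1.1 e1.2 ht
  have hUo : IsOpen U := by
    have e1 : IsOpen {w : Option τ → ℝ | ∀ i, |w (some i)| < ε / 4} := by
      simp only [Set.setOf_forall]
      exact isOpen_iInter_of_finite fun i => isOpen_lt (by fun_prop) continuous_const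
    exact e1.inter ((isOpen_lt continuous_const (continuous_apply none)).inter (isOpen_lt (continuous_apply none) continuous_const))
  have hPar : ∀ w0 ∈ U, ∀ w1 ∈ U, MvPolynomial.eval w0 G ≠ 0 → MvPolynomial.eval w1 G ≠ 0 →
      (Odd {x | m w0 x ∈ V ∧ ∑ k, (x k - a k) ^ 2 < ρ1}.ncard ↔ Odd {x | m w1 x ∈ V ∧ ∑ k, (x k - a k) ^ 2 < ρ1}.ncard) := by
    intro w0 h0 w1 h1 hg0 hg1
    have := hGp w0 w1 hg0 hg1 ρ1 ρ2 hρ1 hρ12 (fun t ht ψ x hx => hno _ (hUc w0 h0 w1 h1 t ht) x ((hVm _ x).1 ⟨ψ, hx⟩))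
    simpa only [hVm] using this
  have hdense := dense_ne_zero G hG
  -- end 0
  obtain ⟨w0, hw0U, hw0G, hw0⟩ : ∃ w0 ∈ U, MvPolynomial.eval w0 G ≠ 0 ∧
      ∀ x ∈ {x : {k // k ∉ J} → ℝ | ∑ k, (x k - a k) ^ 2 ≤ ρ1}, m w0 x ∈ Set.range (evP P) := by
    have e1 : ∀ᶠ w in nhds (0 : Option τ → ℝ), ∀ x ∈ {x : {k // k ∉ J} → ℝ | ∑ k, (x k - a k) ^ 2 ≤ ρ1}, m w x ∈ Set.range (evP P) := by
      apply (isCompact_sq a ρ1).eventually_forall_of_forall_eventually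
      intro x _
      apply hmC.continuousAt.preimage_mem_nhds
      apply hopen.isOpen_range.mem_nhds
      refine ⟨evP g x, ?_⟩
      funext i
      simp [hm]
    have e2 : U ∈ nhds (0 : Option τ → ℝ) := hUo.mem_nhds ⟨fun i => by simpa using hε, by simp⟩
    obtain ⟨w0, h3, h1, h2⟩ := hdense.inter_nhds_nonempty (Filter.inter_mem e1 e2)
    exact ⟨w0, h2, h3, h1⟩
  have hcount0 : {x | m w0 x ∈ V ∧ ∑ k, (x k - a k) ^ 2 < ρ1} = ∅ := by
    rw [Set.eq_empty_iff_forall_notMem]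
    rintro x ⟨hx1, hx2⟩
    obtain ⟨q, hq⟩ := hw0 x hx2.le
    have e1 := hh2' q (by rw [hq]; exact hx1)
    obtain ⟨ψ, hψ⟩ := (hVm w0 x).2 hx1
    apply hGh w0 hw0G ψ x hψ
    rw [chi_mk]
    have : cpt ψ = m w0 x := funext hψ
    rw [this, ← hq, e1]
  -- end 1
  let ws : Option τ → ℝ := fun o => o.elim 1 (fun _ => 0)
  have hmws : ∀ x, m ws x = j x := by
    intro x; funext i; simp [hm, ws]
  obtain ⟨⟨O, hO, hOinj⟩, hex⟩ := IFTL (ι := Option τ) (K := {k // k ∉ J})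
    (fun e k => ((r k).map (MvPolynomial.eval fun i : J => m e.1 e.2 i)).eval (m e.1 e.2 k))
    (by
      rw [contDiff_pi]
      intro k
      exact contDiff_rmap (r k) (fun i (e : (Option τ → ℝ) × ({k // k ∉ J} → ℝ)) => m e.1 e.2 i) (fun i => hmD i) _ (hmD k))
    ws a (fun k t => ((r k).map (MvPolynomial.eval fun i : J => y0 i)).eval t)
    (fun k => (derivative ((r k).map (MvPolynomial.eval fun i : J => y0 i))).eval (y0 k))
    (fun x k => by simp only [hmws, hjJ, hjK])
    (fun k => Polynomial.hasDerivAt _ _) hder (by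
      funext k
      simp only [hmws, hja]
      exact hr0 k)
  have hO2 : {e : (Option τ → ℝ) × ({k // k ∉ J} → ℝ) | m e.1 e.2 ∈ V ↔ ∀ k, ((r k).map (MvPolynomial.eval fun i : J => m e.1 e.2 i)).eval (m e.1 e.2 k) = 0}
      ∈ nhds (ws, a) := by
    have : m ws a = y0 := by rw [hmws, hja]
    rw [← this] at hloc
    exact (hmC.tendsto (ws, a)).eventually hloc
  obtain ⟨U1, hU1, U2, hU2, hU12⟩ := mem_nhds_prod_iff.1 (Filter.inter_mem hO hO2)
  have hN : {x : {k // k ∉ J} → ℝ | ∑ k, (x k - a k) ^ 2 < ρ1} ∈ nhds a :=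
    (isOpen_lt (continuous_sq a) continuous_const).mem_nhds (by simpa using hρ1)
  have hex' := hex _ (Filter.inter_mem hU2 hN)
  have hfar : ∀ᶠ w in nhds ws, ∀ x ∈ {x : {k // k ∉ J} → ℝ | ∑ k, (x k - a k) ^ 2 ≤ ρ1} ∩ (interior U2)ᶜ, m w x ∉ V := by
    apply ((isCompact_sq a ρ1).inter_right isOpen_interior.isClosed_compl).eventually_forall_of_forall_eventually
    rintro x ⟨hx1, hx2⟩
    have hnV : m ws x ∈ Vᶜ → ∀ᶠ z : (Option τ → ℝ) × ({k // k ∉ J} → ℝ) in nhds (ws, x), m z.1 z.2 ∉ V := fun hq =>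
      (hmC.tendsto (ws, x)).eventually (hVclosed.isOpen_compl.mem_nhds hq)
    apply hnV
    rw [hmws]
    intro hxV
    apply hx2
    rw [hB1 x (le_trans hx1 hρ12.le) hxV]
    exact mem_interior_iff_mem_nhds.2 hU2
  have e2 : U ∈ nhds ws := hUo.mem_nhds ⟨fun i => by simp [ws, hε], by simp [ws]⟩
  obtain ⟨w1, hw1G, ⟨⟨hw1a, hw1b⟩, hw1c⟩, hw1U⟩ := hdense.inter_nhds_nonempty
    (Filter.inter_mem (Filter.inter_mem (Filter.inter_mem hex' hfar) hU1) e2)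
  obtain ⟨x1, hx1, hx1z⟩ := hw1a
  have hsing : {x | m w1 x ∈ V ∧ ∑ k, (x k - a k) ^ 2 < ρ1} = {x1} := by
    apply Set.eq_singleton_iff_unique_mem.2
    refine ⟨⟨(hU12 (Set.mk_mem_prod hw1c hx1.1)).2.2 fun k => congrFun hx1z k, hx1.2⟩, ?_⟩
    rintro x ⟨hxV, hxN⟩
    have hxU : x ∈ U2 := by
      by_contra hc
      exact hw1b x ⟨hxN.le, fun h => hc (interior_subset h)⟩ hxV
    have h3 := hU12 (Set.mk_mem_prod hw1c hxU)
    have h4 := hU12 (Set.mk_mem_prod hw1c hx1.1)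
    apply hOinj w1 x x1 h3.1 h4.1
    rw [hx1z]
    funext k
    exact h3.2.1 hxV k
  have hfinal := hPar w0 hw0U w1 hw1U hw0G hw1G
  rw [hcount0, hsing] at hfinal
  simp at hfinal
end PartD8

section PartE1
/-- `γ` parametrizes a line, with coordinate `f` normalized at `0` and `1`. -/
def Aff {E : Type*} [AddCommGroup E] [Module ℝ E] (γ : ℝ → E) (f : ℝ → ℝ) : Prop :=
  Function.Bijective f ∧ f 0 = 0 ∧ f 1 = 1 ∧ ∀ t, γ t = γ 0 + f t • (γ 1 - γ 0)

lemma aff_of_range {E : Type*} [AddCommGroup E] [Module ℝ E] (γ : ℝ → E) (hγ : Function.Injective γ) (a b : E) (hb : b ≠ 0)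
    (h : Set.range γ = {x | ∃ t : ℝ, x = a + t • b}) : ∃ f, Aff γ f := by
  have h1 : ∀ t, ∃ s : ℝ, γ t = a + s • b := fun t => by
    have : γ t ∈ Set.range γ := ⟨t, rfl⟩
    rw [h] at this; exact this
  choose φ hφ using h1
  have hinj : Function.Injective φ := by
    intro s t hst
    apply hγ; rw [hφ, hφ, hst]
  have hsurj : Function.Surjective φ := by
    intro s
    have : a + s • b ∈ Set.range γ := by rw [h]; exact ⟨s, rfl⟩
    obtain ⟨t, ht⟩ := this
    refine ⟨t, ?_⟩
    rw [hφ] at ht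
    exact smul_left_injective ℝ hb (add_left_cancel ht)
  have hne : φ 1 - φ 0 ≠ 0 := sub_ne_zero.2 fun h => one_ne_zero (hinj h)
  refine ⟨fun t => (φ t - φ 0) / (φ 1 - φ 0), ⟨?_, ?_⟩, by simp, div_self hne, ?_⟩
  · intro s t hst
    simp only at hst
    rw [div_left_inj' hne] at hst
    exact hinj (by linarith)
  · intro s
    obtain ⟨t, ht⟩ := hsurj (φ 0 + s * (φ 1 - φ 0))
    refine ⟨t, ?_⟩
    simp only [ht]
    field_simp
    ring
  · intro t
    have e : γ 1 - γ 0 = (φ 1 - φ 0) • b := by rw [hφ 1, hφ 0]; module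
    rw [e, smul_smul, div_mul_cancel₀ _ hne, hφ t, hφ 0]; module

lemma plane {E : Type*} [AddCommGroup E] [Module ℝ E] (H : ℝ → ℝ → E) (hinj : ∀ x y x' y', H x y = H x' y' → x = x' ∧ y = y')
    (hrow : ∀ y, ∃ f, Aff (fun x => H x y) f) (hcol : ∀ x, ∃ s, Aff (H x) s) (f h : ℝ → ℝ) (hf : Aff (fun x => H x 0) f)
    (hh : Aff (fun x => H x 1) h) : f = h := by
  obtain ⟨⟨hfi, hfs⟩, hf0, hf1, hf⟩ := hf
  obtain ⟨⟨hhi, hhs⟩, hh0, hh1, hh⟩ := hh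
  choose s hs using hcol
  obtain ⟨q, ⟨hqi, hqs⟩, hq0, hq1, hq⟩ := hrow 2
  obtain ⟨A, hA⟩ : ∃ A, A = H 0 0 := ⟨_, rfl⟩
  obtain ⟨a, ha⟩ : ∃ a, a = H 1 0 - H 0 0 := ⟨_, rfl⟩
  obtain ⟨d, hd⟩ : ∃ d, d = H 0 1 - H 0 0 := ⟨_, rfl⟩
  obtain ⟨b, hb⟩ : ∃ b, b = H 1 1 - H 0 1 := ⟨_, rfl⟩
  have hx0 : ∀ x, H x 0 = A + f x • a := fun x => by rw [hA, ha]; exact hf x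
  have hx1 : ∀ x, H x 1 = A + d + h x • b := fun x => by rw [hA, hb, hd, add_sub_cancel]; exact hh x
  have ha0 : a ≠ 0 := by
    rw [ha, sub_ne_zero]; intro e; exact one_ne_zero (hinj _ _ _ _ e).1
  have hdspan : d ∉ Submodule.span ℝ ({a, b} : Set E) := by
    intro hmem
    obtain ⟨α, β, hαβ⟩ := Submodule.mem_span_pair.1 hmem
    obtain ⟨x, hx⟩ := hfs α
    obtain ⟨x', hx'⟩ := hhs (-β)
    have : H x 0 = H x' 1 := by rw [hx0, hx1, hx, hx', ← hαβ]; module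
    exact zero_ne_one (hinj _ _ _ _ this).2
  obtain ⟨l, hl, hl2⟩ := Submodule.exists_le_ker_of_notMem hdspan
  have hla : l a = 0 := hl2 (Submodule.subset_span (by simp))
  have hlb : l b = 0 := hl2 (Submodule.subset_span (by simp))
  have hxy : ∀ x y, H x y = A + f x • a + s x y • (d + h x • b - f x • a) := by
    intro x y
    rw [(hs x).2.2.2 y, hx0, hx1]; module
  have hlH : ∀ x y, l (H x y) = l A + s x y * l d := by
    intro x y; rw [hxy]; simp [hla, hlb]
  have hs20 : ∀ x, s x 2 ≠ 0 := fun x e => two_ne_zero ((hs x).1.1 (e.trans (hs x).2.1.symm))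
  have hs21 : ∀ x, s x 2 ≠ 1 := fun x e => by
    have := (hs x).1.1 (e.trans (hs x).2.2.1.symm)
    norm_num at this
  have hsq : ∀ x, s x 2 = s 0 2 + q x * (s 1 2 - s 0 2) := by
    intro x
    have e := congrArg l (hq x)
    simp only [map_add, map_smul, map_sub, hlH, smul_eq_mul] at e
    have : (s x 2 - (s 0 2 + q x * (s 1 2 - s 0 2))) * l d = 0 := by linear_combination e
    rcases mul_eq_zero.1 this with h | h
    · linarith
    · exact absurd h hl
  have hs12 : s 1 2 - s 0 2 = 0 := by
    by_contra hne
    obtain ⟨x, hx⟩ := hqs (- s 0 2 / (s 1 2 - s 0 2))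
    apply hs20 x
    rw [hsq, hx]; field_simp; ring
  obtain ⟨σ, hσ⟩ : ∃ σ, σ = s 0 2 := ⟨_, rfl⟩
  have hsσ : ∀ x, s x 2 = σ := fun x => by rw [hsq, hs12, hσ]; ring
  have hσ0 : σ ≠ 0 := hσ ▸ hs20 0
  have hσ1 : 1 - σ ≠ 0 := sub_ne_zero.2 (hσ ▸ hs21 0).symm
  have hrel : ∀ x, ((1 - σ) * (f x - q x)) • a + (σ * (h x - q x)) • b = 0 := by
    intro x
    have e := hq x
    simp only [hxy, hsσ, hf0, hh0, hf1, hh1] at e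
    have e2 := sub_eq_zero.2 e
    rw [← e2]; module
  by_cases hind : ∃ lam : ℝ, b = lam • a
  · obtain ⟨lam, hlam⟩ := hind
    have hcol0 : ∀ t : ℝ, ∃ y, H 0 y = A + t • d := by
      intro t
      obtain ⟨y, hy⟩ := (hs 0).1.2 t
      refine ⟨y, ?_⟩
      rw [hxy, hf0, hh0, hy]; module
    have hkey : ∀ x, lam * h x = f x := by
      intro x
      by_cases hx : x = 0
      · rw [hx, hf0, hh0, mul_zero]
      by_contra hne
      have hne' : lam * h x - f x ≠ 0 := sub_ne_zero.2 hne
      obtain ⟨y, hy⟩ := (hs x).1.2 (-f x / (lam * h x - f x))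
      obtain ⟨y', hy'⟩ := hcol0 (-f x / (lam * h x - f x))
      apply hx
      refine (hinj x y 0 y' ?_).1
      rw [hxy, hy, hy', hlam]
      have e : f x + (-f x / (lam * h x - f x)) * (lam * h x - f x) = 0 := by field_simp; ring
      have : A + f x • a + (-f x / (lam * h x - f x)) • (d + h x • lam • a - f x • a) =
        A + (-f x / (lam * h x - f x)) • d + (f x + (-f x / (lam * h x - f x)) * (lam * h x - f x)) • a := by module
      rw [this, e]; module
    have hl1 : lam = 1 := by have := hkey 1; rwa [hh1, hf1, mul_one] at this
    funext x
    rw [← hkey x, hl1, one_mul]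
  · funext x
    have e := hrel x
    have h2 : σ * (h x - q x) = 0 := by
      by_contra hne
      apply hind
      refine ⟨-(σ * (h x - q x))⁻¹ * ((1 - σ) * (f x - q x)), ?_⟩
      have e3 := congrArg (fun v => (σ * (h x - q x))⁻¹ • v) e
      simp only [smul_add, smul_smul, smul_zero, inv_mul_cancel₀ hne, one_smul] at e3
      rw [eq_comm, ← sub_eq_zero, ← neg_eq_zero, ← e3]; module
    have h3 : (1 - σ) * (f x - q x) = 0 := by
      rw [h2, zero_smul, add_zero] at e
      exact (smul_eq_zero.1 e).resolve_right ha0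
    have e1 := (mul_eq_zero.1 h2).resolve_left hσ0
    have e2 := (mul_eq_zero.1 h3).resolve_left hσ1
    linarith

lemma dir_add {X E : Type*} [AddCommGroup X] [Module ℝ X] [AddCommGroup E] [Module ℝ E] (G : X → E) (hG : Function.Injective G)
    (b : X) (hb0' : b ≠ 0) (hb : ∀ p, ∃ f, Aff (fun t : ℝ => G (p + t • b)) f)
    (hspan : Submodule.span ℝ {b' : X | (∀ p, ∃ f, Aff (fun t : ℝ => G (p + t • b')) f) ∧ LinearIndependent ℝ ![b, b']} = ⊤) :
    ∃ f : ℝ → ℝ, Function.Bijective f ∧ (∀ s t, f (s + t) = f s + f t) ∧ f 1 = 1 ∧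
      ∀ p t, G (p + t • b) = G p + f t • (G (p + b) - G p) := by
  choose F hF using hb
  have hF' : ∀ p t, G (p + t • b) = G p + F p t • (G (p + b) - G p) := by
    intro p t; simpa using (hF p).2.2.2 t
  have hW : ∀ v : X, ∀ c : ℝ, ∀ p, F (p + c • v) = F p := by
    intro v
    have hv : v ∈ Submodule.span ℝ {b' : X | (∀ p, ∃ f, Aff (fun t : ℝ => G (p + t • b')) f) ∧ LinearIndependent ℝ ![b, b']} := by
      rw [hspan]; trivial
    induction hv using Submodule.span_induction with
    | mem b' hb' =>
      intro c p
      obtain ⟨hd, hli⟩ := hb'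
      by_cases hc : c = 0
      · simp [hc]
      symm
      rw [LinearIndependent.pair_iff] at hli
      apply plane (fun x y => G (p + x • b + y • (c • b')))
      · intro x y x' y' e
        have e1 := hG e
        have e2 : (x - x') • b + ((y - y') * c) • b' = 0 := by
          have := sub_eq_zero.2 e1
          rw [← this]; module
        obtain ⟨h1, h2⟩ := hli _ _ e2
        exact ⟨by linarith, by have := (mul_eq_zero.1 h2).resolve_right hc; linarith⟩
      · intro y
        refine ⟨F (p + y • (c • b')), ?_⟩
        convert hF (p + y • (c • b')) using 3
        module
      · intro x
        obtain ⟨f, hf⟩ := hd (p + x • b)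
        have hfc : f c ≠ 0 := fun h => hc (hf.1.1 (h.trans hf.2.1.symm))
        have hff := hf.2.2.2
        refine ⟨fun t => f (t * c) / f c, ⟨?_, ?_⟩, ?_, ?_, ?_⟩
        · intro s t hst
          simp only at hst
          rw [div_left_inj' hfc] at hst
          exact mul_right_cancel₀ hc (hf.1.1 hst)
        · intro s
          obtain ⟨t, ht⟩ := hf.1.2 (s * f c)
          refine ⟨t / c, ?_⟩
          simp only [div_mul_cancel₀ _ hc, ht]
          field_simp
        · simp [hf.2.1]
        · simp [hfc]
        · intro t
          have e1 := hff (t * c)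
          have e2 := hff c
          simp only [zero_smul, one_smul, add_zero] at e1 e2 ⊢
          rw [smul_smul, e1, e2, add_sub_cancel_left, smul_smul, div_mul_cancel₀ _ hfc]
      · convert hF p using 3
        module
      · convert hF (p + c • b') using 3
        module
    | zero => intro c p; simp
    | add u v _ _ hu hv => intro c p; rw [smul_add, ← add_assoc, hv, hu]
    | smul r v _ hv => intro c p; rw [smul_smul, hv]
  have hFc : ∀ p, F p = F 0 := by
    intro p
    have := hW p 1 0
    rwa [one_smul, zero_add] at this
  obtain ⟨f, hf⟩ : ∃ f, f = F 0 := ⟨_, rfl⟩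
  have hline : ∀ p t, G (p + t • b) = G p + f t • (G (p + b) - G p) := by
    intro p t; rw [hF', hFc, hf]
  obtain ⟨hbij, hf0, hf1, -⟩ := hF 0
  rw [← hf] at hbij hf0 hf1
  have hb0 : G (0 + b) - G 0 ≠ 0 := by
    intro h0
    exact hb0' (by simpa using hG (sub_eq_zero.1 h0))
  have hk : ∀ s t, f (s + t) = f s + f t * (f (s + 1) - f s) := by
    intro s t
    have e1 := hline (0 + s • b) t
    have e2 := hline 0 (s + t)
    have e3 := hline 0 s
    have e4 := hline 0 (s + 1)
    have r1 : (0 : X) + s • b + t • b = 0 + (s + t) • b := by module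
    have r2 : (0 : X) + s • b + b = 0 + (s + 1) • b := by module
    rw [r1, r2, e2, e3, e4] at e1
    apply smul_left_injective ℝ hb0
    simp only
    have := sub_eq_zero.2 e1
    rw [← sub_eq_zero, ← this]; module
  obtain ⟨c, hc⟩ : ∃ c, c = f (1 + 1) - f 1 - 1 := ⟨_, rfl⟩
  have hadd : ∀ s t, f (s + t) = f s + f t + c * f s * f t := by
    intro s t
    have e1 := hk s t
    have e2 := hk 1 s
    rw [hf1, add_comm 1 s] at e2
    rw [e1, e2, hc, hf1]; ring
  have hc0 : c = 0 := by
    by_contra hne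
    obtain ⟨s, hs⟩ := hbij.2 (-1 / c)
    have e : ∀ t, f (s + t) = -1 / c := by
      intro t; rw [hadd, hs]; field_simp; ring
    have := hbij.1 ((e 0).trans (e 1).symm)
    linarith
  exact ⟨f, hbij, fun s t => by rw [hadd, hc0]; ring, hf1, hline⟩
end PartE1

section PartE2
lemma multi_aff {n : ℕ} {E : Type*} [AddCommGroup E] [Module ℝ E] (G : (Fin n → ℝ) → E)
    (f : Fin n → ℝ → ℝ)
    (h : ∀ i p t, G (p + t • Pi.single i 1) = G p + f i t • (G (p + Pi.single i 1) - G p))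
    (t : Finset (Fin n)) : ∀ p, ∃ c : Finset (Fin n) → E, ∀ α : Fin n → ℝ, (∀ i, i ∉ t → α i = 0) →
      G (p + α) = ∑ s ∈ t.powerset, (∏ i ∈ s, f i (α i)) • c s := by
  induction t using Finset.induction_on with
  | empty =>
    intro p
    refine ⟨fun _ => G p, fun α hα => ?_⟩
    have : α = 0 := funext fun i => hα i (by simp)
    simp [this]
  | insert i t hi ih =>
    intro p
    obtain ⟨c1, h1⟩ := ih p
    obtain ⟨c2, h2⟩ := ih (p + Pi.single i 1)
    refine ⟨fun s => if i ∈ s then c2 (s.erase i) - c1 (s.erase i) else c1 s, fun α hα => ?_⟩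
    obtain ⟨β, hβ⟩ : ∃ β, β = Function.update α i 0 := ⟨_, rfl⟩
    have hβ0 : ∀ j, j ∉ t → β j = 0 := by
      intro j hj
      by_cases hji : j = i
      · subst hji; simp [hβ]
      · rw [hβ, Function.update_of_ne hji]
        exact hα j (by simp [hji, hj])
    have e : p + α = (p + β) + α i • Pi.single i 1 := by
      rw [hβ]; ext j
      by_cases hji : j = i
      · subst hji; simp
      · simp [hji]
    have e2 : p + β + Pi.single i 1 = p + Pi.single i 1 + β := by abel
    have hprod : ∀ s ∈ t.powerset, ∏ j ∈ s, f j (β j) = ∏ j ∈ s, f j (α j) := by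
      intro s hs
      apply Finset.prod_congr rfl
      intro j hj
      have : j ≠ i := fun h => hi (h ▸ (Finset.mem_powerset.1 hs hj))
      rw [hβ, Function.update_of_ne this]
    rw [e, h, e2, h1 β hβ0, h2 β hβ0, Finset.sum_powerset_insert hi, ← Finset.sum_sub_distrib,
      Finset.smul_sum]
    congr 1
    · apply Finset.sum_congr rfl
      intro s hs
      have : i ∉ s := fun h => hi (Finset.mem_powerset.1 hs h)
      beta_reduce
      rw [if_neg this, hprod s hs]
    · apply Finset.sum_congr rfl
      intro s hs
      have : i ∉ s := fun h => hi (Finset.mem_powerset.1 hs h)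
      beta_reduce
      rw [if_pos (Finset.mem_insert_self i s), Finset.erase_insert this, Finset.prod_insert this, hprod s hs, mul_smul,
        smul_sub, smul_sub, smul_sub]

lemma multi_uniq {n : ℕ} (d : Finset (Fin n) → ℝ)
    (h : ∀ x : Fin n → ℝ, ∑ s, (∏ i ∈ s, x i) * d s = 0) : ∀ s, d s = 0 := by
  intro s
  induction s using Finset.strongInduction with
  | H η ih =>
    have := h (fun i => if i ∈ η then 1 else 0)
    rw [Finset.sum_eq_single η] at this
    · rwa [Finset.prod_eq_one (fun i hi => if_pos hi), one_mul] at this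
    · intro s _ hs
      by_cases hsub : s ⊆ η
      · rw [ih s (lt_of_le_of_ne hsub hs), mul_zero]
      · obtain ⟨i, hi, hi'⟩ := Finset.not_subset.1 hsub
        rw [Finset.prod_eq_zero hi (by simp [hi']), zero_mul]
    · simp

lemma multi_expand {n : ℕ} (c : Finset (Fin n) → ℝ) (x : Fin n → ℝ) (k : ℝ) :
    ∑ s, (∏ i ∈ s, (x i + k)) * c s =
      ∑ t, (∏ i ∈ t, x i) * ∑ s ∈ Finset.univ.filter (fun s => t ⊆ s), k ^ (s.card - t.card) * c s := by
  simp_rw [Finset.prod_add, Finset.sum_mul, Finset.mul_sum]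
  rw [Finset.sum_comm' (t' := Finset.univ) (s' := fun t => Finset.univ.filter (fun s => t ⊆ s))]
  · apply Finset.sum_congr rfl; intro t _
    apply Finset.sum_congr rfl; intro s hs
    rw [Finset.prod_const, Finset.card_sdiff_of_subset (by simpa using hs)]; ring
  · simp

lemma multi_coeff {n : ℕ} (c : Finset (Fin n) → ℝ)
    (h : ∀ (x : Fin n → ℝ) (k : ℕ), ∑ s, (∏ i ∈ s, (x i + k)) * c s =
      ∑ s, (∏ i ∈ s, x i) * c s + k * (∑ s, (∏ i ∈ s, (x i + 1)) * c s - ∑ s, (∏ i ∈ s, x i) * c s))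
    (t : Finset (Fin n)) (j : ℕ) (hj : 2 ≤ j) :
    ∑ s ∈ Finset.univ.filter (fun s => t ⊆ s ∧ s.card = t.card + j), c s = 0 := by
  obtain ⟨Q, hQ⟩ : ∃ Q : ℝ → Finset (Fin n) → ℝ, Q = fun k t =>
    ∑ s ∈ Finset.univ.filter (fun s => t ⊆ s), k ^ (s.card - t.card) * c s := ⟨_, rfl⟩
  have hex : ∀ (x : Fin n → ℝ) (k : ℝ), ∑ s, (∏ i ∈ s, (x i + k)) * c s = ∑ t, (∏ i ∈ t, x i) * Q k t := by
    intro x k; rw [hQ]; exact multi_expand c x k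
  have h0 : ∀ k : ℕ, Q k t - c t - k * (Q 1 t - c t) = 0 := by
    intro k
    apply multi_uniq (fun t => Q k t - c t - k * (Q 1 t - c t))
    intro x
    have := h x k
    rw [hex, hex] at this
    simp_rw [mul_sub]
    rw [Finset.sum_sub_distrib, Finset.sum_sub_distrib, Finset.sum_sub_distrib, this]
    simp_rw [mul_left_comm _ (k : ℝ), ← Finset.mul_sum]
    ring
  obtain ⟨p, hp⟩ : ∃ p : Polynomial ℝ, p = ∑ s ∈ Finset.univ.filter (fun s => t ⊆ s),
    Polynomial.C (c s) * Polynomial.X ^ (s.card - t.card) - Polynomial.C (c t) - Polynomial.C (Q 1 t - c t) * Polynomial.X := ⟨_, rfl⟩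
  have hp0 : p = 0 := by
    apply Polynomial.eq_zero_of_infinite_isRoot
    apply (Set.infinite_range_of_injective (Nat.cast_injective (R := ℝ))).mono
    rintro _ ⟨k, rfl⟩
    have := h0 k
    simp only [hQ] at this
    simp only [Set.mem_setOf_eq, Polynomial.IsRoot, hp, hQ, Polynomial.eval_sub, Polynomial.eval_finset_sum,
      Polynomial.eval_mul, Polynomial.eval_C, Polynomial.eval_pow, Polynomial.eval_X]
    rw [← this, mul_comm (k : ℝ)]
    simp_rw [mul_comm (c _)]
  have hc : p.coeff j = 0 := by rw [hp0]; simp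
  rw [hp, Polynomial.coeff_sub, Polynomial.coeff_sub, Polynomial.finset_sum_coeff,
    Polynomial.coeff_C_ne_zero (by omega), Polynomial.coeff_C_mul, Polynomial.coeff_X_of_ne_one (by omega)] at hc
  simp only [Polynomial.coeff_C_mul, Polynomial.coeff_X_pow, mul_ite, mul_one, mul_zero, sub_zero] at hc
  rw [← Finset.sum_filter, Finset.filter_filter] at hc
  rw [← hc]
  apply Finset.sum_congr _ (fun _ _ => rfl)
  ext s
  simp only [Finset.mem_filter, Finset.mem_univ, true_and]
  constructor
  · rintro ⟨h1, h2⟩; exact ⟨h1, by omega⟩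
  · rintro ⟨h1, h2⟩; exact ⟨h1, by omega⟩

lemma multi_top {n : ℕ} {E : Type*} [AddCommGroup E] (c : Finset (Fin n) → E) (k : ℕ) (hk : n + 2 ≤ 2 * k)
    (h : ∀ R : Finset (Fin n), R.card + 2 ≤ k →
      ∑ s ∈ Finset.univ.filter (fun s => R ⊆ s ∧ s.card = k), c s = 0)
    (s0 : Finset (Fin n)) (hs0 : s0.card = k) : c s0 = 0 := by
  have h1 : ∑ R ∈ s0ᶜ.powerset, (-1 : ℤ) ^ R.card •
      ∑ s ∈ Finset.univ.filter (fun s => R ⊆ s ∧ s.card = k), c s = 0 := by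
    apply Finset.sum_eq_zero
    intro R hR
    rw [h R, smul_zero]
    have := Finset.card_le_card (Finset.mem_powerset.1 hR)
    rw [Finset.card_compl, Fintype.card_fin] at this
    have h2 := s0.card_le_univ
    rw [Fintype.card_fin] at h2
    omega
  simp_rw [Finset.smul_sum] at h1
  rw [Finset.sum_comm' (t' := Finset.univ.filter (fun s : Finset (Fin n) => s.card = k))
    (s' := fun s => (s ∩ s0ᶜ).powerset)] at h1
  · simp_rw [← Finset.sum_smul, Finset.sum_powerset_neg_one_pow_card] at h1
    rw [Finset.sum_eq_single s0] at h1
    · simpa using h1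
    · intro s hs hne
      rw [if_neg, zero_smul]
      intro he
      apply hne
      have hsub : s ⊆ s0 := by
        intro i hi
        by_contra hi'
        have : i ∈ s ∩ s0ᶜ := by simp [hi, hi']
        rw [he] at this; simp at this
      apply Finset.eq_of_subset_of_card_le hsub
      rw [hs0]; simp at hs; omega
    · simp [hs0]
  · intro R s
    simp only [Finset.mem_powerset, Finset.mem_filter, Finset.mem_univ, true_and, Finset.subset_inter_iff]
    tauto
end PartE2

section PartE3
lemma add_nat (f : ℝ → ℝ) (h : ∀ s t, f (s + t) = f s + f t) (h1 : f 1 = 1) (k : ℕ) : f k = k := by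
  induction k with
  | zero =>
    have := h 0 0
    simp at this; simp [this]
  | succ k ih => push_cast; rw [h, ih, h1]

lemma indep_one_single {n : ℕ} (hn : 2 ≤ n) (i : Fin n) :
    LinearIndependent ℝ ![(1 : Fin n → ℝ), Pi.single i 1] := by
  rw [LinearIndependent.pair_iff]
  intro s t h
  haveI : Nontrivial (Fin n) := Fin.nontrivial_iff_two_le.2 hn
  obtain ⟨j, hj⟩ := exists_ne i
  have h1 := congrFun h j
  have h2 := congrFun h i
  simp [hj] at h1 h2
  exact ⟨h1, by linarith⟩

lemma indep_single_single {n : ℕ} (i j : Fin n) (hij : j ≠ i) :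
    LinearIndependent ℝ ![(Pi.single i 1 : Fin n → ℝ), Pi.single j 1] := by
  rw [LinearIndependent.pair_iff]
  intro s t h
  have h1 := congrFun h j
  have h2 := congrFun h i
  simp [hij, hij.symm] at h1 h2
  exact ⟨h2, h1⟩

lemma span_top_of_single {n : ℕ} (S : Submodule ℝ (Fin n → ℝ)) (h : ∀ i, Pi.single i 1 ∈ S) : S = ⊤ := by
  rw [eq_top_iff]
  intro x _
  have : x = ∑ i, x i • Pi.single i (1 : ℝ) := by
    ext j
    simp [Finset.sum_apply, Pi.single_apply]
  rw [this]
  exact Submodule.sum_mem _ fun i _ => S.smul_mem _ (h i)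

theorem G_main {n m : ℕ} (hn : 2 ≤ n) (G : (Fin n → ℝ) → (Fin m → ℝ)) (hG : Function.Injective G)
    (he : ∀ i p, ∃ f, Aff (fun t : ℝ => G (p + t • Pi.single i 1)) f)
    (h1 : ∀ p, ∃ f, Aff (fun t : ℝ => G (p + t • 1)) f) :
    ∃ (c : Finset (Fin n) → Fin m → ℝ) (f : Fin n → ℝ → ℝ),
      (∀ i, Function.Bijective (f i) ∧ (∀ a b : ℝ, f i (a + b) = f i a + f i b) ∧ f i 1 = 1) ∧
      (∀ (t : Finset (Fin n)) (j : ℕ), 2 ≤ j →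
        ∑ s ∈ Finset.univ.filter (fun s => t ⊆ s ∧ s.card = t.card + j), c s = 0) ∧
      (∀ α, G α = ∑ s, (∏ i ∈ s, f i (α i)) • c s) ∧ n ≤ m ∧ (m = n → Function.Surjective G) := by
  haveI : Nontrivial (Fin n) := Fin.nontrivial_iff_two_le.2 hn
  obtain ⟨g, -, hgadd, hg1, hgG⟩ := dir_add G hG 1 one_ne_zero h1 (by
    apply span_top_of_single
    intro i
    exact Submodule.subset_span ⟨he i, indep_one_single hn i⟩)
  have hfi : ∀ i, ∃ f : ℝ → ℝ, Function.Bijective f ∧ (∀ s t, f (s + t) = f s + f t) ∧ f 1 = 1 ∧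
      ∀ p t, G (p + t • Pi.single i 1) = G p + f t • (G (p + Pi.single i 1) - G p) := by
    intro i
    apply dir_add G hG (Pi.single i 1) (by simp) (he i)
    have hj : ∀ j, j ≠ i → (Pi.single j 1 : Fin n → ℝ) ∈ Submodule.span ℝ {b' : Fin n → ℝ |
        (∀ p, ∃ f, Aff (fun t : ℝ => G (p + t • b')) f) ∧ LinearIndependent ℝ ![Pi.single i 1, b']} :=
      fun j hj => Submodule.subset_span ⟨he j, indep_single_single i j hj⟩
    apply span_top_of_single
    intro j
    by_cases hji : j = i
    · subst hji
      have e : (Pi.single j 1 : Fin n → ℝ) = 1 - ∑ k ∈ Finset.univ.erase j, Pi.single k 1 := by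
        rw [eq_sub_iff_add_eq, Finset.add_sum_erase _ (fun k => (Pi.single k 1 : Fin n → ℝ)) (Finset.mem_univ j)]
        ext k
        simp [Finset.sum_apply, Pi.single_apply]
      rw [e]
      apply Submodule.sub_mem
      · refine Submodule.subset_span ⟨h1, ?_⟩
        rw [LinearIndependent.pair_symm_iff]
        rw [← e]
        exact indep_one_single hn j
      · apply Submodule.sum_mem
        intro k hk
        rw [← e]
        exact hj k (Finset.ne_of_mem_erase hk)
    · exact hj j hji
  choose f hbij hadd hf1 hline using hfi
  obtain ⟨c, hc⟩ := multi_aff G f hline Finset.univ 0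
  have hGc : ∀ α, G α = ∑ s, (∏ i ∈ s, f i (α i)) • c s := by
    intro α
    have := hc α (by simp)
    rwa [zero_add, Finset.powerset_univ] at this
  obtain ⟨P, hP⟩ : ∃ P : (Fin n → ℝ) → (Fin m → ℝ), P = fun x => ∑ s, (∏ i ∈ s, x i) • c s := ⟨_, rfl⟩
  have hGP : ∀ α, G α = P (fun i => f i (α i)) := by intro α; rw [hGc, hP]
  have hsurj : ∀ x : Fin n → ℝ, ∃ α : Fin n → ℝ, x = fun i => f i (α i) := by
    intro x
    choose α hα using fun i => (hbij i).2 (x i)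
    exact ⟨α, funext fun i => (hα i).symm⟩
  have hPinj : Function.Injective P := by
    intro x y hxy
    obtain ⟨α, rfl⟩ := hsurj x
    obtain ⟨β, rfl⟩ := hsurj y
    rw [← hGP, ← hGP] at hxy
    rw [hG hxy]
  have hPk : ∀ (x : Fin n → ℝ) (k : ℕ), P (fun i => x i + k) = P x + (k : ℝ) • (P (fun i => x i + 1) - P x) := by
    intro x k
    obtain ⟨α, rfl⟩ := hsurj x
    have e := hgG α k
    rw [add_nat g hgadd hg1, hGP, hGP, hGP] at e
    convert e using 3
    · rename_i i; simp [hadd, add_nat _ (hadd i) (hf1 i)]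
    · congr 1; ext i; simp [hadd, hf1]
  have hPj : ∀ x j, P x j = ∑ s, (∏ i ∈ s, x i) * c s j := by
    intro x j; rw [hP]; simp [Finset.sum_apply]
  obtain ⟨Q, hQ⟩ : ∃ Q : Fin m → MvPolynomial (Fin n) ℝ, Q = fun j =>
    ∑ s, (∏ i ∈ s, MvPolynomial.X i) * MvPolynomial.C (c s j) := ⟨_, rfl⟩
  have hQP : evP Q = P := by
    ext x j
    rw [hPj, evP, hQ]
    simp [map_sum, map_prod]
  refine ⟨c, f, fun i => ⟨hbij i, hadd i, hf1 i⟩, ?_, hGc, card_le_of_inj Q (hQP ▸ hPinj), ?_⟩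
  · intro t j hj
    ext l
    rw [Finset.sum_apply]
    apply multi_coeff (fun s => c s l) _ t j hj
    intro x k
    have := congrFun (hPk x k) l
    simpa [hPj] using this
  · rintro rfl
    have h := surj_core (Fintype.card_fin m) (Fintype.card_fin m) Q (hQP ▸ hPinj)
    rw [hQP] at h
    intro y
    obtain ⟨x, hx⟩ := h y
    obtain ⟨α, rfl⟩ := hsurj x
    exact ⟨α, by rw [hGP, hx]⟩
end PartE3

lemma rescale {n : ℕ} (v : Fin (n + 1) → (Fin n → ℝ))
    (hv : ∀ s : Finset (Fin (n + 1)), s.card = n → LinearIndependent ℝ (fun i : s => v i.1)) :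
    ∃ c : Fin n → ℝ, (∀ i, c i ≠ 0) ∧ LinearIndependent ℝ (fun i => v (Fin.castSucc i)) ∧
      v (Fin.last n) = ∑ i, c i • v (Fin.castSucc i) := by
  have hli : LinearIndependent ℝ (fun i : Fin n => v (Fin.castSucc i)) := by
    have h := hv (Finset.univ.erase (Fin.last n)) (by simp)
    exact h.comp (fun i : Fin n => (⟨Fin.castSucc i, by simp [Fin.castSucc_ne_last]⟩ : {x // x ∈ Finset.univ.erase (Fin.last n)}))
      (fun i j hij => by simpa using hij)
  have hspan : Submodule.span ℝ (Set.range (fun i : Fin n => v (Fin.castSucc i))) = ⊤ :=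
    hli.span_eq_top_of_card_eq_finrank' (by simp)
  have hmem : v (Fin.last n) ∈ Submodule.span ℝ (Set.range (fun i : Fin n => v (Fin.castSucc i))) := by
    rw [hspan]; trivial
  obtain ⟨c, hc⟩ := (Submodule.mem_span_range_iff_exists_fun ℝ).1 hmem
  refine ⟨c, ?_, hli, hc.symm⟩
  intro i hi
  have h := hv (Finset.univ.erase (Fin.castSucc i)) (by simp)
  rw [Fintype.linearIndependent_iff] at h
  have h2 := h (fun j => Fin.lastCases (-1) c j.1) (by
    rw [Finset.sum_coe_sort (Finset.univ.erase (Fin.castSucc i))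
      (fun j : Fin (n + 1) => (Fin.lastCases (-1) c j : ℝ) • v j)]
    rw [Finset.sum_erase _ (by simp [hi]), Fin.sum_univ_castSucc]
    simp [hc]) ⟨Fin.last n, by simp [(Fin.castSucc_ne_last i).symm]⟩
  simp at h2

lemma aff_line {n m : ℕ} {X : Type*} [AddCommGroup X] [Module ℝ X] (F : (Fin n → ℝ) → (Fin m → ℝ)) (hF : Function.Injective F)
    (L : X →ₗ[ℝ] (Fin n → ℝ)) (w : Fin n → ℝ) (b : X) (r : ℝ) (hr : r ≠ 0) (hL : L b = r • w) (hw : w ≠ 0)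
    (h : ∀ a, IsLine (F '' lineThru a w)) (p : X) : ∃ f, Aff (fun t : ℝ => F (L (p + t • b))) f := by
  obtain ⟨a, d, hd, he⟩ := h (L p)
  refine aff_of_range _ ?_ a d hd ?_
  · intro s t hst
    have := hF hst
    simp only [map_add, map_smul, hL, add_right_inj, smul_smul] at this
    exact mul_right_cancel₀ hr (smul_left_injective ℝ hw this)
  · change _ = lineThru a d
    rw [← he]
    ext y
    constructor
    · rintro ⟨t, rfl⟩
      exact ⟨_, ⟨t * r, by rw [map_add, map_smul, hL, smul_smul]⟩, rfl⟩
    · rintro ⟨_, ⟨t, rfl⟩, rfl⟩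
      refine ⟨t / r, ?_⟩
      simp only
      rw [map_add, map_smul, hL, smul_smul, div_mul_cancel₀ _ hr]

/-- Indicator functions versus finite sets. -/
def bEquiv (n : ℕ) : (Fin n → Bool) ≃ Finset (Fin n) where
  toFun δ := Finset.univ.filter (fun i => δ i = true)
  invFun s := fun i => decide (i ∈ s)
  left_inv δ := by ext i; simp
  right_inv s := by ext i; simp

lemma mem_bEquiv {n : ℕ} (δ : Fin n → Bool) (i : Fin n) : i ∈ bEquiv n δ ↔ δ i = true := by
  simp [bEquiv]

lemma card_bEquiv {n : ℕ} (δ : Fin n → Bool) : (bEquiv n δ).card = wt δ := by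
  simp [bEquiv, wt]

/-- **Theorem (restricted polynomial form for collineations in n+1 generic directions).**
If `m, n ≥ 2`, `v₁,…,v_{n+1} ∈ ℝⁿ` are in general position and `F : ℝⁿ → ℝᵐ` is an
injection mapping each line in `ℒ(v₁,…,v_{n+1})` onto a line, then there is a basis
`u₁,…,uₙ` of `ℝⁿ`, additive bijections `fᵢ : ℝ → ℝ` with `fᵢ 1 = 1`, and coefficients
`c_δ ∈ ℝᵐ` satisfying: `c_δ = 0` whenever `|δ| ≥ (n+2)/2`, and for each `2 ≤ k < (n+2)/2`
and every set of at most `k - 2` indices `i₁ < ⋯ < i_l`, the sum of `c_δ` over all `δ`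
with `|δ| = k` and `δ_{i₁} = ⋯ = δ_{i_l} = 1` vanishes; and
`F (∑ αᵢ uᵢ) = ∑_δ (∏ᵢ fᵢ(αᵢ)^{δᵢ}) c_δ`. Moreover `m ≥ n`, and if `m = n` then `F`
is a bijection. -/
theorem restricted_polynomial_form_nPlusOne_directions
    {n m : ℕ} (hn : 2 ≤ n) (hm : 2 ≤ m)
    (v : Fin (n + 1) → (Fin n → ℝ))
    (hv : ∀ s : Finset (Fin (n + 1)), s.card = n →
      LinearIndependent ℝ (fun i : s => v i.1))
    (F : (Fin n → ℝ) → (Fin m → ℝ))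
    (hinj : Function.Injective F)
    (honto : ∀ (i : Fin (n + 1)) (a : Fin n → ℝ), IsLine (F '' lineThru a (v i))) :
    (∃ (u : Fin n → (Fin n → ℝ)) (c : (Fin n → Bool) → (Fin m → ℝ)) (f : Fin n → ℝ → ℝ),
      LinearIndependent ℝ u ∧ Submodule.span ℝ (Set.range u) = ⊤ ∧
      (∀ i, Function.Bijective (f i) ∧ (∀ a b : ℝ, f i (a + b) = f i a + f i b) ∧
        f i 1 = 1) ∧
      (∀ δ : Fin n → Bool, n + 2 ≤ 2 * wt δ → c δ = 0) ∧
      (∀ k : ℕ, 2 ≤ k → 2 * k < n + 2 → ∀ I : Finset (Fin n), I.card ≤ k - 2 →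
        ∑ δ ∈ Finset.univ.filter
            (fun δ : Fin n → Bool => wt δ = k ∧ ∀ i ∈ I, δ i = true), c δ = 0) ∧
      (∀ α : Fin n → ℝ,
        F (∑ i, α i • u i) =
          ∑ δ : Fin n → Bool, (∏ i, if δ i then f i (α i) else 1) • c δ)) ∧
    n ≤ m ∧ (m = n → Function.Surjective F) := by
  obtain ⟨r, hr, hli, hlast⟩ := rescale v hv
  obtain ⟨u, hu⟩ : ∃ u : Fin n → (Fin n → ℝ), u = fun i => r i • v (Fin.castSucc i) := ⟨_, rfl⟩
  have huli : LinearIndependent ℝ u := by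
    rw [hu]
    exact hli.units_smul (fun i => Units.mk0 (r i) (hr i))
  have huspan : Submodule.span ℝ (Set.range u) = ⊤ :=
    huli.span_eq_top_of_card_eq_finrank' (by simp)
  have hL : ∀ α, Fintype.linearCombination ℝ u α = ∑ i, α i • u i := fun α => rfl
  have hLinj : Function.Injective (Fintype.linearCombination ℝ u) :=
    huli.fintypeLinearCombination_injective
  have hLsurj : Function.Surjective (Fintype.linearCombination ℝ u) := by
    rw [← LinearMap.range_eq_top, Fintype.range_linearCombination, huspan]
  have hlastne : v (Fin.last n) ≠ 0 := by
    have h := hv (Finset.univ.erase (Fin.castSucc ⟨0, by omega⟩)) (by simp)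
    exact h.ne_zero ⟨Fin.last n, Finset.mem_erase.2 ⟨(Fin.castSucc_ne_last _).symm, Finset.mem_univ _⟩⟩
  obtain ⟨c, f, hf, hc, hG, hnm, hsurj⟩ := G_main hn (fun α => F (Fintype.linearCombination ℝ u α))
    (hinj.comp hLinj)
    (fun i p => aff_line F hinj (Fintype.linearCombination ℝ u) (v (Fin.castSucc i)) (Pi.single i 1) (r i) (hr i)
      (by simp [hu]) (hli.ne_zero i) (honto _) p)
    (fun p => aff_line F hinj (Fintype.linearCombination ℝ u) (v (Fin.last n)) 1 1 one_ne_zero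
      (by rw [one_smul, hL, hlast, hu]; simp) hlastne (honto _) p)
  have hc' : ∀ (k : ℕ) (R : Finset (Fin n)), R.card + 2 ≤ k →
      ∑ s ∈ Finset.univ.filter (fun s => R ⊆ s ∧ s.card = k), c s = 0 := by
    intro k R hR
    have := hc R (k - R.card) (by omega)
    rwa [show R.card + (k - R.card) = k by omega] at this
  refine ⟨⟨u, fun δ => c (bEquiv n δ), f, huli, huspan, hf, ?_, ?_, ?_⟩, hnm, ?_⟩
  · intro δ hδ
    exact multi_top c (wt δ) hδ (hc' _) _ (card_bEquiv δ)
  · intro k hk _ I hI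
    rw [← hc' k I (by omega)]
    apply Finset.sum_equiv (bEquiv n)
    · intro δ
      simp only [Finset.mem_filter, Finset.mem_univ, true_and, card_bEquiv, Finset.subset_iff, mem_bEquiv]
      tauto
    · intro δ _; rfl
  · intro α
    rw [← hL]
    refine (hG α).trans ?_
    symm
    apply Fintype.sum_equiv (bEquiv n)
    intro δ
    rw [← Finset.prod_filter]
    rfl
  · intro hmn y
    obtain ⟨α, hα⟩ := hsurj hmn y
    exact ⟨_, hα⟩
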